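/- arXiv:math/0509477 — 2 statements merged into one kernel-verified Lean document; each statement's English description precedes it below -/
import Mathlib

section
/- Let H > 0, let Ω ⊆ ℝ² be an open connected set, and let (u_n) be a sequence of C^∞ solutions of (CMC) on Ω. Let P ∈ B(u_n) and let C be the connected component of the convergence domain B(u_n) containing P. Then there exist a strictly increasing map φ : ℕ → ℕ and a C^∞ solution u of (CMC) on C such that the sequence (u_{φ(n)} − u_{φ(n)}(P)) converges to u uniformly on every compact subset of C, together with all of its partial derivatives. -/
/-!
Write `K` for the Gauss curvature of the graph. Simons' equation for `H² - K` and the Jacobi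
equation for `1/W` bound the Laplacian of `log ((1 + 1/W)⁻⁶ (H² - K))` on the graph from below by a
multiple of `H² - K`, up to a constant. The maximum principle, with the cut-off `R² - |y - z|²`,
then bounds the curvature of the graph at `z` in terms of the distance `R` from `z` to the boundary
only. Hence `|∇(W⁻²)|` is locally bounded, independently of the solution, and a bound for `W` at one
point propagates to a disc of definite size: the convergence domain is open, and the gradients
are locally bounded on it.

The gradient of a solution solves an elliptic system `L V = Φ(V, DV)`, with `L` depending on `V`.
Bernstein's method bounds the derivatives of solutions of systems whose right-hand side is affine in
the derivative. The `1`-jet of a solution solves a system of this kind, so induction on the jets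
bounds the derivatives of all orders. On a connected component the functions `uₙ - uₙ(P)` are then
locally bounded as well, and the theorem of Arzelà and Ascoli applies.
-/

open Real MeasureTheory Filter Set

noncomputable section

/-- Euclidean norm on `ℝ × ℝ`. -/
def enorm2 (p : ℝ × ℝ) : ℝ := Real.sqrt (p.1 ^ 2 + p.2 ^ 2)

/-- Partial derivative in the `x` direction. -/
def pdx (u : ℝ × ℝ → ℝ) (p : ℝ × ℝ) : ℝ := fderiv ℝ u p (1, 0)

/-- Partial derivative in the `y` direction. -/
def pdy (u : ℝ × ℝ → ℝ) (p : ℝ × ℝ) : ℝ := fderiv ℝ u p (0, 1)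

/-- The area element `W_u = √(1 + |∇u|²)`. -/
def Wgraph (u : ℝ × ℝ → ℝ) (p : ℝ × ℝ) : ℝ :=
  Real.sqrt (1 + (pdx u p) ^ 2 + (pdy u p) ^ 2)

/-- Upward unit normal of the graph of `u`. -/
def normalVec (u : ℝ × ℝ → ℝ) (p : ℝ × ℝ) : ℝ × ℝ × ℝ :=
  (-pdx u p / Wgraph u p, -pdy u p / Wgraph u p, 1 / Wgraph u p)

/-- `u` is a (C²) solution of the constant mean curvature `H` equation on `Ω`. -/
def IsCMCSolution (H : ℝ) (Ω : Set (ℝ × ℝ)) (u : ℝ × ℝ → ℝ) : Prop :=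
  ContDiffOn ℝ 2 u Ω ∧ ∀ p ∈ Ω,
    (1 + (pdy u p) ^ 2) * pdx (fun q => pdx u q) p
      - 2 * (pdx u p) * (pdy u p) * pdy (fun q => pdx u q) p
      + (1 + (pdx u p) ^ 2) * pdy (fun q => pdy u q) p
    = 2 * H * (1 + (pdx u p) ^ 2 + (pdy u p) ^ 2) ^ ((3 : ℝ) / 2)

/-- `C` is a divergence line of the sequence `u` on `Ω`. -/
def IsDivergenceLine (H : ℝ) (Ω : Set (ℝ × ℝ)) (u : ℕ → ℝ × ℝ → ℝ)
    (C : Set (ℝ × ℝ)) : Prop :=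
  ∃ z₁ : ℝ × ℝ, C ⊆ Ω ∧ (∀ q ∈ C, enorm2 (q - z₁) = 1 / (2 * H)) ∧
    IsConnected C ∧ C.Nontrivial ∧
    ∃ φ : ℕ → ℕ, StrictMono φ ∧ ∀ Q ∈ C,
      Tendsto (fun n => normalVec (u (φ n)) Q) atTop
        (nhds (2 * H * (z₁.1 - Q.1), 2 * H * (z₁.2 - Q.2), 0))

/-- `u` is a smooth (C^∞) solution of the CMC `H` equation on `Ω`. -/
def IsSmoothCMCSolution (H : ℝ) (Ω : Set (ℝ × ℝ)) (u : ℝ × ℝ → ℝ) : Prop :=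
  ContDiffOn ℝ (⊤ : ℕ∞) u Ω ∧ ∀ p ∈ Ω,
    (1 + (pdy u p) ^ 2) * pdx (fun q => pdx u q) p
      - 2 * (pdx u p) * (pdy u p) * pdy (fun q => pdx u q) p
      + (1 + (pdx u p) ^ 2) * pdy (fun q => pdy u q) p
    = 2 * H * (1 + (pdx u p) ^ 2 + (pdy u p) ^ 2) ^ ((3 : ℝ) / 2)

namespace CMC

open scoped Topology ContDiff

section DirectionalDerivative

variable {E F : Type*} [NormedAddCommGroup E] [NormedSpace ℝ E]
  [NormedAddCommGroup F] [NormedSpace ℝ F] {f g : E → F} {x e e' : E}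

/-- The derivative of `f` in the constant direction `e`, as a function of the base point. -/
def dirDeriv (e : E) (f : E → F) (x : E) : F := fderiv ℝ f x e

lemma contDiffAt_dirDeriv {m n : WithTop ℕ∞} (hf : ContDiffAt ℝ n f x) (hmn : m + 1 ≤ n) (e : E) :
    ContDiffAt ℝ m (dirDeriv e f) x :=
  (hf.fderiv_right hmn).clm_apply contDiffAt_const

lemma contDiffOn_dirDeriv {U : Set E} (hU : IsOpen U) (hf : ContDiffOn ℝ ∞ f U) (e : E) :
    ContDiffOn ℝ ∞ (dirDeriv e f) U := fun _ hx =>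
  (contDiffAt_dirDeriv (hf.contDiffAt (hU.mem_nhds hx)) (by simp) e).contDiffWithinAt

lemma contDiffAt_two {U : Set E} (hU : IsOpen U) (hf : ContDiffOn ℝ ∞ f U) (hx : x ∈ U) :
    ContDiffAt ℝ 2 f x :=
  (hf.contDiffAt (hU.mem_nhds hx)).of_le ENat.LEInfty.out

lemma dirDeriv_congr (h : f =ᶠ[𝓝 x] g) : dirDeriv e f x = dirDeriv e g x := by
  simp only [dirDeriv, h.fderiv_eq]

lemma dirDeriv_eventuallyEq (h : f =ᶠ[𝓝 x] g) : dirDeriv e f =ᶠ[𝓝 x] dirDeriv e g :=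
  h.eventuallyEq_nhds.mono fun _ hy => dirDeriv_congr hy

lemma dirDeriv_smul_add_smul (a b : ℝ) (f : E → F) (x : E) :
    dirDeriv (a • e + b • e') f x = a • dirDeriv e f x + b • dirDeriv e' f x := by
  simp only [dirDeriv, map_add, map_smul]

lemma dirDeriv_dirDeriv (hf : ContDiffAt ℝ 2 f x) :
    dirDeriv e (dirDeriv e' f) x = fderiv ℝ (fderiv ℝ f) x e e' := by
  have h : DifferentiableAt ℝ (fderiv ℝ f) x :=
    (hf.fderiv_right (m := 1) (by norm_num)).differentiableAt (by norm_num)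
  change fderiv ℝ (fun y => fderiv ℝ f y e') x e = _
  simp [fderiv_clm_apply h (differentiableAt_const e')]

lemma dirDeriv_comm (hf : ContDiffAt ℝ 2 f x) :
    dirDeriv e (dirDeriv e' f) x = dirDeriv e' (dirDeriv e f) x := by
  rw [dirDeriv_dirDeriv hf, dirDeriv_dirDeriv hf]
  exact (hf.isSymmSndFDerivAt (by simp)).eq _ _

lemma dirDeriv_clm_comp {G : Type*} [NormedAddCommGroup G] [NormedSpace ℝ G] (L : F →L[ℝ] G)
    (hf : DifferentiableAt ℝ f x) (e : E) :
    dirDeriv e (fun y => L (f y)) x = L (dirDeriv e f x) :=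
  congrArg (fun T => T e) (L.hasFDerivAt.comp x hf.hasFDerivAt).fderiv

lemma eventually_add_smul {p : E → Prop} (h : ∀ᶠ y in 𝓝 x, p y) (v : E) :
    ∀ᶠ t : ℝ in 𝓝 0, p (x + t • v) := by
  have hline : Tendsto (fun t : ℝ => x + t • v) (𝓝 0) (𝓝 x) := by
    have : ContinuousAt (fun t : ℝ => x + t • v) 0 := by fun_prop
    simpa [ContinuousAt] using this
  exact hline.eventually h

lemma hasDerivAt_add_smul (v : E) {t : ℝ} (hf : DifferentiableAt ℝ f (x + t • v)) :
    HasDerivAt (fun t : ℝ => f (x + t • v)) (dirDeriv v f (x + t • v)) t := by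
  have : HasDerivAt (fun t : ℝ => x + t • v) v t := by
    simpa using ((hasDerivAt_id t).smul_const v).const_add x
  exact hf.hasFDerivAt.comp_hasDerivAt t this

end DirectionalDerivative

section Jet

variable {F G H : Type*} [NormedAddCommGroup F] [NormedSpace ℝ F] [NormedAddCommGroup G]
  [NormedSpace ℝ G] [NormedAddCommGroup H] [NormedSpace ℝ H]

/-- The curve `γ` is differentiable near `0` and twice differentiable at `0`, where its value and
its first two derivatives are `a`, `b` and `c`. -/
def HasJet₂ (γ : ℝ → F) (a b c : F) : Prop :=
  γ 0 = a ∧ ∃ γ' : ℝ → F, γ' 0 = b ∧ (∀ᶠ t in 𝓝 0, HasDerivAt γ (γ' t) t) ∧ HasDerivAt γ' c 0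

namespace HasJet₂

variable {γ δ : ℝ → F} {a b c a' b' c' : F}

lemma unique (h : HasJet₂ γ a b c) (h' : HasJet₂ γ a' b' c') : a = a' ∧ b = b' ∧ c = c' := by
  obtain ⟨ha, g, hb, hg, hc⟩ := h
  obtain ⟨ha', g', hb', hg', hc'⟩ := h'
  have hgg' : g =ᶠ[𝓝 0] g' := by
    filter_upwards [hg, hg'] with t ht ht' using ht.unique ht'
  exact ⟨ha ▸ ha', hb ▸ hb' ▸ hgg'.eq_of_nhds, hc.unique (hc'.congr_of_eventuallyEq hgg')⟩

lemma congr (h : HasJet₂ γ a b c) (hδ : δ =ᶠ[𝓝 0] γ) : HasJet₂ δ a b c := by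
  obtain ⟨ha, g, hb, hg, hc⟩ := h
  refine ⟨hδ.eq_of_nhds.trans ha, g, hb, ?_, hc⟩
  filter_upwards [hg, hδ.eventuallyEq_nhds] with t ht hδt using ht.congr_of_eventuallyEq hδt

lemma congr_jet (h : HasJet₂ γ a b c) (ha : a = a') (hb : b = b') (hc : c = c') :
    HasJet₂ γ a' b' c' := by
  subst ha hb hc; exact h

lemma const (k : F) : HasJet₂ (fun _ => k) k 0 0 :=
  ⟨rfl, fun _ => 0, rfl, Eventually.of_forall fun t => hasDerivAt_const t k, hasDerivAt_const 0 0⟩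

lemma add (h : HasJet₂ γ a b c) (h' : HasJet₂ δ a' b' c') :
    HasJet₂ (fun t => γ t + δ t) (a + a') (b + b') (c + c') := by
  obtain ⟨rfl, g, rfl, hg, hc⟩ := h
  obtain ⟨rfl, g', rfl, hg', hc'⟩ := h'
  refine ⟨rfl, fun t => g t + g' t, rfl, ?_, hc.add hc'⟩
  filter_upwards [hg, hg'] with t ht ht' using ht.add ht'

lemma bilinear (B : F →L[ℝ] G →L[ℝ] H) {ε : ℝ → G} {p q r : G} (h : HasJet₂ γ a b c)
    (h' : HasJet₂ ε p q r) :
    HasJet₂ (fun t => B (γ t) (ε t)) (B a p) (B b p + B a q) (B c p + (2 : ℝ) • B b q + B a r) := by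
  obtain ⟨rfl, g, rfl, hg, hc⟩ := h
  obtain ⟨rfl, g', rfl, hg', hc'⟩ := h'
  have product : ∀ {α : ℝ → F} {β : ℝ → G} {α' : F} {β' : G} {t : ℝ}, HasDerivAt α α' t →
      HasDerivAt β β' t → HasDerivAt (fun t => B (α t) (β t)) (B α' (β t) + B (α t) β') t :=
    fun hα hβ => by
      simpa [add_comm] using (B.hasFDerivAt.comp_hasDerivAt _ hα).clm_apply hβ
  refine ⟨rfl, fun t => B (g t) (ε t) + B (γ t) (g' t), rfl, ?_, ?_⟩
  · filter_upwards [hg, hg'] with t ht ht' using product ht ht'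
  · refine ((product hc hg'.self_of_nhds).add (product hg.self_of_nhds hc')).congr_deriv ?_
    module

lemma mul {γ δ : ℝ → ℝ} {a b c a' b' c' : ℝ} (h : HasJet₂ γ a b c) (h' : HasJet₂ δ a' b' c') :
    HasJet₂ (fun t => γ t * δ t) (a * a') (b * a' + a * b') (c * a' + 2 * b * b' + a * c') :=
  (h.bilinear (ContinuousLinearMap.mul ℝ ℝ) h').congr_jet rfl rfl
    (by simp [mul_assoc])

lemma const_mul {γ : ℝ → ℝ} {a b c : ℝ} (k : ℝ) (h : HasJet₂ γ a b c) :
    HasJet₂ (fun t => k * γ t) (k * a) (k * b) (k * c) :=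
  ((const k).mul h).congr_jet rfl (by ring) (by ring)

lemma sub {γ δ : ℝ → ℝ} {a b c a' b' c' : ℝ} (h : HasJet₂ γ a b c) (h' : HasJet₂ δ a' b' c') :
    HasJet₂ (fun t => γ t - δ t) (a - a') (b - b') (c - c') := by
  simpa [sub_eq_add_neg] using h.add (h'.const_mul (-1))

lemma norm_sq {F : Type*} [NormedAddCommGroup F] [InnerProductSpace ℝ F] {γ : ℝ → F} {a b c : F}
    (h : HasJet₂ γ a b c) :
    HasJet₂ (fun t => ‖γ t‖ ^ 2) (‖a‖ ^ 2) (2 * inner ℝ a b) (2 * ‖b‖ ^ 2 + 2 * inner ℝ a c) := by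
  have hself : ∀ v : F, innerSL ℝ v v = ‖v‖ ^ 2 := fun v => real_inner_self_eq_norm_sq v
  have hcomm : ∀ v w : F, innerSL ℝ v w = inner ℝ v w := fun v w => rfl
  refine ((h.bilinear (innerSL ℝ) h).congr (Eventually.of_forall fun t => ?_)).congr_jet
    (hself a) ?_ ?_
  · exact (hself _).symm
  · rw [hcomm, hcomm, real_inner_comm]; ring
  · rw [hself, hcomm, hcomm, real_inner_comm, smul_eq_mul]; ring

lemma log {γ : ℝ → ℝ} {a b c : ℝ} (h : HasJet₂ γ a b c) (ha : 0 < a) :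
    HasJet₂ (fun t => Real.log (γ t)) (Real.log a) (b / a) (c / a - (b / a) ^ 2) := by
  obtain ⟨rfl, g, rfl, hg, hc⟩ := h
  have hpos : ∀ᶠ t in 𝓝 0, 0 < γ t :=
    hg.self_of_nhds.continuousAt.eventually (lt_mem_nhds ha)
  refine ⟨rfl, fun t => g t / γ t, rfl, ?_, ?_⟩
  · filter_upwards [hg, hpos] with t ht hp using ht.log hp.ne'
  · refine (hc.div hg.self_of_nhds ha.ne').congr_deriv ?_
    field_simp

lemma of_isLocalMax {γ : ℝ → ℝ} {a b c : ℝ} (h : HasJet₂ γ a b c) (hmax : IsLocalMax γ 0) :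
    b = 0 ∧ c ≤ 0 := by
  obtain ⟨-, g, hb, hg, hc⟩ := id h
  have hb0 : b = 0 := hb ▸ hmax.hasDerivAt_eq_zero hg.self_of_nhds
  refine ⟨hb0, ?_⟩
  by_contra! hcpos
  have hderiv : deriv γ =ᶠ[𝓝 0] g := by filter_upwards [hg] with t ht using ht.deriv
  have hmin : IsLocalMin γ 0 := by
    apply isLocalMin_of_deriv_deriv_pos
    · rwa [hderiv.deriv_eq, hc.deriv]
    · rw [hderiv.eq_of_nhds, hb, hb0]
    · exact hg.self_of_nhds.continuousAt
  have hconst : γ =ᶠ[𝓝 0] fun _ => γ 0 := by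
    filter_upwards [hmax, hmin] with t h₁ h₂ using le_antisymm h₁ h₂
  exact hcpos.ne' (h.unique ((const (γ 0)).congr hconst)).2.2

end HasJet₂

variable {E : Type*} [NormedAddCommGroup E] [NormedSpace ℝ E] {x : E}

lemma hasJet₂_line {f : E → F} (hf : ContDiffAt ℝ 2 f x) (v : E) :
    HasJet₂ (fun t : ℝ => f (x + t • v)) (f x) (dirDeriv v f x) (dirDeriv v (dirDeriv v f) x) := by
  refine ⟨by simp, fun t => dirDeriv v f (x + t • v), by simp, ?_, ?_⟩
  · filter_upwards [eventually_add_smul (hf.eventually (by simp)) v] with t ht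
    exact hasDerivAt_add_smul v (ht.differentiableAt (by norm_num))
  · have hf' : DifferentiableAt ℝ (dirDeriv v f) (x + (0 : ℝ) • v) := by
      simpa using (contDiffAt_dirDeriv (m := 1) hf (by norm_num) v).differentiableAt (by norm_num)
    simpa using hasDerivAt_add_smul v hf'

lemma isLocalMax_line {f : E → ℝ} (h : IsLocalMax f x) (v : E) :
    IsLocalMax (fun t : ℝ => f (x + t • v)) 0 := by
  simpa [IsLocalMax, IsMaxFilter] using eventually_add_smul h v

end Jet

section Calculus

variable {E : Type*} [NormedAddCommGroup E] [NormedSpace ℝ E] {f g : E → ℝ} {x v : E}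

lemma dirDeriv_const_add (k : ℝ) (f : E → ℝ) (v : E) :
    dirDeriv v (fun y => k + f y) = dirDeriv v f := by
  funext y
  simp only [dirDeriv, fderiv_const_add]

lemma dirDeriv_add (hf : ContDiffAt ℝ 2 f x) (hg : ContDiffAt ℝ 2 g x) :
    dirDeriv v (fun y => f y + g y) x = dirDeriv v f x + dirDeriv v g x ∧
    dirDeriv v (dirDeriv v fun y => f y + g y) x
      = dirDeriv v (dirDeriv v f) x + dirDeriv v (dirDeriv v g) x :=
  ((hasJet₂_line (hf.add hg) v).unique ((hasJet₂_line hf v).add (hasJet₂_line hg v))).2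

lemma dirDeriv_const_mul (hf : ContDiffAt ℝ 2 f x) (k : ℝ) :
    dirDeriv v (fun y => k * f y) x = k * dirDeriv v f x ∧
    dirDeriv v (dirDeriv v fun y => k * f y) x = k * dirDeriv v (dirDeriv v f) x :=
  ((hasJet₂_line (contDiffAt_const.mul hf) v).unique ((hasJet₂_line hf v).const_mul k)).2

lemma dirDeriv_log (hf : ContDiffAt ℝ 2 f x) (h0 : 0 < f x) :
    dirDeriv v (fun y => Real.log (f y)) x = dirDeriv v f x / f x ∧
    dirDeriv v (dirDeriv v fun y => Real.log (f y)) x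
      = dirDeriv v (dirDeriv v f) x / f x - (dirDeriv v f x / f x) ^ 2 :=
  ((hasJet₂_line (hf.log h0.ne') v).unique ((hasJet₂_line hf v).log h0)).2

lemma dirDeriv_norm_sq {F : Type*} [NormedAddCommGroup F] [InnerProductSpace ℝ F] {w : E → F}
    (hw : ContDiffAt ℝ 2 w x) :
    dirDeriv v (fun y => ‖w y‖ ^ 2) x = 2 * inner ℝ (w x) (dirDeriv v w x) ∧
    dirDeriv v (dirDeriv v fun y => ‖w y‖ ^ 2) x
      = 2 * ‖dirDeriv v w x‖ ^ 2 + 2 * inner ℝ (w x) (dirDeriv v (dirDeriv v w) x) :=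
  ((hasJet₂_line (hw.norm_sq ℝ) v).unique (hasJet₂_line hw v).norm_sq).2

lemma dirDeriv_of_isLocalMax (hf : ContDiffAt ℝ 2 f x) (hmax : IsLocalMax f x) (v : E) :
    dirDeriv v f x = 0 ∧ dirDeriv v (dirDeriv v f) x ≤ 0 :=
  (hasJet₂_line hf v).of_isLocalMax (isLocalMax_line hmax v)

end Calculus

section EllipticOp

variable {F : Type*} [NormedAddCommGroup F] [NormedSpace ℝ F] {f g : ℝ × ℝ → ℝ} {x τ b : ℝ × ℝ}

/-- The elliptic operator `Δf + D²f(τ, τ) + Df(b)` on the plane, at a point `x`. -/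
def ellipticOp (τ b : ℝ × ℝ) (f : ℝ × ℝ → F) (x : ℝ × ℝ) : F :=
  dirDeriv (1, 0) (dirDeriv (1, 0) f) x + dirDeriv (0, 1) (dirDeriv (0, 1) f) x
    + dirDeriv τ (dirDeriv τ f) x + dirDeriv b f x

/-- The squared gradient `|∇f|² + |Df(τ)|²`, in the metric given by the leading part of
`ellipticOp τ b`. -/
def gradSq (τ : ℝ × ℝ) (f : ℝ × ℝ → F) (x : ℝ × ℝ) : ℝ :=
  ‖dirDeriv (1, 0) f x‖ ^ 2 + ‖dirDeriv (0, 1) f x‖ ^ 2 + ‖dirDeriv τ f x‖ ^ 2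

lemma ellipticOp_congr {f g : ℝ × ℝ → F} (h : f =ᶠ[𝓝 x] g) :
    ellipticOp τ b f x = ellipticOp τ b g x := by
  simp only [ellipticOp, dirDeriv_congr h, dirDeriv_congr (dirDeriv_eventuallyEq h)]

lemma gradSq_congr {f g : ℝ × ℝ → F} (h : f =ᶠ[𝓝 x] g) : gradSq τ f x = gradSq τ g x := by
  simp only [gradSq, dirDeriv_congr h]

lemma ellipticOp_const_add (k : ℝ) (f : ℝ × ℝ → ℝ) :
    ellipticOp τ b (fun y => k + f y) x = ellipticOp τ b f x := by
  simp only [ellipticOp, dirDeriv_const_add]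

lemma gradSq_const_add (k : ℝ) (f : ℝ × ℝ → ℝ) :
    gradSq τ (fun y => k + f y) x = gradSq τ f x := by
  simp only [gradSq, dirDeriv_const_add]

lemma ellipticOp_add (hf : ContDiffAt ℝ 2 f x) (hg : ContDiffAt ℝ 2 g x) :
    ellipticOp τ b (fun y => f y + g y) x = ellipticOp τ b f x + ellipticOp τ b g x := by
  simp only [ellipticOp, (dirDeriv_add hf hg).1, (dirDeriv_add hf hg).2]
  ring

lemma ellipticOp_const_mul (hf : ContDiffAt ℝ 2 f x) (k : ℝ) :
    ellipticOp τ b (fun y => k * f y) x = k * ellipticOp τ b f x := by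
  simp only [ellipticOp, (dirDeriv_const_mul hf k).1, (dirDeriv_const_mul hf k).2]
  ring

lemma gradSq_const_mul (hf : ContDiffAt ℝ 2 f x) (k : ℝ) :
    gradSq τ (fun y => k * f y) x = k ^ 2 * gradSq τ f x := by
  simp only [gradSq, (dirDeriv_const_mul hf k).1, norm_mul, Real.norm_eq_abs, mul_pow, sq_abs]
  ring

lemma ellipticOp_log (hf : ContDiffAt ℝ 2 f x) (h0 : 0 < f x) :
    ellipticOp τ b (fun y => Real.log (f y)) x
      = ellipticOp τ b f x / f x - gradSq τ f x / f x ^ 2 := by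
  simp only [ellipticOp, gradSq, (dirDeriv_log hf h0).1, (dirDeriv_log hf h0).2,
    Real.norm_eq_abs, sq_abs]
  ring

lemma gradSq_log (hf : ContDiffAt ℝ 2 f x) (h0 : 0 < f x) :
    gradSq τ (fun y => Real.log (f y)) x = gradSq τ f x / f x ^ 2 := by
  simp only [gradSq, (dirDeriv_log hf h0).1, Real.norm_eq_abs, sq_abs]
  ring

lemma gradSq_le_two_mul_add (hf : ContDiffAt ℝ 2 f x) (hg : ContDiffAt ℝ 2 g x) :
    gradSq τ f x ≤ 2 * gradSq τ (fun y => f y + g y) x + 2 * gradSq τ g x := by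
  simp only [gradSq, (dirDeriv_add hf hg).1, Real.norm_eq_abs, sq_abs]
  nlinarith [sq_nonneg (dirDeriv (1, 0) f x + 2 * dirDeriv (1, 0) g x),
    sq_nonneg (dirDeriv (0, 1) f x + 2 * dirDeriv (0, 1) g x),
    sq_nonneg (dirDeriv τ f x + 2 * dirDeriv τ g x)]

lemma ellipticOp_nonpos_of_isLocalMax (hf : ContDiffAt ℝ 2 f x) (hmax : IsLocalMax f x) :
    ellipticOp τ b f x ≤ 0 := by
  have hline := dirDeriv_of_isLocalMax hf hmax
  unfold ellipticOp
  linarith [(hline (1, 0)).2, (hline (0, 1)).2, (hline τ).2, (hline b).1]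

lemma gradSq_eq_of_isLocalMax_add (hf : ContDiffAt ℝ 2 f x) (hg : ContDiffAt ℝ 2 g x)
    (hmax : IsLocalMax (fun y => f y + g y) x) : gradSq τ g x = gradSq τ f x := by
  have hfirst : ∀ v, dirDeriv v g x = -dirDeriv v f x := fun v => by
    have := (dirDeriv_of_isLocalMax (hf.add hg) hmax v).1
    rw [(dirDeriv_add hf hg).1] at this
    linarith
  simp only [gradSq, hfirst, norm_neg]

lemma ellipticOp_norm_sq {F : Type*} [NormedAddCommGroup F] [InnerProductSpace ℝ F]
    {w : ℝ × ℝ → F} (hw : ContDiffAt ℝ 2 w x) :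
    ellipticOp τ b (fun y => ‖w y‖ ^ 2) x
      = 2 * inner ℝ (w x) (ellipticOp τ b w x) + 2 * gradSq τ w x := by
  simp only [ellipticOp, gradSq, (dirDeriv_norm_sq hw).1, (dirDeriv_norm_sq hw).2, inner_add_right]
  ring

lemma gradSq_norm_sq_le {F : Type*} [NormedAddCommGroup F] [InnerProductSpace ℝ F]
    {w : ℝ × ℝ → F} (hw : ContDiffAt ℝ 2 w x) :
    gradSq τ (fun y => ‖w y‖ ^ 2) x ≤ 4 * ‖w x‖ ^ 2 * gradSq τ w x := by
  have hbound : ∀ v, ‖dirDeriv v (fun y => ‖w y‖ ^ 2) x‖ ^ 2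
      ≤ 4 * ‖w x‖ ^ 2 * ‖dirDeriv v w x‖ ^ 2 := fun v => by
    have hinner := pow_le_pow_left₀ (norm_nonneg _)
      (norm_inner_le_norm (𝕜 := ℝ) (w x) (dirDeriv v w x)) 2
    rw [(dirDeriv_norm_sq hw).1, norm_mul, mul_pow, Real.norm_ofNat]
    linarith [mul_pow ‖w x‖ ‖dirDeriv v w x‖ 2]
  unfold gradSq
  linarith [hbound (1, 0), hbound (0, 1), hbound τ]

end EllipticOp

section Cutoff

variable {z x : ℝ × ℝ} {R : ℝ}

/-- The cut-off function `R² - |y - z|²`, for the Euclidean norm. It is nonnegative exactly on the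
closed Euclidean disc of radius `R` around `z`. -/
def cutoff (R : ℝ) (z y : ℝ × ℝ) : ℝ := R ^ 2 - ((y.1 - z.1) ^ 2 + (y.2 - z.2) ^ 2)

lemma contDiff_cutoff {n : WithTop ℕ∞} : ContDiff ℝ n (cutoff R z) := by unfold cutoff; fun_prop

lemma cutoff_self : cutoff R z z = R ^ 2 := by simp [cutoff]

lemma cutoff_le : cutoff R z x ≤ R ^ 2 := by
  unfold cutoff; nlinarith [sq_nonneg (x.1 - z.1), sq_nonneg (x.2 - z.2)]

lemma dist_le_of_cutoff_nonneg (hR : 0 ≤ R) (h : 0 ≤ cutoff R z x) : dist x z ≤ R := by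
  unfold cutoff at h
  rw [Prod.dist_eq, Real.dist_eq, Real.dist_eq]
  apply max_le <;> apply abs_le_of_sq_le_sq _ hR <;>
    nlinarith [sq_nonneg (x.1 - z.1), sq_nonneg (x.2 - z.2)]

lemma isCompact_cutoff_nonneg (hR : 0 ≤ R) : IsCompact {y | 0 ≤ cutoff R z y} :=
  (isCompact_closedBall z R).of_isClosed_subset
    (isClosed_le continuous_const (contDiff_cutoff (n := 0)).continuous)
    fun _ hy => Metric.mem_closedBall.2 (dist_le_of_cutoff_nonneg hR hy)

lemma dirDeriv_cutoff (v : ℝ × ℝ) :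
    dirDeriv v (cutoff R z) x = -2 * ((x.1 - z.1) * v.1 + (x.2 - z.2) * v.2) ∧
    dirDeriv v (dirDeriv v (cutoff R z)) x = -2 * (v.1 ^ 2 + v.2 ^ 2) := by
  have hlin : ∀ a c : ℝ, HasJet₂ (fun t : ℝ => a + t * c) a c 0 := fun a c =>
    ⟨by simp, fun _ => c, rfl,
      Eventually.of_forall fun t => by simpa using ((hasDerivAt_id t).mul_const c).const_add a,
      hasDerivAt_const 0 c⟩
  have h₁ := hlin (x.1 - z.1) v.1
  have h₂ := hlin (x.2 - z.2) v.2
  have hjet := ((HasJet₂.const (R ^ 2)).sub ((h₁.mul h₁).add (h₂.mul h₂))).congr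
    (δ := fun t : ℝ => cutoff R z (x + t • v)) <| Eventually.of_forall fun t => by
      simp only [cutoff, Prod.fst_add, Prod.snd_add, Prod.smul_fst, Prod.smul_snd, smul_eq_mul]
      ring
  obtain ⟨-, hb, hc⟩ := (hasJet₂_line contDiff_cutoff.contDiffAt v).unique hjet
  exact ⟨by rw [hb]; ring, by rw [hc]; ring⟩

lemma gradSq_cutoff_le (hx : 0 ≤ cutoff R z x) (τ : ℝ × ℝ) :
    gradSq τ (cutoff R z) x ≤ 4 * R ^ 2 * (1 + enorm2 τ ^ 2) := by
  simp only [gradSq, (dirDeriv_cutoff _).1, Real.norm_eq_abs, sq_abs]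
  rw [enorm2, Real.sq_sqrt (by positivity)]
  unfold cutoff at hx
  have hcs : ((x.1 - z.1) * τ.1 + (x.2 - z.2) * τ.2) ^ 2 ≤ R ^ 2 * (τ.1 ^ 2 + τ.2 ^ 2) := by
    nlinarith [sq_nonneg ((x.1 - z.1) * τ.2 - (x.2 - z.2) * τ.1),
      mul_nonneg hx (add_nonneg (sq_nonneg τ.1) (sq_nonneg τ.2))]
  linarith

lemma neg_ellipticOp_cutoff_le (hR : 0 ≤ R) (hx : 0 ≤ cutoff R z x) (τ b : ℝ × ℝ) :
    -ellipticOp τ b (cutoff R z) x ≤ 2 * (2 + enorm2 τ ^ 2 + R * enorm2 b) := by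
  simp only [ellipticOp, (dirDeriv_cutoff _).1, (dirDeriv_cutoff _).2]
  have hb := Real.sq_sqrt (show 0 ≤ b.1 ^ 2 + b.2 ^ 2 by positivity)
  have hcs : (x.1 - z.1) * b.1 + (x.2 - z.2) * b.2 ≤ R * enorm2 b := by
    refine (abs_le_of_sq_le_sq' ?_ (by unfold enorm2; positivity)).2
    rw [enorm2, mul_pow, hb]
    unfold cutoff at hx
    nlinarith [sq_nonneg ((x.1 - z.1) * b.2 - (x.2 - z.2) * b.1),
      mul_nonneg hx (add_nonneg (sq_nonneg b.1) (sq_nonneg b.2))]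
  rw [enorm2, Real.sq_sqrt (by positivity)]
  linarith

lemma exists_isLocalMax_log_cutoff {U : Set (ℝ × ℝ)} {g : ℝ × ℝ → ℝ} (hR : 0 < R) (hU : IsOpen U)
    (hDU : {y | 0 ≤ cutoff R z y} ⊆ U) (hg : ContinuousOn g U) (hgz : 0 < g z) :
    ∃ x ∈ U, 0 < cutoff R z x ∧ 0 < g x ∧ R ^ 4 * g z ≤ cutoff R z x ^ 2 * g x ∧
      IsLocalMax (fun y => 2 * Real.log (cutoff R z y) + Real.log (g y)) x := by
  have hcut : Continuous (cutoff R z) := (contDiff_cutoff (n := 0)).continuous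
  have hz : z ∈ {y | 0 ≤ cutoff R z y} := by rw [mem_ofPred_eq, cutoff_self]; positivity
  obtain ⟨x, hx, hmax⟩ := (isCompact_cutoff_nonneg hR.le).exists_isMaxOn ⟨z, hz⟩
    ((hcut.continuousOn.pow 2).mul (hg.mono hDU))
  have hzx : R ^ 4 * g z ≤ cutoff R z x ^ 2 * g x := by
    have : cutoff R z z ^ 2 * g z ≤ cutoff R z x ^ 2 * g x := hmax hz
    rwa [cutoff_self, ← pow_mul] at this
  have hpos : 0 < cutoff R z x ^ 2 * g x := lt_of_lt_of_le (by positivity) hzx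
  have hcx : 0 < cutoff R z x := lt_of_le_of_ne hx fun h => by simp [← h] at hpos
  have hgx : 0 < g x := pos_of_mul_pos_right hpos (by positivity)
  refine ⟨x, hDU hx, hcx, hgx, hzx, ?_⟩
  have hlog : ∀ y, 0 < cutoff R z y → 0 < g y →
      2 * Real.log (cutoff R z y) + Real.log (g y) = Real.log (cutoff R z y ^ 2 * g y) :=
    fun y hy hgy => by rw [Real.log_mul (by positivity) hgy.ne', Real.log_pow]; norm_num
  filter_upwards [hcut.continuousAt.eventually (lt_mem_nhds hcx),
    (hg.continuousAt (hU.mem_nhds (hDU hx))).eventually (lt_mem_nhds hgx)] with y hy hgy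
  rw [hlog y hy hgy, hlog x hcx hgx]
  exact Real.log_le_log (by positivity) (hmax hy.le)

/-- The maximum principle for `log (η² g)`, with `η` the cut-off: an interior bound for `g z` will
follow from a lower bound for `L (log g)` at the unknown point `x`. -/
lemma exists_cutoff_maximum {U : Set (ℝ × ℝ)} {g : ℝ × ℝ → ℝ} (hR : 0 < R) (hU : IsOpen U)
    (hDU : {y | 0 ≤ cutoff R z y} ⊆ U) (hg : ContDiffOn ℝ 2 g U) (hgz : 0 < g z) :
    ∃ x ∈ U, 0 < cutoff R z x ∧ 0 < g x ∧ R ^ 4 * g z ≤ cutoff R z x ^ 2 * g x ∧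
      (∀ τ b, cutoff R z x ^ 2 * ellipticOp τ b (fun y => Real.log (g y)) x
        ≤ 4 * cutoff R z x * (2 + enorm2 τ ^ 2 + R * enorm2 b) + 8 * R ^ 2 * (1 + enorm2 τ ^ 2)) ∧
      ∀ τ, cutoff R z x ^ 2 * gradSq τ (fun y => Real.log (g y)) x
        ≤ 16 * R ^ 2 * (1 + enorm2 τ ^ 2) := by
  obtain ⟨x, hxU, hcx, hgx, hzx, hmax⟩ :=
    exists_isLocalMax_log_cutoff hR hU hDU hg.continuousOn hgz
  have hc : ContDiffAt ℝ 2 (cutoff R z) x := contDiff_cutoff.contDiffAt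
  have hlogc : ContDiffAt ℝ 2 (fun y => Real.log (cutoff R z y)) x := hc.log hcx.ne'
  have h2logc : ContDiffAt ℝ 2 (fun y => 2 * Real.log (cutoff R z y)) x :=
    contDiffAt_const.mul hlogc
  have hlogg : ContDiffAt ℝ 2 (fun y => Real.log (g y)) x :=
    (hg.contDiffAt (hU.mem_nhds hxU)).log hgx.ne'
  refine ⟨x, hxU, hcx, hgx, hzx, fun τ b => ?_, fun τ => ?_⟩
  · have hle := ellipticOp_nonpos_of_isLocalMax (τ := τ) (b := b) (h2logc.add hlogg) hmax
    rw [ellipticOp_add h2logc hlogg, ellipticOp_const_mul hlogc, ellipticOp_log hc hcx] at hle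
    have hη := neg_ellipticOp_cutoff_le hR.le hcx.le τ b
    have hgrad := gradSq_cutoff_le hcx.le τ
    calc cutoff R z x ^ 2 * ellipticOp τ b (fun y => Real.log (g y)) x
        ≤ cutoff R z x ^ 2 * (-2 * (ellipticOp τ b (cutoff R z) x / cutoff R z x
          - gradSq τ (cutoff R z) x / cutoff R z x ^ 2)) := by gcongr; linarith
      _ = 2 * cutoff R z x * -ellipticOp τ b (cutoff R z) x + 2 * gradSq τ (cutoff R z) x := by
          field_simp; ring
      _ ≤ 2 * cutoff R z x * (2 * (2 + enorm2 τ ^ 2 + R * enorm2 b))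
          + 2 * (4 * R ^ 2 * (1 + enorm2 τ ^ 2)) := by gcongr
      _ = _ := by ring
  · rw [gradSq_eq_of_isLocalMax_add h2logc hlogg hmax, gradSq_const_mul hlogc, gradSq_log hc hcx]
    have hgrad := gradSq_cutoff_le hcx.le τ
    calc cutoff R z x ^ 2 * (2 ^ 2 * (gradSq τ (cutoff R z) x / cutoff R z x ^ 2))
        = 4 * gradSq τ (cutoff R z) x := by field_simp; ring
      _ ≤ 4 * (4 * R ^ 2 * (1 + enorm2 τ ^ 2)) := by gcongr
      _ = _ := by ring

end Cutoff

section AdaptedJet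

/-- The data, at one point, of a solution of the CMC equation in an orthonormal frame `(e, e')`
with `D_{e'} u = 0`: `W` is the area element, `p = D_e u`, the second derivatives of `u` are
`r, s, t`, the third ones `a, b, c, d`, the fourth ones `e₀, …, e₄` (in the order of increasing
number of `e'`), and `w₁, w₂, w₁₁, w₁₂, w₂₂` are the first and second derivatives of `W`. The fields
are the derivatives, in the direction `v e + w e'`, of `W² = 1 + |∇u|²` and of the CMC equation. -/
structure AdaptedJet (H : ℝ) where
  (W p r s t a b c d e₀ e₁ e₂ e₃ e₄ w₁ w₂ w₁₁ w₁₂ w₂₂ : ℝ)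
  W_pos : 0 < W
  W_sq : W ^ 2 = 1 + p ^ 2
  W_sq_deriv (v w : ℝ) : W * (v * w₁ + w * w₂) = p * (v * r + w * s)
  W_sq_deriv_deriv (v w : ℝ) :
    (v * w₁ + w * w₂) ^ 2 + W * (v ^ 2 * w₁₁ + 2 * v * w * w₁₂ + w ^ 2 * w₂₂)
      = (v * r + w * s) ^ 2 + p * (v ^ 2 * a + 2 * v * w * b + w ^ 2 * c) + (v * s + w * t) ^ 2
  cmc : r + (1 + p ^ 2) * t = 2 * H * W ^ 3
  cmc_deriv (v w : ℝ) : v * a + w * b - 2 * p * (v * s + w * t) * s + (1 + p ^ 2) * (v * c + w * d)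
    + 2 * p * (v * r + w * s) * t = 6 * H * W ^ 2 * (v * w₁ + w * w₂)
  cmc_deriv_deriv (v w : ℝ) : v ^ 2 * e₀ + 2 * v * w * e₁ + w ^ 2 * e₂ + 2 * (v * s + w * t) ^ 2 * r
    - 2 * (2 * (v * r + w * s) * (v * s + w * t) * s
      + p * (v ^ 2 * b + 2 * v * w * c + w ^ 2 * d) * s + 2 * p * (v * s + w * t) * (v * b + w * c))
    + (1 + p ^ 2) * (v ^ 2 * e₂ + 2 * v * w * e₃ + w ^ 2 * e₄)
    + 4 * p * (v * r + w * s) * (v * c + w * d)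
    + (2 * (v * r + w * s) ^ 2 + 2 * p * (v ^ 2 * a + 2 * v * w * b + w ^ 2 * c)) * t
    = 2 * H * (3 * W ^ 2 * (v ^ 2 * w₁₁ + 2 * v * w * w₁₂ + w ^ 2 * w₂₂)
      + 6 * W * (v * w₁ + w * w₂) ^ 2)

namespace AdaptedJet

variable {H : ℝ} (j : AdaptedJet H)

/-- Half the difference of the two diagonal entries of the second fundamental form, in the
orthonormal frame of the graph above `(e, e')`. -/
def α : ℝ := j.r / j.W ^ 3 - H

/-- The off-diagonal entry of the second fundamental form. -/
def β : ℝ := j.s / j.W ^ 2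

/-- The third derivative `D_e D_e D_e u`, scaled by the lengths of the lifted frame. -/
def A : ℝ := j.a / j.W ^ 4

/-- The third derivative `D_e D_e D_{e'} u`, scaled by the lengths of the lifted frame. -/
def B : ℝ := j.b / j.W ^ 3

/-- The value of `W⁴(H² - K)`. -/
def x : ℝ := H ^ 2 * j.W ^ 4 - (j.r * j.t - j.s ^ 2)

/-- The first derivative of `W⁴(H² - K)` in the direction `e`. -/
def x₁ : ℝ := 4 * H ^ 2 * j.W ^ 3 * j.w₁ - (j.a * j.t + j.r * j.c - 2 * j.s * j.b)

/-- The first derivative of `W⁴(H² - K)` in the direction `e'`. -/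
def x₂ : ℝ := 4 * H ^ 2 * j.W ^ 3 * j.w₂ - (j.b * j.t + j.r * j.d - 2 * j.s * j.c)

/-- The second derivative of `W⁴(H² - K)` in the direction `e`. -/
def x₁₁ : ℝ := H ^ 2 * (4 * j.W ^ 3 * j.w₁₁ + 12 * j.W ^ 2 * j.w₁ ^ 2)
  - (j.e₀ * j.t + 2 * j.a * j.c + j.r * j.e₂ - 2 * j.b ^ 2 - 2 * j.s * j.e₁)

/-- The second derivative of `W⁴(H² - K)` in the direction `e'`. -/
def x₂₂ : ℝ := H ^ 2 * (4 * j.W ^ 3 * j.w₂₂ + 12 * j.W ^ 2 * j.w₂ ^ 2)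
  - (j.e₂ * j.t + 2 * j.b * j.d + j.r * j.e₄ - 2 * j.c ^ 2 - 2 * j.s * j.e₃)

lemma r_eq : j.r = j.W ^ 3 * (H + j.α) := by
  have := j.W_pos; unfold α; field_simp; ring

lemma s_eq : j.s = j.W ^ 2 * j.β := by
  have := j.W_pos; unfold β; field_simp

lemma a_eq : j.a = j.W ^ 4 * j.A := by
  have := j.W_pos; unfold A; field_simp

lemma b_eq : j.b = j.W ^ 3 * j.B := by
  have := j.W_pos; unfold B; field_simp

lemma t_eq : j.t = j.W * (H - j.α) :=
  mul_left_cancel₀ (pow_ne_zero 2 j.W_pos.ne') <| by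
    linear_combination j.cmc - j.r_eq + j.t * j.W_sq

lemma w₁_eq : j.w₁ = j.p * j.W ^ 2 * (H + j.α) :=
  mul_left_cancel₀ j.W_pos.ne' <| by
    linear_combination j.W_sq_deriv 1 0 + j.p * j.r_eq

lemma w₂_eq : j.w₂ = j.p * j.W * j.β :=
  mul_left_cancel₀ j.W_pos.ne' <| by
    linear_combination j.W_sq_deriv 0 1 + j.p * j.s_eq

lemma c_eq :
    j.c = j.W ^ 2 * (-j.A + j.p * (2 * (j.α ^ 2 + j.β ^ 2) + 4 * H ^ 2 + 6 * H * j.α)) := by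
  refine mul_left_cancel₀ (pow_ne_zero 2 j.W_pos.ne') ?_
  have h := j.cmc_deriv 1 0
  rw [← j.W_sq, j.a_eq, j.r_eq, j.s_eq, j.t_eq, j.w₁_eq] at h
  linear_combination h

lemma d_eq : j.d = j.W * (-j.B + 6 * H * j.p * j.β) := by
  refine mul_left_cancel₀ (pow_ne_zero 2 j.W_pos.ne') ?_
  have h := j.cmc_deriv 0 1
  rw [← j.W_sq, j.b_eq, j.s_eq, j.t_eq, j.w₂_eq] at h
  linear_combination h

lemma w₁₁_eq : j.w₁₁ = j.W ^ 3 * ((H + j.α) ^ 2 + j.β ^ 2 + j.p * j.A) := by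
  refine mul_left_cancel₀ j.W_pos.ne' ?_
  have h := j.W_sq_deriv_deriv 1 0
  rw [j.a_eq, j.r_eq, j.s_eq, j.w₁_eq] at h
  linear_combination h + j.W ^ 4 * (H + j.α) ^ 2 * j.W_sq

lemma w₁₂_eq : j.w₁₂ = j.W ^ 2 * (2 * H * j.β + j.p * j.B) := by
  refine mul_left_cancel₀ j.W_pos.ne' ?_
  have h : j.w₁ * j.w₂ + j.W * j.w₁₂ = j.r * j.s + j.p * j.b + j.s * j.t := by
    linear_combination (j.W_sq_deriv_deriv 1 1 - j.W_sq_deriv_deriv 1 0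
      - j.W_sq_deriv_deriv 0 1) / 2
  rw [j.b_eq, j.r_eq, j.s_eq, j.t_eq, j.w₁_eq, j.w₂_eq] at h
  linear_combination h + j.W ^ 3 * (H + j.α) * j.β * j.W_sq

lemma w₂₂_eq : j.w₂₂ = j.W * (j.β ^ 2
    + j.p * (-j.A + j.p * (2 * (j.α ^ 2 + j.β ^ 2) + 4 * H ^ 2 + 6 * H * j.α))
    + (H - j.α) ^ 2) := by
  refine mul_left_cancel₀ j.W_pos.ne' ?_
  have h := j.W_sq_deriv_deriv 0 1
  rw [j.c_eq, j.s_eq, j.t_eq, j.w₂_eq] at h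
  linear_combination h + j.W ^ 2 * j.β ^ 2 * j.W_sq

lemma x_eq : j.x = j.W ^ 4 * (j.α ^ 2 + j.β ^ 2) := by
  rw [x, j.r_eq, j.s_eq, j.t_eq]; ring

lemma w_gradSq : j.w₁ ^ 2 + j.W ^ 2 * j.w₂ ^ 2
    = j.p ^ 2 * j.W ^ 4 * ((H + j.α) ^ 2 + j.β ^ 2) := by
  rw [j.w₁_eq, j.w₂_eq]; ring

lemma jacobi : j.W * (j.w₁₁ + j.W ^ 2 * j.w₂₂ - 2 * H * j.W * j.p * j.w₁)
    - 2 * (j.w₁ ^ 2 + j.W ^ 2 * j.w₂ ^ 2) = 2 * H ^ 2 * j.W ^ 4 + 2 * j.x := by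
  rw [j.w_gradSq, j.x_eq, j.w₁₁_eq, j.w₂₂_eq, j.w₁_eq]
  ring

/-- The twice differentiated CMC equation eliminates the fourth derivatives. -/
lemma x_laplacian : j.x₁₁ + j.W ^ 2 * j.x₂₂
    = H ^ 2 * (4 * j.W ^ 3 * j.w₁₁ + 12 * j.W ^ 2 * j.w₁ ^ 2) - (2 * j.a * j.c - 2 * j.b ^ 2)
      + j.W ^ 2 * (H ^ 2 * (4 * j.W ^ 3 * j.w₂₂ + 12 * j.W ^ 2 * j.w₂ ^ 2)
        - (2 * j.b * j.d - 2 * j.c ^ 2))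
      + j.t * (2 * j.s ^ 2 * j.r
        - 2 * (2 * j.r * j.s * j.s + j.p * j.b * j.s + 2 * j.p * j.s * j.b)
        + 4 * j.p * j.r * j.c + (2 * j.r ^ 2 + 2 * j.p * j.a) * j.t
        - 2 * H * (3 * j.W ^ 2 * j.w₁₁ + 6 * j.W * j.w₁ ^ 2))
      + j.r * (2 * j.t ^ 2 * j.r
        - 2 * (2 * j.s * j.t * j.s + j.p * j.d * j.s + 2 * j.p * j.t * j.c)
        + 4 * j.p * j.s * j.d + (2 * j.s ^ 2 + 2 * j.p * j.c) * j.t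
        - 2 * H * (3 * j.W ^ 2 * j.w₂₂ + 6 * j.W * j.w₂ ^ 2))
      - 2 * j.s * (2 * j.s * j.t * j.r - 2 * (j.r * j.t * j.s + j.s * j.s * j.s
          + j.p * j.c * j.s + j.p * j.s * j.c + j.p * j.t * j.b)
        + 2 * j.p * j.r * j.d + 2 * j.p * j.s * j.c + (2 * j.r * j.s + 2 * j.p * j.b) * j.t
        - 2 * H * (3 * j.W ^ 2 * j.w₁₂ + 6 * j.W * j.w₁ * j.w₂)) := by
  unfold x₁₁ x₂₂
  linear_combination -(j.s + j.t) * j.cmc_deriv_deriv 1 0 - (j.r + j.s) * j.cmc_deriv_deriv 0 1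
    + j.s * j.cmc_deriv_deriv 1 1 + (j.t * j.e₂ + j.r * j.e₄ - 2 * j.s * j.e₃) * -j.W_sq

lemma simons : j.W ^ 2 * (j.x * (j.x₁₁ + j.W ^ 2 * j.x₂₂ - 2 * H * j.W * j.p * j.x₁)
      - (j.x₁ ^ 2 + j.W ^ 2 * j.x₂ ^ 2))
    = 4 * j.x ^ 2 * (3 * H ^ 2 * j.W ^ 4 + j.x + (j.w₁ ^ 2 + j.W ^ 2 * j.w₂ ^ 2)) := by
  rw [j.x_laplacian, j.w_gradSq, j.x_eq, x₁, x₂, j.w₁₁_eq, j.w₁₂_eq, j.w₂₂_eq, j.w₁_eq, j.w₂_eq,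
    j.c_eq, j.d_eq, j.a_eq, j.b_eq, j.r_eq, j.s_eq, j.t_eq]
  linear_combination (4 * j.W ^ 12 * (j.α ^ 2 + j.β ^ 2)
    * (H ^ 2 - (j.α ^ 2 + j.β ^ 2)) ^ 2) * j.W_sq

lemma gradient_lower : (j.W ^ 2 - 1) * (5 / 6 * j.x - 5 * H ^ 2 * j.W ^ 4)
    ≤ j.w₁ ^ 2 + j.W ^ 2 * j.w₂ ^ 2 := by
  have hp : j.W ^ 2 - 1 = j.p ^ 2 := by linarith [j.W_sq]
  have hαβ : 5 / 6 * (j.α ^ 2 + j.β ^ 2) - 5 * H ^ 2 ≤ (H + j.α) ^ 2 + j.β ^ 2 := by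
    nlinarith [sq_nonneg (6 * H + j.α), sq_nonneg j.β]
  calc (j.W ^ 2 - 1) * (5 / 6 * j.x - 5 * H ^ 2 * j.W ^ 4)
      = j.p ^ 2 * j.W ^ 4 * (5 / 6 * (j.α ^ 2 + j.β ^ 2) - 5 * H ^ 2) := by
        rw [hp, j.x_eq]; ring
    _ ≤ j.p ^ 2 * j.W ^ 4 * ((H + j.α) ^ 2 + j.β ^ 2) := by gcongr
    _ = _ := j.w_gradSq.symm

end AdaptedJet
end AdaptedJet

section GraphOperator

variable {H : ℝ} {U : Set (ℝ × ℝ)} {u : ℝ × ℝ → ℝ} {x : ℝ × ℝ}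

lemma one_le_Wgraph (u : ℝ × ℝ → ℝ) (x : ℝ × ℝ) : 1 ≤ Wgraph u x :=
  Real.one_le_sqrt.2 (by nlinarith [sq_nonneg (pdx u x), sq_nonneg (pdy u x)])

lemma Wgraph_pos (u : ℝ × ℝ → ℝ) (x : ℝ × ℝ) : 0 < Wgraph u x :=
  one_pos.trans_le (one_le_Wgraph u x)

lemma Wgraph_sq (u : ℝ × ℝ → ℝ) (x : ℝ × ℝ) :
    Wgraph u x ^ 2 = 1 + dirDeriv (1, 0) u x ^ 2 + dirDeriv (0, 1) u x ^ 2 :=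
  Real.sq_sqrt (by positivity)

lemma contDiffOn_Wgraph (hU : IsOpen U) (hu : ContDiffOn ℝ ∞ u U) :
    ContDiffOn ℝ ∞ (Wgraph u) U :=
  ((contDiffOn_const.add ((contDiffOn_dirDeriv hU hu (1, 0)).pow 2)).add
    ((contDiffOn_dirDeriv hU hu (0, 1)).pow 2)).sqrt fun _ _ => ne_of_gt (by positivity)

/-- The gradient of `u` rotated by a right angle; it is tangent to the level sets of `u`. -/
def levelField (u : ℝ × ℝ → ℝ) (x : ℝ × ℝ) : ℝ × ℝ := (dirDeriv (0, 1) u x, -dirDeriv (1, 0) u x)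

/-- `W²` times the Laplace–Beltrami operator of the graph of `u`, when this graph has constant mean
curvature `H`. -/
def graphLaplacian (H : ℝ) (u f : ℝ × ℝ → ℝ) (x : ℝ × ℝ) : ℝ :=
  ellipticOp (levelField u x)
    ((-2 * H * Wgraph u x) • (dirDeriv (1, 0) u x, dirDeriv (0, 1) u x)) f x

/-- The function `W⁴(H² - K)`, with `K` the Gauss curvature of the graph of `u`. For a graph of mean
curvature `H` it vanishes at the umbilical points. -/
def umbilicity (H : ℝ) (u : ℝ × ℝ → ℝ) (x : ℝ × ℝ) : ℝ :=
  H ^ 2 * Wgraph u x ^ 4 - (dirDeriv (1, 0) (dirDeriv (1, 0) u) x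
    * dirDeriv (0, 1) (dirDeriv (0, 1) u) x - dirDeriv (0, 1) (dirDeriv (1, 0) u) x ^ 2)

lemma contDiffOn_umbilicity (hU : IsOpen U) (hu : ContDiffOn ℝ ∞ u U) :
    ContDiffOn ℝ ∞ (umbilicity H u) U := by
  have hD : ∀ e e', ContDiffOn ℝ ∞ (dirDeriv e (dirDeriv e' u)) U := fun e e' =>
    contDiffOn_dirDeriv hU (contDiffOn_dirDeriv hU hu e') e
  exact (contDiffOn_const.mul ((contDiffOn_Wgraph hU hu).pow 4)).sub
    (((hD _ _).mul (hD _ _)).sub ((hD _ _).pow 2))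

end GraphOperator

section Frame

variable {E F : Type*} [NormedAddCommGroup E] [NormedSpace ℝ E]
  [NormedAddCommGroup F] [NormedSpace ℝ F]

lemma dirDeriv_dirDeriv_smul_add_smul {f : E → F} {x e e' : E} (hf : ContDiffAt ℝ 2 f x)
    (a b a' b' : ℝ) :
    dirDeriv (a • e + b • e') (dirDeriv (a' • e + b' • e') f) x
      = (a * a') • dirDeriv e (dirDeriv e f) x
        + (a * b' + b * a') • dirDeriv e' (dirDeriv e f) x
        + (b * b') • dirDeriv e' (dirDeriv e' f) x := by
  have hcomm := dirDeriv_comm (e := e) (e' := e') hf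
  simp only [dirDeriv_dirDeriv hf] at hcomm ⊢
  simp only [map_add, map_smul, add_apply, smul_apply,
    hcomm]
  module

lemma hasJet₂_frame {f : E → F} {x : E} (hf : ContDiffAt ℝ 2 f x) (e e' : E) (v w : ℝ) :
    HasJet₂ (fun t : ℝ => f (x + t • (v • e + w • e'))) (f x)
      (v • dirDeriv e f x + w • dirDeriv e' f x)
      (v ^ 2 • dirDeriv e (dirDeriv e f) x + (2 * v * w) • dirDeriv e' (dirDeriv e f) x
        + w ^ 2 • dirDeriv e' (dirDeriv e' f) x) := by
  refine (hasJet₂_line hf (v • e + w • e')).congr_jet rfl (dirDeriv_smul_add_smul v w f x) ?_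
  rw [dirDeriv_dirDeriv_smul_add_smul hf]
  module

variable {f u : ℝ × ℝ → ℝ} {x : ℝ × ℝ} {c s : ℝ}

lemma dirDeriv_pair (f : ℝ × ℝ → F) (x : ℝ × ℝ) (a b : ℝ) :
    dirDeriv (a, b) f x = a • dirDeriv (1, 0) f x + b • dirDeriv (0, 1) f x := by
  rw [← dirDeriv_smul_add_smul]; simp

lemma dirDeriv_dirDeriv_pair {f : ℝ × ℝ → F} (hf : ContDiffAt ℝ 2 f x) (a b a' b' : ℝ) :
    dirDeriv (a, b) (dirDeriv (a', b') f) x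
      = (a * a') • dirDeriv (1, 0) (dirDeriv (1, 0) f) x
        + (a * b' + b * a') • dirDeriv (0, 1) (dirDeriv (1, 0) f) x
        + (b * b') • dirDeriv (0, 1) (dirDeriv (0, 1) f) x := by
  rw [← dirDeriv_dirDeriv_smul_add_smul hf]; simp

lemma Wgraph_sq_frame (hcs : c ^ 2 + s ^ 2 = 1) (u : ℝ × ℝ → ℝ) (x : ℝ × ℝ) :
    Wgraph u x ^ 2 = 1 + dirDeriv (c, s) u x ^ 2 + dirDeriv (-s, c) u x ^ 2 := by
  rw [Wgraph_sq, dirDeriv_pair u x c s, dirDeriv_pair u x (-s) c]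
  simp only [smul_eq_mul]
  linear_combination (-dirDeriv (1, 0) u x ^ 2 - dirDeriv (0, 1) u x ^ 2) * hcs

lemma hessianDet_frame (hcs : c ^ 2 + s ^ 2 = 1) (hu : ContDiffAt ℝ 2 u x) :
    dirDeriv (c, s) (dirDeriv (c, s) u) x * dirDeriv (-s, c) (dirDeriv (-s, c) u) x
      - dirDeriv (-s, c) (dirDeriv (c, s) u) x ^ 2
      = dirDeriv (1, 0) (dirDeriv (1, 0) u) x * dirDeriv (0, 1) (dirDeriv (0, 1) u) x
        - dirDeriv (0, 1) (dirDeriv (1, 0) u) x ^ 2 := by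
  simp only [dirDeriv_dirDeriv_pair hu c s c s, dirDeriv_dirDeriv_pair hu (-s) c (-s) c,
    dirDeriv_dirDeriv_pair hu (-s) c c s, smul_eq_mul]
  linear_combination (c ^ 2 + s ^ 2 + 1) * (dirDeriv (1, 0) (dirDeriv (1, 0) u) x
    * dirDeriv (0, 1) (dirDeriv (0, 1) u) x - dirDeriv (0, 1) (dirDeriv (1, 0) u) x ^ 2) * hcs

lemma laplacian_frame (hcs : c ^ 2 + s ^ 2 = 1) (hf : ContDiffAt ℝ 2 f x) :
    dirDeriv (c, s) (dirDeriv (c, s) f) x + dirDeriv (-s, c) (dirDeriv (-s, c) f) x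
      = dirDeriv (1, 0) (dirDeriv (1, 0) f) x + dirDeriv (0, 1) (dirDeriv (0, 1) f) x := by
  simp only [dirDeriv_dirDeriv_pair hf c s c s, dirDeriv_dirDeriv_pair hf (-s) c (-s) c,
    smul_eq_mul]
  linear_combination (dirDeriv (1, 0) (dirDeriv (1, 0) f) x
    + dirDeriv (0, 1) (dirDeriv (0, 1) f) x) * hcs

lemma gradient_frame (hcs : c ^ 2 + s ^ 2 = 1) (u : ℝ × ℝ → ℝ) (x : ℝ × ℝ) :
    (dirDeriv (1, 0) u x, dirDeriv (0, 1) u x)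
      = dirDeriv (c, s) u x • (c, s) + dirDeriv (-s, c) u x • (-s, c) := by
  rw [dirDeriv_pair u x c s, dirDeriv_pair u x (-s) c]
  ext <;> simp only [smul_eq_mul, Prod.smul_mk, Prod.mk_add_mk]
  · linear_combination -dirDeriv (1, 0) u x * hcs
  · linear_combination -dirDeriv (0, 1) u x * hcs

lemma levelField_frame (hcs : c ^ 2 + s ^ 2 = 1) (u : ℝ × ℝ → ℝ) (x : ℝ × ℝ) :
    levelField u x = dirDeriv (-s, c) u x • (c, s) + (-dirDeriv (c, s) u x) • (-s, c) := by
  have h := gradient_frame hcs u x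
  simp only [Prod.ext_iff, Prod.smul_mk, Prod.mk_add_mk, smul_eq_mul] at h
  rw [levelField, h.1, h.2]
  ext <;> simp only [smul_eq_mul, Prod.smul_mk, Prod.mk_add_mk] <;> ring

lemma ellipticOp_levelField_frame (hcs : c ^ 2 + s ^ 2 = 1) (hf : ContDiffAt ℝ 2 f x)
    (u : ℝ × ℝ → ℝ) :
    ellipticOp (levelField u x) 0 f x
      = (1 + dirDeriv (-s, c) u x ^ 2) * dirDeriv (c, s) (dirDeriv (c, s) f) x
        - 2 * (dirDeriv (c, s) u x * dirDeriv (-s, c) u x * dirDeriv (-s, c) (dirDeriv (c, s) f) x)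
        + (1 + dirDeriv (c, s) u x ^ 2) * dirDeriv (-s, c) (dirDeriv (-s, c) f) x := by
  have h0 : dirDeriv (0 : ℝ × ℝ) f x = 0 := map_zero _
  rw [ellipticOp, h0, ← laplacian_frame hcs hf, levelField_frame hcs,
    dirDeriv_dirDeriv_smul_add_smul hf]
  simp only [smul_eq_mul]
  ring

lemma exists_frame (u : ℝ × ℝ → ℝ) (x : ℝ × ℝ) :
    ∃ c s : ℝ, c ^ 2 + s ^ 2 = 1 ∧ dirDeriv (-s, c) u x = 0 := by
  simp only [dirDeriv_pair u x (-_) _, smul_eq_mul]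
  generalize dirDeriv (1, 0) u x = a, dirDeriv (0, 1) u x = b
  by_cases h : a = 0 ∧ b = 0
  · exact ⟨1, 0, by norm_num, by simp [h]⟩
  · have hpos : 0 < a ^ 2 + b ^ 2 := by
      rcases not_and_or.1 h with h | h <;> positivity
    have hs := Real.sq_sqrt hpos.le
    refine ⟨a / √(a ^ 2 + b ^ 2), b / √(a ^ 2 + b ^ 2), ?_, by ring⟩
    rw [div_pow, div_pow, hs]; field_simp

end Frame

section LevelFrame

variable {H c s : ℝ} {f u : ℝ × ℝ → ℝ} {x : ℝ × ℝ}

lemma graphLaplacian_frame (hcs : c ^ 2 + s ^ 2 = 1) (hq : dirDeriv (-s, c) u x = 0)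
    (hf : ContDiffAt ℝ 2 f x) :
    graphLaplacian H u f x = dirDeriv (c, s) (dirDeriv (c, s) f) x
      + Wgraph u x ^ 2 * dirDeriv (-s, c) (dirDeriv (-s, c) f) x
      - 2 * H * Wgraph u x * dirDeriv (c, s) u x * dirDeriv (c, s) f x := by
  have hop := ellipticOp_levelField_frame hcs hf u
  have hdrift : graphLaplacian H u f x = ellipticOp (levelField u x) 0 f x
      + -2 * H * Wgraph u x * dirDeriv (c, s) u x * dirDeriv (c, s) f x := by
    have h0 : dirDeriv (0 : ℝ × ℝ) f x = 0 := map_zero _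
    have hdir : dirDeriv ((-2 * H * Wgraph u x) • (dirDeriv (c, s) u x • (c, s))) f x
        = -2 * H * Wgraph u x * dirDeriv (c, s) u x * dirDeriv (c, s) f x := by
      simp only [dirDeriv, map_smul, smul_eq_mul, mul_assoc]
    rw [graphLaplacian, gradient_frame hcs, hq, zero_smul, add_zero, ellipticOp, ellipticOp, hdir,
      h0, add_zero]
  rw [hdrift, hop, Wgraph_sq_frame hcs, hq]
  ring

lemma gradSq_levelField_frame (hcs : c ^ 2 + s ^ 2 = 1) (hq : dirDeriv (-s, c) u x = 0) :
    gradSq (levelField u x) f x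
      = dirDeriv (c, s) f x ^ 2 + Wgraph u x ^ 2 * dirDeriv (-s, c) f x ^ 2 := by
  have h := Wgraph_sq_frame hcs f x
  rw [Wgraph_sq] at h
  rw [gradSq, levelField_frame hcs, dirDeriv_smul_add_smul, Wgraph_sq_frame hcs u, hq]
  simp only [Real.norm_eq_abs, sq_abs, smul_eq_mul]
  linarith

end LevelFrame

section FundamentalIdentities

variable {H : ℝ} {U : Set (ℝ × ℝ)} {u : ℝ × ℝ → ℝ} {x : ℝ × ℝ}

lemma ellipticOp_levelField_eq (hu : IsSmoothCMCSolution H U u) (hU : IsOpen U) (hx : x ∈ U) :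
    ellipticOp (levelField u x) 0 u x = 2 * H * Wgraph u x ^ 3 := by
  have hu2 : ContDiffAt ℝ 2 u x := contDiffAt_two hU hu.1 hx
  have hop := ellipticOp_levelField_frame (c := 1) (s := 0) (by norm_num) hu2 u
  have hpow : Wgraph u x ^ 3 = (1 + pdx u x ^ 2 + pdy u x ^ 2) ^ ((3 : ℝ) / 2) := by
    rw [Wgraph, Real.sqrt_eq_rpow, ← Real.rpow_natCast, ← Real.rpow_mul (by positivity)]
    norm_num
  rw [neg_zero] at hop
  rw [hop, hpow, ← hu.2 x hx]
  simp only [← mul_assoc]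
  rfl

section Line

variable {Fp Fq Fr Fs Ft Fw FX : ℝ → ℝ} {p p₁ p₂ q₁ q₂ r r₁ r₂ s s₁ s₂ t t₁ t₂ w w₁ w₂ : ℝ}

lemma HasJet₂.area_eqs (hp : HasJet₂ Fp p p₁ p₂) (hq : HasJet₂ Fq 0 q₁ q₂) (hw : HasJet₂ Fw w w₁ w₂)
    (hW : ∀ᶠ τ in 𝓝 0, Fw τ * Fw τ = 1 + Fp τ * Fp τ + Fq τ * Fq τ) :
    w ^ 2 = 1 + p ^ 2 ∧ w * w₁ = p * p₁ ∧ w₁ ^ 2 + w * w₂ = p₁ ^ 2 + p * p₂ + q₁ ^ 2 := by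
  obtain ⟨h₀, h₁, h₂⟩ := ((hw.mul hw).congr (EventuallyEq.symm hW)).unique
    (((HasJet₂.const 1).add (hp.mul hp)).add (hq.mul hq))
  exact ⟨by linear_combination h₀, by linear_combination h₁ / 2, by linear_combination h₂ / 2⟩

lemma HasJet₂.cmc_eqs {H : ℝ} (hp : HasJet₂ Fp p p₁ p₂) (hq : HasJet₂ Fq 0 q₁ q₂)
    (hr : HasJet₂ Fr r r₁ r₂) (hs : HasJet₂ Fs s s₁ s₂) (ht : HasJet₂ Ft t t₁ t₂)
    (hw : HasJet₂ Fw w w₁ w₂)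
    (hE : ∀ᶠ τ in 𝓝 0, (1 + Fq τ * Fq τ) * Fr τ - 2 * (Fp τ * Fq τ * Fs τ)
      + (1 + Fp τ * Fp τ) * Ft τ = 2 * H * (Fw τ * (Fw τ * Fw τ))) :
    r + (1 + p ^ 2) * t = 2 * H * w ^ 3 ∧
    r₁ - 2 * p * q₁ * s + (1 + p ^ 2) * t₁ + 2 * p * p₁ * t = 6 * H * w ^ 2 * w₁ ∧
    r₂ + 2 * q₁ ^ 2 * r - 2 * (2 * p₁ * q₁ * s + p * q₂ * s + 2 * p * q₁ * s₁) + (1 + p ^ 2) * t₂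
      + 4 * p * p₁ * t₁ + (2 * p₁ ^ 2 + 2 * p * p₂) * t
      = 2 * H * (3 * w ^ 2 * w₂ + 6 * w * w₁ ^ 2) := by
  obtain ⟨h₀, h₁, h₂⟩ := ((((((HasJet₂.const 1).add (hq.mul hq)).mul hr).sub
    (((hp.mul hq).mul hs).const_mul 2)).add (((HasJet₂.const 1).add (hp.mul hp)).mul ht))).unique
      (((hw.mul (hw.mul hw)).const_mul (2 * H)).congr hE)
  exact ⟨by linear_combination h₀, by linear_combination h₁, by linear_combination h₂⟩

lemma HasJet₂.umbilicity (H : ℝ) (hr : HasJet₂ Fr r r₁ r₂) (hs : HasJet₂ Fs s s₁ s₂)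
    (ht : HasJet₂ Ft t t₁ t₂) (hw : HasJet₂ Fw w w₁ w₂) :
    HasJet₂ (fun τ => H ^ 2 * ((Fw τ * Fw τ) * (Fw τ * Fw τ)) - (Fr τ * Ft τ - Fs τ * Fs τ))
      (H ^ 2 * w ^ 4 - (r * t - s ^ 2)) (4 * H ^ 2 * w ^ 3 * w₁ - (r₁ * t + r * t₁ - 2 * s * s₁))
      (H ^ 2 * (4 * w ^ 3 * w₂ + 12 * w ^ 2 * w₁ ^ 2)
        - (r₂ * t + 2 * r₁ * t₁ + r * t₂ - 2 * s₁ ^ 2 - 2 * s * s₂)) :=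
  ((((hw.mul hw).mul (hw.mul hw)).const_mul (H ^ 2)).sub ((hr.mul ht).sub (hs.mul hs))).congr_jet
    (by ring) (by ring) (by ring)

end Line

lemma exists_hasJet₂_frame (hU : IsOpen U) (hu : ContDiffOn ℝ ∞ u U) (hx : x ∈ U) (e e' : ℝ × ℝ) :
    ∃ a b c d e₀ e₁ e₂ e₃ e₄ : ℝ, ∀ v w : ℝ,
      HasJet₂ (fun t : ℝ => dirDeriv e u (x + t • (v • e + w • e'))) (dirDeriv e u x)
        (v * dirDeriv e (dirDeriv e u) x + w * dirDeriv e' (dirDeriv e u) x)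
        (v ^ 2 * a + 2 * v * w * b + w ^ 2 * c) ∧
      HasJet₂ (fun t : ℝ => dirDeriv e' u (x + t • (v • e + w • e'))) (dirDeriv e' u x)
        (v * dirDeriv e' (dirDeriv e u) x + w * dirDeriv e' (dirDeriv e' u) x)
        (v ^ 2 * b + 2 * v * w * c + w ^ 2 * d) ∧
      HasJet₂ (fun t : ℝ => dirDeriv e (dirDeriv e u) (x + t • (v • e + w • e')))
        (dirDeriv e (dirDeriv e u) x) (v * a + w * b)
        (v ^ 2 * e₀ + 2 * v * w * e₁ + w ^ 2 * e₂) ∧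
      HasJet₂ (fun t : ℝ => dirDeriv e' (dirDeriv e u) (x + t • (v • e + w • e')))
        (dirDeriv e' (dirDeriv e u) x) (v * b + w * c)
        (v ^ 2 * e₁ + 2 * v * w * e₂ + w ^ 2 * e₃) ∧
      HasJet₂ (fun t : ℝ => dirDeriv e' (dirDeriv e' u) (x + t • (v • e + w • e')))
        (dirDeriv e' (dirDeriv e' u) x) (v * c + w * d)
        (v ^ 2 * e₂ + 2 * v * w * e₃ + w ^ 2 * e₄) := by
  have hD : ∀ {f : ℝ × ℝ → ℝ}, ContDiffOn ℝ ∞ f U → ∀ v, ContDiffOn ℝ ∞ (dirDeriv v f) U :=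
    fun hf => contDiffOn_dirDeriv hU hf
  have hjet : ∀ {f : ℝ × ℝ → ℝ}, ContDiffOn ℝ ∞ f U → ∀ v w : ℝ,
      HasJet₂ (fun t : ℝ => f (x + t • (v • e + w • e'))) (f x) _ _ := fun hf =>
    hasJet₂_frame (contDiffAt_two hU hf hx) e e'
  have hcomm : ∀ {f : ℝ × ℝ → ℝ}, ContDiffOn ℝ ∞ f U → ∀ y ∈ U,
      dirDeriv e (dirDeriv e' f) y = dirDeriv e' (dirDeriv e f) y := fun hf y hy =>
    dirDeriv_comm (contDiffAt_two hU hf hy)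
  have hcongr : ∀ {f g : ℝ × ℝ → ℝ}, (∀ y ∈ U, f y = g y) → ∀ v, ∀ y ∈ U,
      dirDeriv v f y = dirDeriv v g y := fun h v y hy =>
    dirDeriv_congr (eventually_of_mem (hU.mem_nhds hy) h)
  have hp := hD hu e
  have hq := hD hu e'
  have hq₁ := hcomm hu
  have hs₁ := hcomm hp
  have ht₁ : ∀ y ∈ U, dirDeriv e (dirDeriv e' (dirDeriv e' u)) y
      = dirDeriv e' (dirDeriv e' (dirDeriv e u)) y := fun y hy => by
    rw [hcomm hq y hy]; exact hcongr hq₁ e' y hy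
  refine ⟨dirDeriv e (dirDeriv e (dirDeriv e u)) x, dirDeriv e' (dirDeriv e (dirDeriv e u)) x,
    dirDeriv e' (dirDeriv e' (dirDeriv e u)) x, dirDeriv e' (dirDeriv e' (dirDeriv e' u)) x,
    dirDeriv e (dirDeriv e (dirDeriv e (dirDeriv e u))) x,
    dirDeriv e' (dirDeriv e (dirDeriv e (dirDeriv e u))) x,
    dirDeriv e' (dirDeriv e' (dirDeriv e (dirDeriv e u))) x,
    dirDeriv e' (dirDeriv e' (dirDeriv e' (dirDeriv e u))) x,
    dirDeriv e' (dirDeriv e' (dirDeriv e' (dirDeriv e' u))) x, fun v w =>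
    ⟨hjet hp v w, ?_, hjet (hD hp e) v w, ?_, ?_⟩⟩
  · refine (hjet hq v w).congr_jet rfl (by rw [hq₁ x hx]; rfl) ?_
    rw [hcongr hq₁ e x hx, hcongr hq₁ e' x hx, hs₁ x hx]; rfl
  · refine (hjet (hD hp e') v w).congr_jet rfl (by rw [hs₁ x hx]; rfl) ?_
    rw [hcongr hs₁ e x hx, hcongr hs₁ e' x hx, hcomm (hD hp e) x hx]; rfl
  · refine (hjet (hD hq e') v w).congr_jet rfl (by rw [ht₁ x hx]; rfl) ?_
    rw [hcongr ht₁ e x hx, hcongr ht₁ e' x hx, hcomm (hD hp e') x hx, hcongr hs₁ e' x hx]; rfl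

lemma exists_adaptedJet_frame {c s : ℝ} (hcs : c ^ 2 + s ^ 2 = 1) (hU : IsOpen U)
    (hu : IsSmoothCMCSolution H U u) (hx : x ∈ U) (hq : dirDeriv (-s, c) u x = 0) :
    ∃ j : AdaptedJet H, j.W = Wgraph u x ∧ j.p = dirDeriv (c, s) u x ∧
      j.w₁ = dirDeriv (c, s) (Wgraph u) x ∧ j.w₂ = dirDeriv (-s, c) (Wgraph u) x ∧
      j.w₁₁ = dirDeriv (c, s) (dirDeriv (c, s) (Wgraph u)) x ∧
      j.w₂₂ = dirDeriv (-s, c) (dirDeriv (-s, c) (Wgraph u)) x ∧ j.x = umbilicity H u x ∧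
      j.x₁ = dirDeriv (c, s) (umbilicity H u) x ∧ j.x₂ = dirDeriv (-s, c) (umbilicity H u) x ∧
      j.x₁₁ = dirDeriv (c, s) (dirDeriv (c, s) (umbilicity H u)) x ∧
      j.x₂₂ = dirDeriv (-s, c) (dirDeriv (-s, c) (umbilicity H u)) x := by
  obtain ⟨a, b, k, d, e₀, e₁, e₂, e₃, e₄, hjet⟩ := exists_hasJet₂_frame hU hu.1 hx (c, s) (-s, c)
  rw [hq] at hjet
  have hWjet := hasJet₂_frame (contDiffAt_two hU (contDiffOn_Wgraph hU hu.1) hx) (c, s) (-s, c)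
  have hXjet := hasJet₂_frame (contDiffAt_two hU (contDiffOn_umbilicity (H := H) hU hu.1) hx)
    (c, s) (-s, c)
  simp only [smul_eq_mul] at hWjet hXjet
  have hline : ∀ v w : ℝ, ∀ᶠ t : ℝ in 𝓝 0, x + t • (v • (c, s) + w • (-s, c)) ∈ U := fun v w =>
    eventually_add_smul (hU.mem_nhds hx) _
  have harea := fun v w : ℝ => (hjet v w).1.area_eqs (hjet v w).2.1 (hWjet v w)
    ((hline v w).mono fun t _ => by linear_combination Wgraph_sq_frame hcs u _)
  have hcmc := fun v w : ℝ => (hjet v w).1.cmc_eqs (H := H) (hjet v w).2.1 (hjet v w).2.2.1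
    (hjet v w).2.2.2.1 (hjet v w).2.2.2.2 (hWjet v w) ((hline v w).mono fun t ht => by
      linear_combination ellipticOp_levelField_eq hu hU ht
        - ellipticOp_levelField_frame hcs (contDiffAt_two hU hu.1 ht) u)
  have hX := fun v w : ℝ => (hXjet v w).unique (((hjet v w).2.2.1.umbilicity H (hjet v w).2.2.2.1
    (hjet v w).2.2.2.2 (hWjet v w)).congr ((hline v w).mono fun t ht => by
      dsimp only
      rw [umbilicity, ← hessianDet_frame hcs (contDiffAt_two hU hu.1 ht)]; ring))
  refine ⟨{
    W := Wgraph u x, p := dirDeriv (c, s) u x, a, b, c := k, d, e₀, e₁, e₂, e₃, e₄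
    r := dirDeriv (c, s) (dirDeriv (c, s) u) x, s := dirDeriv (-s, c) (dirDeriv (c, s) u) x
    t := dirDeriv (-s, c) (dirDeriv (-s, c) u) x, w₁ := dirDeriv (c, s) (Wgraph u) x
    w₂ := dirDeriv (-s, c) (Wgraph u) x, w₁₁ := dirDeriv (c, s) (dirDeriv (c, s) (Wgraph u)) x
    w₁₂ := dirDeriv (-s, c) (dirDeriv (c, s) (Wgraph u)) x
    w₂₂ := dirDeriv (-s, c) (dirDeriv (-s, c) (Wgraph u)) x
    W_pos := Wgraph_pos u x
    W_sq := (harea 0 0).1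
    W_sq_deriv := fun v w => (harea v w).2.1
    W_sq_deriv_deriv := fun v w => (harea v w).2.2
    cmc := (hcmc 0 0).1
    cmc_deriv := fun v w => (hcmc v w).2.1
    cmc_deriv_deriv := fun v w => (hcmc v w).2.2 },
    rfl, rfl, rfl, rfl, rfl, rfl, ?_, ?_, ?_, ?_, ?_⟩
  · exact (hX 0 0).1.symm
  · unfold AdaptedJet.x₁; linear_combination -(hX 1 0).2.1
  · unfold AdaptedJet.x₂; linear_combination -(hX 0 1).2.1
  · unfold AdaptedJet.x₁₁; linear_combination -(hX 1 0).2.2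
  · unfold AdaptedJet.x₂₂; linear_combination -(hX 0 1).2.2

theorem exists_adaptedJet (hU : IsOpen U) (hu : IsSmoothCMCSolution H U u) (hx : x ∈ U) :
    ∃ j : AdaptedJet H, j.W = Wgraph u x ∧ j.x = umbilicity H u x ∧
      graphLaplacian H u (Wgraph u) x = j.w₁₁ + j.W ^ 2 * j.w₂₂ - 2 * H * j.W * j.p * j.w₁ ∧
      gradSq (levelField u x) (Wgraph u) x = j.w₁ ^ 2 + j.W ^ 2 * j.w₂ ^ 2 ∧
      graphLaplacian H u (umbilicity H u) x
        = j.x₁₁ + j.W ^ 2 * j.x₂₂ - 2 * H * j.W * j.p * j.x₁ ∧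
      gradSq (levelField u x) (umbilicity H u) x = j.x₁ ^ 2 + j.W ^ 2 * j.x₂ ^ 2 := by
  obtain ⟨c, s, hcs, hq⟩ := exists_frame u x
  obtain ⟨j, hW, hp, hw₁, hw₂, hw₁₁, hw₂₂, hX, hx₁, hx₂, hx₁₁, hx₂₂⟩ :=
    exists_adaptedJet_frame hcs hU hu hx hq
  refine ⟨j, hW, hX, ?_⟩
  rw [graphLaplacian_frame hcs hq (contDiffAt_two hU (contDiffOn_Wgraph hU hu.1) hx),
    graphLaplacian_frame hcs hq (contDiffAt_two hU (contDiffOn_umbilicity hU hu.1) hx),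
    gradSq_levelField_frame hcs hq, gradSq_levelField_frame hcs hq,
    hW, hp, hw₁, hw₂, hw₁₁, hw₂₂, hx₁, hx₂, hx₁₁, hx₂₂]
  exact ⟨rfl, rfl, rfl, rfl⟩

/-- The Jacobi equation satisfied by the third component `1/W` of the unit normal. -/
theorem Wgraph_jacobi (hU : IsOpen U) (hu : IsSmoothCMCSolution H U u) (hx : x ∈ U) :
    Wgraph u x * graphLaplacian H u (Wgraph u) x - 2 * gradSq (levelField u x) (Wgraph u) x
      = 2 * H ^ 2 * Wgraph u x ^ 4 + 2 * umbilicity H u x := by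
  obtain ⟨j, hW, hX, hΔW, hΓW, -, -⟩ := exists_adaptedJet hU hu hx
  rw [← hW, ← hX, hΔW, hΓW, j.jacobi]

/-- Simons' equation `Δ log (H² - K) = 4 * K`. -/
theorem umbilicity_simons (hU : IsOpen U) (hu : IsSmoothCMCSolution H U u) (hx : x ∈ U) :
    Wgraph u x ^ 2 * (umbilicity H u x * graphLaplacian H u (umbilicity H u) x
        - gradSq (levelField u x) (umbilicity H u) x)
      = 4 * umbilicity H u x ^ 2 * (3 * H ^ 2 * Wgraph u x ^ 4 + umbilicity H u x
        + gradSq (levelField u x) (Wgraph u) x) := by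
  obtain ⟨j, hW, hX, -, hΓW, hΔX, hΓX⟩ := exists_adaptedJet hU hu hx
  rw [← hW, ← hX, hΓW, hΔX, hΓX, j.simons]

theorem le_gradSq_Wgraph (hU : IsOpen U) (hu : IsSmoothCMCSolution H U u) (hx : x ∈ U) :
    (Wgraph u x ^ 2 - 1) * (5 / 6 * umbilicity H u x - 5 * H ^ 2 * Wgraph u x ^ 4)
      ≤ gradSq (levelField u x) (Wgraph u) x := by
  obtain ⟨j, hW, hX, -, hΓW, -, -⟩ := exists_adaptedJet hU hu hx
  rw [← hW, ← hX, hΓW]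
  exact j.gradient_lower

end FundamentalIdentities

section CurvatureEstimate

variable {H R : ℝ} {U : Set (ℝ × ℝ)} {u : ℝ × ℝ → ℝ} {x z : ℝ × ℝ}

/-- The function `(1 + 1/W)⁻⁶ (H² - K)`, to which the maximum principle is applied. -/
def dampedUmbilicity (H : ℝ) (u : ℝ × ℝ → ℝ) (x : ℝ × ℝ) : ℝ :=
  umbilicity H u x * Wgraph u x ^ 2 / (1 + Wgraph u x) ^ 6

lemma contDiffOn_dampedUmbilicity (hU : IsOpen U) (hu : ContDiffOn ℝ ∞ u U) :
    ContDiffOn ℝ ∞ (dampedUmbilicity H u) U := by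
  have hW := contDiffOn_Wgraph hU hu
  refine ((contDiffOn_umbilicity hU hu).mul (hW.pow 2)).div ((contDiffOn_const.add hW).pow 6)
    fun y _ => ?_
  have := Wgraph_pos u y
  positivity

lemma graphLaplacian_log_dampedUmbilicity (hU : IsOpen U) (hu : ContDiffOn ℝ ∞ u U) (hx : x ∈ U)
    (hX : 0 < umbilicity H u x) :
    graphLaplacian H u (fun y => Real.log (dampedUmbilicity H u y)) x
      = graphLaplacian H u (umbilicity H u) x / umbilicity H u x
          - gradSq (levelField u x) (umbilicity H u) x / umbilicity H u x ^ 2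
        + 2 * (graphLaplacian H u (Wgraph u) x / Wgraph u x
          - gradSq (levelField u x) (Wgraph u) x / Wgraph u x ^ 2)
        + -6 * (graphLaplacian H u (Wgraph u) x / (1 + Wgraph u x)
          - gradSq (levelField u x) (Wgraph u) x / (1 + Wgraph u x) ^ 2) := by
  have hW := contDiffAt_two hU (contDiffOn_Wgraph hU hu) hx
  have hXs := contDiffAt_two hU (contDiffOn_umbilicity (H := H) hU hu) hx
  have hWx := Wgraph_pos u x
  have hWx' : 0 < 1 + Wgraph u x := by positivity
  have hW' : ContDiffAt ℝ 2 (fun y => 1 + Wgraph u y) x := contDiffAt_const.add hW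
  have hlogX := hXs.log hX.ne'
  have hlogW := hW.log hWx.ne'
  have hlogW' := hW'.log hWx'.ne'
  have hlog : (fun y => Real.log (dampedUmbilicity H u y)) =ᶠ[𝓝 x] fun y =>
      Real.log (umbilicity H u y) + 2 * Real.log (Wgraph u y)
        + -6 * Real.log (1 + Wgraph u y) := by
    filter_upwards [hXs.continuousAt.eventually (lt_mem_nhds hX)] with y hy
    have hWy := Wgraph_pos u y
    rw [dampedUmbilicity, Real.log_div (by positivity) (by positivity),
      Real.log_mul hy.ne' (by positivity), Real.log_pow, Real.log_pow]
    push_cast; ring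
  unfold graphLaplacian
  rw [ellipticOp_congr hlog,
    ellipticOp_add (hlogX.add (contDiffAt_const.mul hlogW)) (contDiffAt_const.mul hlogW'),
    ellipticOp_add hlogX (contDiffAt_const.mul hlogW), ellipticOp_const_mul hlogW,
    ellipticOp_const_mul hlogW', ellipticOp_log hXs hX, ellipticOp_log hW hWx,
    ellipticOp_log hW' hWx', ellipticOp_const_add, gradSq_const_add]

theorem le_graphLaplacian_log_dampedUmbilicity (hU : IsOpen U) (hu : IsSmoothCMCSolution H U u)
    (hx : x ∈ U) (hX : 0 < umbilicity H u x) :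
    umbilicity H u x - 26 * H ^ 2 * Wgraph u x ^ 4
      ≤ Wgraph u x ^ 2 * graphLaplacian H u (fun y => Real.log (dampedUmbilicity H u y)) x := by
  have hJ := Wgraph_jacobi hU hu hx
  have hS := umbilicity_simons hU hu hx
  have hΓ := le_gradSq_Wgraph hU hu hx
  rw [graphLaplacian_log_dampedUmbilicity hU hu.1 hx hX]
  have hW := one_le_Wgraph u x
  generalize Wgraph u x = W, umbilicity H u x = X, gradSq (levelField u x) (Wgraph u) x = Γ,
    graphLaplacian H u (Wgraph u) x = L, gradSq (levelField u x) (umbilicity H u) x = ΓX,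
    graphLaplacian H u (umbilicity H u) x = LX at *
  have hW0 : 0 < W := by linarith
  have hL : L = (2 * H ^ 2 * W ^ 4 + 2 * X + 2 * Γ) / W := by
    rw [eq_div_iff hW0.ne']; linarith
  have hLX : LX = (4 * X ^ 2 * (3 * H ^ 2 * W ^ 4 + X + Γ) / W ^ 2 + ΓX) / X := by
    rw [eq_div_iff hX.ne', ← sub_eq_iff_eq_add, eq_div_iff (by positivity)]; linarith
  have hsum : W ^ 2 * (LX / X - ΓX / X ^ 2 + 2 * (L / W - Γ / W ^ 2)
        + -6 * (L / (1 + W) - Γ / (1 + W) ^ 2))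
      = 4 * (H ^ 2 * W ^ 4 - X) + 12 * (H ^ 2 * W ^ 4 + X) / (1 + W) + 6 * Γ / (1 + W) ^ 2 := by
    rw [hL, hLX]; field_simp; ring
  calc X - 26 * H ^ 2 * W ^ 4
      ≤ X - 26 * H ^ 2 * W ^ 4 + (2 * X + 72 * H ^ 2 * W ^ 4) / (1 + W) :=
        le_add_of_nonneg_right (by positivity)
    _ = 4 * (H ^ 2 * W ^ 4 - X) + 12 * (H ^ 2 * W ^ 4 + X) / (1 + W)
        + 6 * ((W ^ 2 - 1) * (5 / 6 * X - 5 * H ^ 2 * W ^ 4)) / (1 + W) ^ 2 := by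
        field_simp; ring
    _ ≤ 4 * (H ^ 2 * W ^ 4 - X) + 12 * (H ^ 2 * W ^ 4 + X) / (1 + W) + 6 * Γ / (1 + W) ^ 2 := by
        gcongr
    _ = _ := hsum.symm

lemma enorm2_nonneg (p : ℝ × ℝ) : 0 ≤ enorm2 p := Real.sqrt_nonneg _

lemma enorm2_levelField_sq (u : ℝ × ℝ → ℝ) (x : ℝ × ℝ) :
    1 + enorm2 (levelField u x) ^ 2 = Wgraph u x ^ 2 := by
  rw [Wgraph_sq, enorm2, Real.sq_sqrt (by positivity), levelField]
  ring

lemma enorm2_drift_le (H : ℝ) (u : ℝ × ℝ → ℝ) (x : ℝ × ℝ) :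
    enorm2 ((-2 * H * Wgraph u x) • (dirDeriv (1, 0) u x, dirDeriv (0, 1) u x))
      ≤ 2 * |H| * Wgraph u x ^ 2 := by
  have hW := Wgraph_sq u x
  refine Real.sqrt_le_iff.2 ⟨by positivity, ?_⟩
  calc _ = 4 * H ^ 2 * Wgraph u x ^ 2 * (Wgraph u x ^ 2 - 1) := by
        simp only [Prod.smul_mk, smul_eq_mul]
        linear_combination -4 * H ^ 2 * Wgraph u x ^ 2 * hW
    _ ≤ 4 * H ^ 2 * Wgraph u x ^ 2 * Wgraph u x ^ 2 := by gcongr; linarith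
    _ = _ := by rw [mul_pow, mul_pow, sq_abs]; ring

/-- The constant of the interior curvature estimate at distance `R` from the boundary. -/
def curvatureBound (H R : ℝ) : ℝ := 64 * (26 * H ^ 2 + (16 + 8 * R * |H|) / R ^ 2)

lemma dampedUmbilicity_mul_le (hX : 0 ≤ umbilicity H u x) :
    dampedUmbilicity H u x * Wgraph u x ^ 4 ≤ umbilicity H u x := by
  have hW := Wgraph_pos u x
  calc dampedUmbilicity H u x * Wgraph u x ^ 4
      = umbilicity H u x * (Wgraph u x / (1 + Wgraph u x)) ^ 6 := by
        rw [dampedUmbilicity, div_pow]; ring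
    _ ≤ umbilicity H u x * 1 := by
        gcongr
        exact pow_le_one₀ (by positivity) ((div_le_one (by positivity)).2 (by linarith))
    _ = _ := mul_one _

lemma le_dampedUmbilicity_mul (hX : 0 ≤ umbilicity H u x) :
    umbilicity H u x ≤ 64 * dampedUmbilicity H u x * Wgraph u x ^ 4 := by
  have hW := one_le_Wgraph u x
  have hhalf : 1 / 2 ≤ Wgraph u x / (1 + Wgraph u x) := by
    rw [div_le_div_iff₀] <;> linarith
  calc umbilicity H u x = umbilicity H u x * (1 / 2) ^ 6 * 64 := by ring
    _ ≤ umbilicity H u x * (Wgraph u x / (1 + Wgraph u x)) ^ 6 * 64 := by gcongr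
    _ = _ := by rw [dampedUmbilicity, div_pow]; ring

lemma graphLaplacian_maximum_bound {η : ℝ} (hR : 0 ≤ R) (hη : η ≤ R ^ 2) (H : ℝ) (u : ℝ × ℝ → ℝ)
    (x : ℝ × ℝ) :
    4 * η * (2 + enorm2 (levelField u x) ^ 2
        + R * enorm2 ((-2 * H * Wgraph u x) • (dirDeriv (1, 0) u x, dirDeriv (0, 1) u x)))
      + 8 * R ^ 2 * (1 + enorm2 (levelField u x) ^ 2)
      ≤ (16 + 8 * R * |H|) * R ^ 2 * Wgraph u x ^ 2 := by
  have hdrift := enorm2_drift_le H u x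
  have hdrift0 := enorm2_nonneg ((-2 * H * Wgraph u x) • (dirDeriv (1, 0) u x, dirDeriv (0, 1) u x))
  have hτ : 2 + enorm2 (levelField u x) ^ 2 ≤ 2 * Wgraph u x ^ 2 := by
    nlinarith [enorm2_levelField_sq u x, one_le_Wgraph u x]
  rw [enorm2_levelField_sq]
  calc _ ≤ 4 * R ^ 2 * (2 * Wgraph u x ^ 2 + R * (2 * |H| * Wgraph u x ^ 2))
          + 8 * R ^ 2 * Wgraph u x ^ 2 := by gcongr
    _ = _ := by ring

lemma dampedUmbilicity_le (hR : 0 < R) (hU : IsOpen U) (hu : IsSmoothCMCSolution H U u)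
    (hDU : {y | 0 ≤ cutoff R z y} ⊆ U) :
    dampedUmbilicity H u z ≤ 26 * H ^ 2 + (16 + 8 * R * |H|) / R ^ 2 := by
  rcases le_or_gt (dampedUmbilicity H u z) 0 with hz | hz
  · exact hz.trans (by positivity)
  obtain ⟨x, hxU, hη, hgx, hgz, hmax, -⟩ := exists_cutoff_maximum hR hU hDU
    ((contDiffOn_dampedUmbilicity (H := H) hU hu.1).of_le ENat.LEInfty.out) hz
  have hW := Wgraph_pos u x
  have hX : 0 < umbilicity H u x := by
    by_contra! h
    refine hgx.not_ge (div_nonpos_of_nonpos_of_nonneg ?_ (by positivity))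
    exact mul_nonpos_of_nonpos_of_nonneg h (by positivity)
  have hlower := mul_le_mul_of_nonneg_left (le_graphLaplacian_log_dampedUmbilicity hU hu hxU hX)
    (sq_nonneg (cutoff R z x))
  have hupper : Wgraph u x ^ 2 * (cutoff R z x ^ 2
        * graphLaplacian H u (fun y => Real.log (dampedUmbilicity H u y)) x)
      ≤ Wgraph u x ^ 2 * ((16 + 8 * R * |H|) * R ^ 2 * Wgraph u x ^ 2) :=
    mul_le_mul_of_nonneg_left
      ((hmax _ _).trans (graphLaplacian_maximum_bound hR.le cutoff_le H u x)) (sq_nonneg _)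
  have hηX : cutoff R z x ^ 2 * umbilicity H u x
      ≤ R ^ 4 * (26 * H ^ 2 + (16 + 8 * R * |H|) / R ^ 2) * Wgraph u x ^ 4 :=
    calc _ ≤ cutoff R z x ^ 2 * (26 * H ^ 2 * Wgraph u x ^ 4)
          + (16 + 8 * R * |H|) * R ^ 2 * Wgraph u x ^ 4 := by linarith
      _ ≤ (R ^ 2) ^ 2 * (26 * H ^ 2 * Wgraph u x ^ 4)
          + (16 + 8 * R * |H|) * R ^ 2 * Wgraph u x ^ 4 := by
        gcongr
        exact cutoff_le
      _ = _ := by field_simp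
  refine le_of_mul_le_mul_left ?_ (show 0 < R ^ 4 * Wgraph u x ^ 4 by positivity)
  calc R ^ 4 * Wgraph u x ^ 4 * dampedUmbilicity H u z
      = R ^ 4 * dampedUmbilicity H u z * Wgraph u x ^ 4 := by ring
    _ ≤ cutoff R z x ^ 2 * dampedUmbilicity H u x * Wgraph u x ^ 4 := by gcongr
    _ = cutoff R z x ^ 2 * (dampedUmbilicity H u x * Wgraph u x ^ 4) := by ring
    _ ≤ cutoff R z x ^ 2 * umbilicity H u x := by
      gcongr
      exact dampedUmbilicity_mul_le hX.le
    _ ≤ _ := by linarith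

theorem umbilicity_le (hR : 0 < R) (hU : IsOpen U) (hu : IsSmoothCMCSolution H U u)
    (hDU : {y | 0 ≤ cutoff R z y} ⊆ U) :
    umbilicity H u z ≤ curvatureBound H R * Wgraph u z ^ 4 := by
  have hW := Wgraph_pos u z
  rcases le_or_gt (umbilicity H u z) 0 with hX | hX
  · exact hX.trans (by unfold curvatureBound; positivity)
  calc umbilicity H u z ≤ 64 * dampedUmbilicity H u z * Wgraph u z ^ 4 :=
        le_dampedUmbilicity_mul hX.le
    _ ≤ _ := by
        unfold curvatureBound
        gcongr
        exact dampedUmbilicity_le hR hU hu hDU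

end CurvatureEstimate

section GradientPropagation

lemma opNorm_le_add {F : Type*} [NormedAddCommGroup F] [NormedSpace ℝ F] (T : ℝ × ℝ →L[ℝ] F) :
    ‖T‖ ≤ ‖T (1, 0)‖ + ‖T (0, 1)‖ := by
  refine T.opNorm_le_bound (by positivity) fun v => ?_
  have hv : v = v.1 • (1, 0) + v.2 • (0, 1) := by ext <;> simp
  calc ‖T v‖ = ‖v.1 • T (1, 0) + v.2 • T (0, 1)‖ := by
        rw [← map_smul, ← map_smul, ← map_add, ← hv]
    _ ≤ ‖v.1‖ * ‖T (1, 0)‖ + ‖v.2‖ * ‖T (0, 1)‖ := by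
        simpa only [norm_smul] using norm_add_le (v.1 • T (1, 0)) (v.2 • T (0, 1))
    _ ≤ ‖v‖ * ‖T (1, 0)‖ + ‖v‖ * ‖T (0, 1)‖ := by
        gcongr
        exacts [norm_fst_le v, norm_snd_le v]
    _ = (‖T (1, 0)‖ + ‖T (0, 1)‖) * ‖v‖ := by ring

lemma norm_dirDeriv_le {E F : Type*} [NormedAddCommGroup E] [NormedSpace ℝ E]
    [NormedAddCommGroup F] [NormedSpace ℝ F] {f : E → F} {x : E} {C : ℝ}
    (h : ‖fderiv ℝ f x‖ ≤ C) (e : E) : ‖dirDeriv e f x‖ ≤ C * ‖e‖ :=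
  (fderiv ℝ f x).le_of_opNorm_le h e

variable {E F : Type*} [NormedAddCommGroup E] [NormedSpace ℝ E] [NormedAddCommGroup F]
  [InnerProductSpace ℝ F] {w : E → F} {x z : E} {K r : ℝ}

lemma norm_fderiv_inv_one_add_norm_sq_le (hw : DifferentiableAt ℝ w x)
    (hK : ‖fderiv ℝ w x‖ ≤ K * √(1 + ‖w x‖ ^ 2) ^ 3) :
    ‖fderiv ℝ (fun y => (1 + ‖w y‖ ^ 2)⁻¹) x‖ ≤ 2 * K := by
  have hsq : √(1 + ‖w x‖ ^ 2) ^ 2 = 1 + ‖w x‖ ^ 2 := Real.sq_sqrt (by positivity)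
  have hle : ‖w x‖ ≤ √(1 + ‖w x‖ ^ 2) := Real.le_sqrt_of_sq_le (by linarith)
  have hderiv : HasFDerivAt (fun y => (1 + ‖w y‖ ^ 2)⁻¹)
      (-((1 + ‖w x‖ ^ 2) ^ 2)⁻¹ • ((2 : ℕ) • (innerSL ℝ (w x)).comp (fderiv ℝ w x))) x :=
    (hasDerivAt_inv (by positivity)).comp_hasFDerivAt x (hw.hasFDerivAt.norm_sq.const_add 1)
  rw [hderiv.fderiv]
  calc ‖-((1 + ‖w x‖ ^ 2) ^ 2)⁻¹ • ((2 : ℕ) • (innerSL ℝ (w x)).comp (fderiv ℝ w x))‖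
      ≤ ((1 + ‖w x‖ ^ 2) ^ 2)⁻¹ * (2 * (‖w x‖ * ‖fderiv ℝ w x‖)) := by
        rw [neg_smul, norm_neg, norm_smul, Real.norm_of_nonneg (by positivity),
          RCLike.norm_nsmul ℝ, ← innerSL_apply_norm ℝ (w x), nsmul_eq_mul]
        gcongr
        exacts [le_refl _, ContinuousLinearMap.opNorm_comp_le _ _]
    _ ≤ ((1 + ‖w x‖ ^ 2) ^ 2)⁻¹
          * (2 * (√(1 + ‖w x‖ ^ 2) * (K * √(1 + ‖w x‖ ^ 2) ^ 3))) := by gcongr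
    _ = 2 * K * ((√(1 + ‖w x‖ ^ 2) ^ 2) ^ 2 / (1 + ‖w x‖ ^ 2) ^ 2) := by ring
    _ = 2 * K := by rw [hsq, div_self (by positivity), mul_one]

lemma one_add_norm_sq_le_of_norm_fderiv_le (hw : ∀ y ∈ Metric.ball z r, DifferentiableAt ℝ w y)
    (hK : ∀ y ∈ Metric.ball z r, ‖fderiv ℝ w y‖ ≤ K * √(1 + ‖w y‖ ^ 2) ^ 3)
    (hr : 4 * K * r * (1 + ‖w z‖ ^ 2) ≤ 1) (hx : x ∈ Metric.ball z r) :
    1 + ‖w x‖ ^ 2 ≤ 2 * (1 + ‖w z‖ ^ 2) := by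
  have hr0 : 0 < r := dist_nonneg.trans_lt hx
  have hK0 : 0 ≤ K := nonneg_of_mul_nonneg_left
    ((norm_nonneg _).trans (hK x hx)) (pow_pos (Real.sqrt_pos.2 (by positivity)) 3)
  have hdiff : ∀ y ∈ Metric.ball z r, DifferentiableAt ℝ (fun y => (1 + ‖w y‖ ^ 2)⁻¹) y :=
    fun y hy => (((hw y hy).norm_sq ℝ).const_add 1).inv (by positivity)
  have hlip := (convex_ball z r).norm_image_sub_le_of_norm_fderiv_le hdiff
    (fun y hy => norm_fderiv_inv_one_add_norm_sq_le (hw y hy) (hK y hy)) hx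
    (Metric.mem_ball_self hr0)
  have hdrop : (1 + ‖w z‖ ^ 2)⁻¹ - (1 + ‖w x‖ ^ 2)⁻¹ ≤ (2 * (1 + ‖w z‖ ^ 2))⁻¹ :=
    calc _ ≤ 2 * K * ‖z - x‖ := (le_abs_self _).trans hlip
      _ ≤ 2 * K * r := by
        gcongr
        rw [← dist_eq_norm, dist_comm]
        exact (Metric.mem_ball.1 hx).le
      _ ≤ _ := by
        rw [← one_div, le_div_iff₀ (by positivity)]; linarith
  have hhalf : (1 + ‖w z‖ ^ 2)⁻¹ = (2 * (1 + ‖w z‖ ^ 2))⁻¹ + (2 * (1 + ‖w z‖ ^ 2))⁻¹ := by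
    field_simp; norm_num
  exact (inv_le_inv₀ (by positivity) (by positivity)).1 (by linarith)

end GradientPropagation

section InteriorGradientBound

variable {H : ℝ} {U : Set (ℝ × ℝ)} {u : ℝ × ℝ → ℝ} {x : ℝ × ℝ}

/-- The gradient of a function on the plane, as a vector of the Euclidean plane. -/
def planarGrad (u : ℝ × ℝ → ℝ) (x : ℝ × ℝ) : EuclideanSpace ℝ (Fin 2) :=
  !₂[dirDeriv (1, 0) u x, dirDeriv (0, 1) u x]

lemma contDiffOn_planarGrad (hU : IsOpen U) (hu : ContDiffOn ℝ ∞ u U) :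
    ContDiffOn ℝ ∞ (planarGrad u) U := by
  rw [contDiffOn_euclidean]
  intro i
  fin_cases i
  exacts [contDiffOn_dirDeriv hU hu (1, 0), contDiffOn_dirDeriv hU hu (0, 1)]

lemma Wgraph_sq_eq (u : ℝ × ℝ → ℝ) (x : ℝ × ℝ) : Wgraph u x ^ 2 = 1 + ‖planarGrad u x‖ ^ 2 := by
  rw [Wgraph_sq, EuclideanSpace.norm_sq_eq, Fin.sum_univ_two]
  simp [planarGrad, add_assoc]

lemma norm_dirDeriv_planarGrad_sq (hU : IsOpen U) (hu : ContDiffOn ℝ ∞ u U) (hx : x ∈ U)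
    (e : ℝ × ℝ) : ‖dirDeriv e (planarGrad u) x‖ ^ 2
      = dirDeriv e (dirDeriv (1, 0) u) x ^ 2 + dirDeriv e (dirDeriv (0, 1) u) x ^ 2 := by
  have hd := (contDiffAt_two hU (contDiffOn_planarGrad hU hu) hx).differentiableAt (by norm_num)
  have hcoord (i : Fin 2) : dirDeriv e (planarGrad u) x i = dirDeriv e (planarGrad u · i) x :=
    (dirDeriv_clm_comp (EuclideanSpace.proj (𝕜 := ℝ) i) hd e).symm
  rw [EuclideanSpace.real_norm_sq_eq, Fin.sum_univ_two, hcoord, hcoord]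
  rfl

/-- In terms of the shape operator `S`, this is `|S|² = (tr S)² - 2 det S`. -/
lemma norm_sq_dirDeriv_planarGrad_le (hU : IsOpen U) (hu : IsSmoothCMCSolution H U u)
    (hx : x ∈ U) :
    ‖dirDeriv (1, 0) (planarGrad u) x‖ ^ 2 + ‖dirDeriv (0, 1) (planarGrad u) x‖ ^ 2
      ≤ 2 * H ^ 2 * Wgraph u x ^ 6 + 2 * Wgraph u x ^ 2 * umbilicity H u x := by
  have hu2 := contDiffAt_two hU hu.1 hx
  have hcmc := ellipticOp_levelField_eq hu hU hx
  have hop := ellipticOp_levelField_frame (c := 1) (s := 0) (by norm_num) hu2 u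
  rw [hcmc, neg_zero] at hop
  have hrhs : 2 * H ^ 2 * Wgraph u x ^ 6 + 2 * Wgraph u x ^ 2 * umbilicity H u x
      = (2 * H * Wgraph u x ^ 3) ^ 2 - 2 * Wgraph u x ^ 2
        * (dirDeriv (1, 0) (dirDeriv (1, 0) u) x * dirDeriv (0, 1) (dirDeriv (0, 1) u) x
          - dirDeriv (0, 1) (dirDeriv (1, 0) u) x ^ 2) := by
    rw [umbilicity]; ring
  rw [hrhs, hop, norm_dirDeriv_planarGrad_sq hU hu.1 hx, norm_dirDeriv_planarGrad_sq hU hu.1 hx,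
    dirDeriv_comm (e := (1, 0)) (e' := (0, 1)) hu2, Wgraph_sq]
  generalize dirDeriv (1, 0) u x = p, dirDeriv (0, 1) u x = q
  generalize dirDeriv (1, 0) (dirDeriv (1, 0) u) x = r,
    dirDeriv (0, 1) (dirDeriv (1, 0) u) x = s, dirDeriv (0, 1) (dirDeriv (0, 1) u) x = t
  -- with `τ = (q, -p)` and `M` the Hessian, the difference is `2|Mτ|² + (τ·Mτ)²`
  nlinarith [sq_nonneg (q * r - p * s), sq_nonneg (q * s - p * t),
    sq_nonneg (q ^ 2 * r - 2 * p * q * s + p ^ 2 * t)]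

lemma norm_fderiv_planarGrad_le {R : ℝ} {z : ℝ × ℝ} (hR : 0 < R) (hU : IsOpen U)
    (hu : IsSmoothCMCSolution H U u) (hz : Metric.closedBall z R ⊆ U) :
    ‖fderiv ℝ (planarGrad u) z‖
      ≤ √(4 * (H ^ 2 + curvatureBound H R)) * √(1 + ‖planarGrad u z‖ ^ 2) ^ 3 := by
  have hW := Wgraph_pos u z
  have hcurv := umbilicity_le hR hU hu
    ((fun y hy => hz (dist_le_of_cutoff_nonneg hR.le hy)) : {y | 0 ≤ cutoff R z y} ⊆ U)
  have hhess := norm_sq_dirDeriv_planarGrad_le hU hu (hz (Metric.mem_closedBall_self hR.le))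
  refine (opNorm_le_add _).trans (abs_le_of_sq_le_sq' ?_ (by positivity)).2
  rw [← Wgraph_sq_eq, Real.sqrt_sq hW.le, mul_pow,
    Real.sq_sqrt (by unfold curvatureBound; positivity)]
  calc (‖dirDeriv (1, 0) (planarGrad u) z‖ + ‖dirDeriv (0, 1) (planarGrad u) z‖) ^ 2
      ≤ 2 * (‖dirDeriv (1, 0) (planarGrad u) z‖ ^ 2 + ‖dirDeriv (0, 1) (planarGrad u) z‖ ^ 2) :=
        add_sq_le
    _ ≤ 2 * (2 * H ^ 2 * Wgraph u z ^ 6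
          + 2 * Wgraph u z ^ 2 * (curvatureBound H R * Wgraph u z ^ 4)) := by
        refine mul_le_mul_of_nonneg_left (hhess.trans ?_) two_pos.le
        gcongr
    _ = _ := by ring

/-- The gradient bound propagates because `|∇(W⁻²)|` is bounded. -/
theorem exists_ball_planarGrad_le (H : ℝ) {ρ : ℝ} (hρ : 0 < ρ) (M : ℝ) :
    ∃ r > 0, ∃ C, ∀ (U : Set (ℝ × ℝ)) (u : ℝ × ℝ → ℝ) (z : ℝ × ℝ), IsOpen U →
      IsSmoothCMCSolution H U u → Metric.closedBall z ρ ⊆ U → Wgraph u z ≤ M →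
        Metric.ball z r ⊆ U ∧
        ∀ y ∈ Metric.ball z r, ‖planarGrad u y‖ ≤ C ∧ ‖fderiv ℝ (planarGrad u) y‖ ≤ C := by
  set K := √(4 * (H ^ 2 + curvatureBound H (ρ / 2)))
  refine ⟨min (ρ / 2) (1 / (4 * K * M ^ 2 + 1)), by positivity,
    max (√(2 * M ^ 2)) (K * √(2 * M ^ 2) ^ 3), fun U u z hU hu hB hz => ?_⟩
  have hball : ∀ y ∈ Metric.ball z (min (ρ / 2) (1 / (4 * K * M ^ 2 + 1))),
      Metric.closedBall y (ρ / 2) ⊆ U := fun y hy => by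
    refine (Metric.closedBall_subset_closedBall' ?_).trans hB
    linarith [(Metric.mem_ball.1 hy).trans_le (min_le_left _ _)]
  have hyU : ∀ y ∈ Metric.ball z (min (ρ / 2) (1 / (4 * K * M ^ 2 + 1))), y ∈ U := fun y hy =>
    hball y hy (Metric.mem_closedBall_self (by positivity))
  have hW2 : 1 + ‖planarGrad u z‖ ^ 2 ≤ M ^ 2 := by
    rw [← Wgraph_sq_eq]; exact pow_le_pow_left₀ (Wgraph_pos u z).le hz 2
  have hfderiv : ∀ y ∈ Metric.ball z (min (ρ / 2) (1 / (4 * K * M ^ 2 + 1))),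
      ‖fderiv ℝ (planarGrad u) y‖ ≤ K * √(1 + ‖planarGrad u y‖ ^ 2) ^ 3 := fun y hy =>
    norm_fderiv_planarGrad_le (by positivity) hU hu (hball y hy)
  refine ⟨hyU, fun y hy => ?_⟩
  have hgrowth : 1 + ‖planarGrad u y‖ ^ 2 ≤ 2 * M ^ 2 := by
    refine (one_add_norm_sq_le_of_norm_fderiv_le (fun y hy => ?_) hfderiv ?_ hy).trans (by gcongr)
    · exact (contDiffAt_two hU (contDiffOn_planarGrad hU hu.1) (hyU y hy)).differentiableAt
        (by norm_num)
    · calc 4 * K * min (ρ / 2) (1 / (4 * K * M ^ 2 + 1)) * (1 + ‖planarGrad u z‖ ^ 2)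
          ≤ 4 * K * (1 / (4 * K * M ^ 2 + 1)) * M ^ 2 := by
            gcongr
            exact min_le_right _ _
        _ = 4 * K * M ^ 2 / (4 * K * M ^ 2 + 1) := by ring
        _ ≤ 1 := div_le_one_of_le₀ (by linarith) (by positivity)
  constructor
  · exact (Real.le_sqrt_of_sq_le (by linarith)).trans (le_max_left _ _)
  · refine (hfderiv y hy).trans (le_trans ?_ (le_max_right _ _))
    gcongr

end InteriorGradientBound

section Bernstein

variable {F : Type*} [NormedAddCommGroup F]

section Normed

variable [NormedSpace ℝ F] {U : Set (ℝ × ℝ)} {w : ℝ × ℝ → F} {τ : ℝ × ℝ → ℝ × ℝ} {x : ℝ × ℝ}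

/-- The squared norm of the derivative of a vector-valued function on the plane. -/
def energy (w : ℝ × ℝ → F) (x : ℝ × ℝ) : ℝ := ‖dirDeriv (1, 0) w x‖ ^ 2 + ‖dirDeriv (0, 1) w x‖ ^ 2

lemma energy_nonneg (w : ℝ × ℝ → F) (x : ℝ × ℝ) : 0 ≤ energy w x := by unfold energy; positivity

lemma norm_dirDeriv_le_sqrt_energy (w : ℝ × ℝ → F) (x : ℝ × ℝ) :
    ‖dirDeriv (1, 0) w x‖ ≤ √(energy w x) ∧ ‖dirDeriv (0, 1) w x‖ ≤ √(energy w x) :=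
  ⟨Real.le_sqrt_of_sq_le (le_add_of_nonneg_right (sq_nonneg _)),
    Real.le_sqrt_of_sq_le (le_add_of_nonneg_left (sq_nonneg _))⟩

lemma norm_fderiv_sq_le_energy (w : ℝ × ℝ → F) (x : ℝ × ℝ) :
    ‖fderiv ℝ w x‖ ^ 2 ≤ 2 * energy w x :=
  (pow_le_pow_left₀ (norm_nonneg _) (opNorm_le_add _) 2).trans add_sq_le

lemma gradSq_le_energy (a : ℝ × ℝ) (w : ℝ × ℝ → F) (x : ℝ × ℝ) :
    gradSq a w x ≤ (1 + 2 * ‖a‖ ^ 2) * energy w x := by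
  have ha : ‖dirDeriv a w x‖ ^ 2 ≤ ‖fderiv ℝ w x‖ ^ 2 * ‖a‖ ^ 2 := by
    rw [← mul_pow]
    exact pow_le_pow_left₀ (norm_nonneg _) (norm_dirDeriv_le le_rfl a) 2
  calc gradSq a w x = energy w x + ‖dirDeriv a w x‖ ^ 2 := rfl
    _ ≤ energy w x + 2 * energy w x * ‖a‖ ^ 2 := by
        gcongr
        exact ha.trans (by gcongr; exact norm_fderiv_sq_le_energy w x)
    _ = _ := by ring

lemma energy_le_gradSq (a : ℝ × ℝ) (w : ℝ × ℝ → F) (x : ℝ × ℝ) : energy w x ≤ gradSq a w x :=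
  le_add_of_nonneg_right (sq_nonneg _)

lemma norm_fderiv_fderiv_sq_le (hw : ContDiffAt ℝ 2 w x) :
    ‖fderiv ℝ (fderiv ℝ w) x‖ ^ 2
      ≤ 4 * (energy (dirDeriv (1, 0) w) x + energy (dirDeriv (0, 1) w) x) := by
  have hrow : ∀ e, ‖dirDeriv e (fderiv ℝ w) x‖
      ≤ ‖dirDeriv e (dirDeriv (1, 0) w) x‖ + ‖dirDeriv e (dirDeriv (0, 1) w) x‖ := fun e => by
    rw [dirDeriv_dirDeriv hw, dirDeriv_dirDeriv hw]
    exact opNorm_le_add _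
  calc _ ≤ (‖dirDeriv (1, 0) (fderiv ℝ w) x‖ + ‖dirDeriv (0, 1) (fderiv ℝ w) x‖) ^ 2 := by
        gcongr; exact opNorm_le_add _
    _ ≤ 2 * (‖dirDeriv (1, 0) (fderiv ℝ w) x‖ ^ 2 + ‖dirDeriv (0, 1) (fderiv ℝ w) x‖ ^ 2) :=
        add_sq_le
    _ ≤ 2 * ((2 * (‖dirDeriv (1, 0) (dirDeriv (1, 0) w) x‖ ^ 2
          + ‖dirDeriv (1, 0) (dirDeriv (0, 1) w) x‖ ^ 2))
          + 2 * (‖dirDeriv (0, 1) (dirDeriv (1, 0) w) x‖ ^ 2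
          + ‖dirDeriv (0, 1) (dirDeriv (0, 1) w) x‖ ^ 2)) := by
        gcongr
        exacts [(pow_le_pow_left₀ (norm_nonneg _) (hrow _) 2).trans add_sq_le,
          (pow_le_pow_left₀ (norm_nonneg _) (hrow _) 2).trans add_sq_le]
    _ = _ := by unfold energy; ring

lemma ellipticOp_zero_right (a : ℝ × ℝ) (w : ℝ × ℝ → F) (x : ℝ × ℝ) :
    ellipticOp a 0 w x = dirDeriv (1, 0) (dirDeriv (1, 0) w) x
      + dirDeriv (0, 1) (dirDeriv (0, 1) w) x + dirDeriv a (dirDeriv a w) x := by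
  have h0 : dirDeriv 0 w x = 0 := map_zero _
  rw [ellipticOp, h0, add_zero]

lemma le_ellipticOp_log_mul {f g : ℝ × ℝ → ℝ} {a b : ℝ × ℝ} (hf : ContDiffAt ℝ 2 f x)
    (hg : ContDiffAt ℝ 2 g x) (hf0 : 0 < f x) (hg0 : 0 < g x) :
    ellipticOp a b f x / f x + ellipticOp a b g x / g x - 3 * (gradSq a g x / g x ^ 2)
      ≤ ellipticOp a b (fun y => Real.log (f y * g y)) x
        + 2 * gradSq a (fun y => Real.log (f y * g y)) x := by
  have hsplit : (fun y => Real.log (f y * g y))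
      =ᶠ[𝓝 x] fun y => Real.log (f y) + Real.log (g y) := by
    filter_upwards [hf.continuousAt.eventually_ne hf0.ne',
      hg.continuousAt.eventually_ne hg0.ne'] with y hfy hgy using Real.log_mul hfy hgy
  have hlogf := hf.log hf0.ne'
  have hlogg := hg.log hg0.ne'
  have hΓ := gradSq_le_two_mul_add (τ := a) hlogf hlogg
  rw [ellipticOp_congr hsplit, gradSq_congr hsplit, ellipticOp_add hlogf hlogg,
    ellipticOp_log hf hf0, ellipticOp_log hg hg0]
  rw [gradSq_log hf hf0, gradSq_log hg hg0] at hΓ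
  linarith

section Field

variable {E : Type*} [NormedAddCommGroup E] [NormedSpace ℝ E] {w : E → F} {σ : E → E} {x : E}

lemma differentiableAt_hessian (hw : ContDiffAt ℝ 3 w x) :
    DifferentiableAt ℝ (fderiv ℝ (fderiv ℝ w)) x :=
  ((hw.fderiv_right (m := 2) (by norm_num)).fderiv_right (m := 1)
    (by norm_num)).differentiableAt (by norm_num)

lemma dirDeriv_dirDeriv_field_eventuallyEq (hw : ContDiffAt ℝ 2 w x) (σ : E → E) :
    (fun y => dirDeriv (σ y) (dirDeriv (σ y) w) y)
      =ᶠ[𝓝 x] fun y => fderiv ℝ (fderiv ℝ w) y (σ y) (σ y) := by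
  filter_upwards [hw.eventually (by simp)] with y hy using dirDeriv_dirDeriv hy

lemma differentiableAt_dirDeriv_dirDeriv_field (hw : ContDiffAt ℝ 3 w x)
    (hσ : DifferentiableAt ℝ σ x) :
    DifferentiableAt ℝ (fun y => dirDeriv (σ y) (dirDeriv (σ y) w) y) x :=
  (((differentiableAt_hessian hw).clm_apply hσ).clm_apply hσ).congr_of_eventuallyEq
    (dirDeriv_dirDeriv_field_eventuallyEq (hw.of_le (by norm_num)) σ)

lemma dirDeriv_dirDeriv_dirDeriv_field (hw : ContDiffAt ℝ 3 w x) (hσ : DifferentiableAt ℝ σ x)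
    (e : E) :
    dirDeriv e (fun y => dirDeriv (σ y) (dirDeriv (σ y) w) y) x
      = dirDeriv e (dirDeriv (σ x) (dirDeriv (σ x) w)) x
        + (2 : ℝ) • fderiv ℝ (fderiv ℝ w) x (dirDeriv e σ x) (σ x) := by
  have hw2 : ContDiffAt ℝ 2 w x := hw.of_le (by norm_num)
  have hprod : ∀ ς : E → E, DifferentiableAt ℝ ς x →
      dirDeriv e (fun y => dirDeriv (ς y) (dirDeriv (ς y) w) y) x
        = dirDeriv e (fderiv ℝ (fderiv ℝ w)) x (ς x) (ς x)
          + (fderiv ℝ (fderiv ℝ w) x (dirDeriv e ς x) (ς x)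
            + fderiv ℝ (fderiv ℝ w) x (ς x) (dirDeriv e ς x)) := fun ς hς => by
    rw [dirDeriv_congr (dirDeriv_dirDeriv_field_eventuallyEq hw2 ς), dirDeriv,
      (((differentiableAt_hessian hw).hasFDerivAt.clm_apply hς.hasFDerivAt).clm_apply
        hς.hasFDerivAt).fderiv]
    simp only [dirDeriv, add_apply, ContinuousLinearMap.comp_apply, ContinuousLinearMap.flip_apply]
    abel
  have hconst := hprod (fun _ => σ x) (differentiableAt_const _)
  rw [show dirDeriv e (fun _ => σ x) x = 0 by simp [dirDeriv]] at hconst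
  rw [hprod σ hσ, hconst, (hw2.isSymmSndFDerivAt (by simp)).eq (σ x) (dirDeriv e σ x)]
  simp only [map_zero, zero_apply, add_zero, two_smul]

end Field

lemma ellipticOp_dirDeriv (hU : IsOpen U) (hw : ContDiffOn ℝ ∞ w U) (hτ : DifferentiableAt ℝ τ x)
    (hx : x ∈ U) (e : ℝ × ℝ) :
    ellipticOp (τ x) 0 (dirDeriv e w) x = dirDeriv e (fun y => ellipticOp (τ y) 0 w y) x
      - (2 : ℝ) • fderiv ℝ (fderiv ℝ w) x (dirDeriv e τ x) (τ x) := by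
  have hsmooth : ∀ v, ContDiffOn ℝ ∞ (dirDeriv v w) U := contDiffOn_dirDeriv hU hw
  have hw3 : ContDiffAt ℝ 3 w x := (hw.contDiffAt (hU.mem_nhds hx)).of_le ENat.LEInfty.out
  have hthird : ∀ v, dirDeriv v (dirDeriv v (dirDeriv e w)) x
      = dirDeriv e (dirDeriv v (dirDeriv v w)) x := fun v => by
    have hcomm : dirDeriv v (dirDeriv e w) =ᶠ[𝓝 x] dirDeriv e (dirDeriv v w) := by
      filter_upwards [hU.mem_nhds hx] with y hy using dirDeriv_comm (contDiffAt_two hU hw hy)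
    rw [dirDeriv_congr hcomm, dirDeriv_comm (contDiffAt_two hU (hsmooth v) hx)]
  have hdiff : ∀ v, DifferentiableAt ℝ (dirDeriv v (dirDeriv v w)) x := fun v =>
    (contDiffAt_two hU (contDiffOn_dirDeriv hU (hsmooth v) v) hx).differentiableAt (by norm_num)
  have hfield := differentiableAt_dirDeriv_dirDeriv_field hw3 hτ
  have hsum : dirDeriv e (fun y => ellipticOp (τ y) 0 w y) x
      = dirDeriv e (dirDeriv (1, 0) (dirDeriv (1, 0) w)) x
        + dirDeriv e (dirDeriv (0, 1) (dirDeriv (0, 1) w)) x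
        + dirDeriv e (fun y => dirDeriv (τ y) (dirDeriv (τ y) w) y) x := by
    simp only [ellipticOp_zero_right, dirDeriv]
    erw [fderiv_fun_add ((hdiff (1, 0)).fun_add (hdiff (0, 1))) hfield,
      fderiv_fun_add (hdiff (1, 0)) (hdiff (0, 1))]
    rfl
  rw [hsum, dirDeriv_dirDeriv_dirDeriv_field hw3 hτ, ellipticOp_zero_right, hthird, hthird, hthird]
  abel

end Normed

section Inner

variable [InnerProductSpace ℝ F]

/-- The bounds under which the Bernstein method applies to `w` at `x`, for the operator with leading
part `Δ + D²(τ, τ)`: the right-hand side grows at most linearly in the derivative of `w`, and its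
derivative at most quadratically. -/
structure HasNaturalGrowth (C : ℝ) (τ : ℝ × ℝ → ℝ × ℝ) (w : ℝ × ℝ → F) (x : ℝ × ℝ) : Prop where
  field : ‖τ x‖ ≤ C
  field_deriv : ‖fderiv ℝ τ x‖ ≤ C
  norm : ‖w x‖ ≤ C
  op : ‖ellipticOp (τ x) 0 w x‖ ≤ C * (1 + ‖fderiv ℝ w x‖)
  op_deriv : ‖fderiv ℝ (fun y => ellipticOp (τ y) 0 w y) x‖
    ≤ C * (1 + ‖fderiv ℝ w x‖ ^ 2 + ‖fderiv ℝ (fderiv ℝ w) x‖)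

lemma contDiffAt_energy {U : Set (ℝ × ℝ)} {w : ℝ × ℝ → F} {x : ℝ × ℝ} (hU : IsOpen U)
    (hw : ContDiffOn ℝ ∞ w U) (hx : x ∈ U) : ContDiffAt ℝ 2 (energy w) x :=
  ((contDiffAt_two hU (contDiffOn_dirDeriv hU hw _) hx).norm_sq ℝ).add
    ((contDiffAt_two hU (contDiffOn_dirDeriv hU hw _) hx).norm_sq ℝ)

lemma ellipticOp_energy {U : Set (ℝ × ℝ)} {w : ℝ × ℝ → F} {x : ℝ × ℝ} (hU : IsOpen U)
    (hw : ContDiffOn ℝ ∞ w U) (hx : x ∈ U) (τ : ℝ × ℝ) :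
    ellipticOp τ 0 (energy w) x
      = 2 * inner ℝ (dirDeriv (1, 0) w x) (ellipticOp τ 0 (dirDeriv (1, 0) w) x)
        + 2 * gradSq τ (dirDeriv (1, 0) w) x
        + (2 * inner ℝ (dirDeriv (0, 1) w x) (ellipticOp τ 0 (dirDeriv (0, 1) w) x)
        + 2 * gradSq τ (dirDeriv (0, 1) w) x) := by
  have hsmooth : ∀ e, ContDiffAt ℝ 2 (dirDeriv e w) x := fun e =>
    contDiffAt_two hU (contDiffOn_dirDeriv hU hw e) hx
  rw [← ellipticOp_norm_sq (b := 0) (hsmooth (1, 0)),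
    ← ellipticOp_norm_sq (b := 0) (hsmooth (0, 1)),
    ← ellipticOp_add ((hsmooth (1, 0)).norm_sq ℝ) ((hsmooth (0, 1)).norm_sq ℝ)]
  rfl

namespace HasNaturalGrowth

variable {C R : ℝ} {U : Set (ℝ × ℝ)} {w : ℝ × ℝ → F} {τ : ℝ × ℝ → ℝ × ℝ} {x z : ℝ × ℝ}

lemma nonneg (h : HasNaturalGrowth C τ w x) : 0 ≤ C := (norm_nonneg _).trans h.field

lemma norm_ellipticOp_dirDeriv_le (h : HasNaturalGrowth C τ w x) (hU : IsOpen U)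
    (hw : ContDiffOn ℝ ∞ w U) (hτ : DifferentiableAt ℝ τ x) (hx : x ∈ U) {e : ℝ × ℝ}
    (he : ‖e‖ = 1) :
    ‖ellipticOp (τ x) 0 (dirDeriv e w) x‖ ≤ C * (1 + ‖fderiv ℝ w x‖ ^ 2)
      + (C + 2 * C ^ 2) * ‖fderiv ℝ (fderiv ℝ w) x‖ := by
  have hC := h.nonneg
  have hτe : ‖dirDeriv e τ x‖ ≤ C := by simpa [he] using norm_dirDeriv_le h.field_deriv e
  have hop := norm_dirDeriv_le h.op_deriv e
  rw [he, mul_one] at hop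
  rw [ellipticOp_dirDeriv hU hw hτ hx]
  calc _ ≤ C * (1 + ‖fderiv ℝ w x‖ ^ 2 + ‖fderiv ℝ (fderiv ℝ w) x‖)
        + 2 * (‖fderiv ℝ (fderiv ℝ w) x‖ * C * C) := by
        refine (norm_sub_le _ _).trans (add_le_add hop ?_)
        rw [norm_smul, Real.norm_ofNat]
        gcongr
        refine (ContinuousLinearMap.le_opNorm₂ _ _ _).trans ?_
        gcongr
        exact h.field
    _ = _ := by ring

lemma le_ellipticOp_energy (h : HasNaturalGrowth C τ w x) (hU : IsOpen U)
    (hw : ContDiffOn ℝ ∞ w U) (hτ : DifferentiableAt ℝ τ x) (hx : x ∈ U) (hP : 1 ≤ energy w x) :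
    -((12 * C + 8 * (C + 2 * C ^ 2) ^ 2) * √(energy w x) * energy w x)
      ≤ ellipticOp (τ x) 0 (energy w) x := by
  have hC := h.nonneg
  set Q := energy (dirDeriv (1, 0) w) x + energy (dirDeriv (0, 1) w) x with hQ
  have hQ0 : 0 ≤ Q := add_nonneg (energy_nonneg _ _) (energy_nonneg _ _)
  have hP1 : 1 ≤ √(energy w x) := Real.one_le_sqrt.2 hP
  have hPsq := Real.sq_sqrt (energy_nonneg w x)
  have hhess : ‖fderiv ℝ (fderiv ℝ w) x‖ ≤ 2 * √Q := by
    refine (abs_le_of_sq_le_sq' ?_ (by positivity)).2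
    rw [mul_pow, Real.sq_sqrt hQ0]
    exact (norm_fderiv_fderiv_sq_le (contDiffAt_two hU hw hx)).trans (by norm_num [hQ])
  have hinner : ∀ e, ‖e‖ = 1 → ‖dirDeriv e w x‖ ≤ √(energy w x) →
      -(√(energy w x) * (C * (1 + 2 * energy w x) + (C + 2 * C ^ 2) * (2 * √Q)))
        ≤ inner ℝ (dirDeriv e w x) (ellipticOp (τ x) 0 (dirDeriv e w) x) := fun e he hle =>
    neg_le_of_abs_le <| (abs_real_inner_le_norm _ _).trans <| by
      gcongr
      refine (h.norm_ellipticOp_dirDeriv_le hU hw hτ hx he).trans ?_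
      gcongr
      exact norm_fderiv_sq_le_energy w x
  have h₁ := hinner (1, 0) (by simp) (norm_dirDeriv_le_sqrt_energy w x).1
  have h₂ := hinner (0, 1) (by simp) (norm_dirDeriv_le_sqrt_energy w x).2
  have hreal : -((12 * C + 8 * (C + 2 * C ^ 2) ^ 2) * √(energy w x) * energy w x)
      ≤ 2 * Q - 4 * (√(energy w x)
        * (C * (1 + 2 * energy w x) + (C + 2 * C ^ 2) * (2 * √Q))) := by
    have hsq : √(energy w x) ^ 2 ≤ √(energy w x) ^ 3 := pow_le_pow_right₀ hP1 (by norm_num)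
    have hcube : √(energy w x) ≤ √(energy w x) ^ 3 := le_self_pow₀ hP1 (by norm_num)
    have hyoung := sq_nonneg (√Q - 2 * (C + 2 * C ^ 2) * √(energy w x))
    rw [← hPsq, ← Real.sq_sqrt hQ0, Real.sqrt_sq (Real.sqrt_nonneg _),
      Real.sqrt_sq (Real.sqrt_nonneg _)]
    linear_combination 2 * hyoung + 4 * C * hcube + 8 * (C + 2 * C ^ 2) ^ 2 * hsq
  rw [ellipticOp_energy hU hw hx]
  linarith [energy_le_gradSq (τ x) (dirDeriv (1, 0) w) x,
    energy_le_gradSq (τ x) (dirDeriv (0, 1) w) x]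

lemma le_ellipticOp_norm_sq (h : HasNaturalGrowth C τ w x) (hw : ContDiffAt ℝ 2 w x) :
    energy w x - (2 * C ^ 2 + 2 * C ^ 4) ≤ ellipticOp (τ x) 0 (fun y => ‖w y‖ ^ 2) x := by
  have hC := h.nonneg
  have hinner : |inner ℝ (w x) (ellipticOp (τ x) 0 w x)| ≤ C * (C * (1 + ‖fderiv ℝ w x‖)) :=
    (abs_real_inner_le_norm _ _).trans (mul_le_mul h.norm h.op (norm_nonneg _) hC)
  rw [ellipticOp_norm_sq hw]
  nlinarith [neg_le_of_abs_le hinner, energy_le_gradSq (τ x) w x, norm_fderiv_sq_le_energy w x,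
    sq_nonneg (‖fderiv ℝ w x‖ - 2 * C ^ 2)]

lemma gradSq_norm_sq_le_energy (h : HasNaturalGrowth C τ w x) (hw : ContDiffAt ℝ 2 w x) :
    gradSq (τ x) (fun y => ‖w y‖ ^ 2) x ≤ 4 * C ^ 2 * ((1 + 2 * C ^ 2) * energy w x) := by
  have hP := energy_nonneg w x
  calc _ ≤ 4 * ‖w x‖ ^ 2 * gradSq (τ x) w x := gradSq_norm_sq_le hw
    _ ≤ 4 * ‖w x‖ ^ 2 * ((1 + 2 * ‖τ x‖ ^ 2) * energy w x) := by
        gcongr; exact gradSq_le_energy _ _ _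
    _ ≤ _ := by gcongr; exacts [h.norm, h.field]

/-- Bernstein's test function is `|Dw|² (K + |w|²)`; for large `K` the good term `|Dw|²` produced
by `|w|²` absorbs the cross term coming from `log (K + |w|²)`. -/
lemma le_ellipticOp_log_bernstein {K : ℝ} (h : HasNaturalGrowth C τ w x) (hU : IsOpen U)
    (hw : ContDiffOn ℝ ∞ w U) (hτ : DifferentiableAt ℝ τ x) (hx : x ∈ U) (hP : 1 ≤ energy w x)
    (hK : 24 * C ^ 2 * (1 + 2 * C ^ 2) + 1 ≤ K) :
    (energy w x / 2 - (2 * C ^ 2 + 2 * C ^ 4)) / (K + ‖w x‖ ^ 2)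
        - (12 * C + 8 * (C + 2 * C ^ 2) ^ 2) * √(energy w x)
      ≤ ellipticOp (τ x) 0 (fun y => Real.log (energy w y * (K + ‖w y‖ ^ 2))) x
        + 2 * gradSq (τ x) (fun y => Real.log (energy w y * (K + ‖w y‖ ^ 2))) x := by
  have hw2 := contDiffAt_two hU hw hx
  have hP0 : 0 < energy w x := by linarith
  have hK0 : 0 < K := lt_of_lt_of_le (by positivity) hK
  have hG0 : 0 < K + ‖w x‖ ^ 2 := by positivity
  have hlog := le_ellipticOp_log_mul (a := τ x) (b := 0) (contDiffAt_energy hU hw hx)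
    (contDiffAt_const.add (hw2.norm_sq ℝ)) hP0 hG0
  rw [ellipticOp_const_add, gradSq_const_add] at hlog
  have hcross : 3 * (gradSq (τ x) (fun y => ‖w y‖ ^ 2) x / (K + ‖w x‖ ^ 2) ^ 2)
      ≤ energy w x / 2 / (K + ‖w x‖ ^ 2) := by
    rw [mul_div_assoc', div_le_div_iff₀ (by positivity) hG0]
    have hΓ := h.gradSq_norm_sq_le_energy hw2
    have hKP : 24 * C ^ 2 * (1 + 2 * C ^ 2) * energy w x ≤ (K + ‖w x‖ ^ 2) * energy w x := by
      gcongr; linarith [sq_nonneg ‖w x‖]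
    calc _ ≤ energy w x / 2 * (K + ‖w x‖ ^ 2) * (K + ‖w x‖ ^ 2) :=
          mul_le_mul_of_nonneg_right (by linarith) hG0.le
      _ = _ := by ring
  have henergy : -((12 * C + 8 * (C + 2 * C ^ 2) ^ 2) * √(energy w x))
      ≤ ellipticOp (τ x) 0 (energy w) x / energy w x := by
    rw [le_div_iff₀ hP0, neg_mul]
    exact h.le_ellipticOp_energy hU hw hτ hx hP
  have hnorm : (energy w x - (2 * C ^ 2 + 2 * C ^ 4)) / (K + ‖w x‖ ^ 2)
      ≤ ellipticOp (τ x) 0 (fun y => ‖w y‖ ^ 2) x / (K + ‖w x‖ ^ 2) := by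
    gcongr
    exact h.le_ellipticOp_norm_sq hw2
  linear_combination hlog + hcross + henergy + hnorm

end HasNaturalGrowth

lemma sq_mul_le_of_bernstein {η r k k' P A c d : ℝ} (hη : 0 ≤ η) (hηr : η ≤ r) (hk : 0 < k)
    (hkk' : k ≤ k') (hP : 0 ≤ P) (hA : 0 ≤ A) (hc : 0 ≤ c) (hd : 0 ≤ d)
    (h : η ^ 2 * ((P / 2 - d) / k - c * √P) ≤ A) :
    η ^ 2 * P ≤ 4 * (k' * A + d * r ^ 2 + (k' * c * r) ^ 2) := by
  have hk' : 0 ≤ k' := hk.le.trans hkk'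
  have hmul : η ^ 2 * ((P / 2 - d) / k - c * √P) * k
      = η ^ 2 * (P / 2 - d) - k * c * η * (η * √P) := by
    field_simp
  have hcoeff : k * c * η * (η * √P) ≤ k' * c * r * (η * √P) := by gcongr
  have hAk : η ^ 2 * ((P / 2 - d) / k - c * √P) * k ≤ k' * A :=
    (mul_le_mul_of_nonneg_right h hk.le).trans (by rw [mul_comm]; gcongr)
  have hdr : η ^ 2 * d ≤ r ^ 2 * d := by gcongr
  have hsq : (η * √P) ^ 2 = η ^ 2 * P := by rw [mul_pow, Real.sq_sqrt hP]
  linarith [sq_nonneg (η * √P - 2 * (k' * c * r))]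

lemma enorm2_sq_le {p : ℝ × ℝ} {C : ℝ} (h : ‖p‖ ≤ C) : enorm2 p ^ 2 ≤ 2 * C ^ 2 := by
  have h₁ := (norm_fst_le p).trans h
  have h₂ := (norm_snd_le p).trans h
  rw [enorm2, Real.sq_sqrt (by positivity)]
  linarith [sq_le_sq' (neg_le_of_abs_le h₁) (le_of_abs_le h₁),
    sq_le_sq' (neg_le_of_abs_le h₂) (le_of_abs_le h₂)]

/-- The constant `K` in Bernstein's test function `|Dw|² (K + |w|²)`. -/
def bernsteinWeight (C : ℝ) : ℝ := 24 * C ^ 2 * (1 + 2 * C ^ 2) + 1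

lemma one_le_bernsteinWeight (C : ℝ) : 1 ≤ bernsteinWeight C :=
  le_add_of_nonneg_left (by positivity)

/-- The bound for `η² |Dw|²` at the maximum of Bernstein's test function, on the disc of
radius `R`. -/
def bernsteinBound (C R : ℝ) : ℝ :=
  (R ^ 2) ^ 2 + 4 * ((bernsteinWeight C + C ^ 2) * (R ^ 2 * (48 + 88 * C ^ 2))
    + (2 * C ^ 2 + 2 * C ^ 4) * (R ^ 2) ^ 2
    + ((bernsteinWeight C + C ^ 2) * (12 * C + 8 * (C + 2 * C ^ 2) ^ 2) * R ^ 2) ^ 2)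

lemma HasNaturalGrowth.cutoff_sq_mul_energy_le {C R : ℝ} {U : Set (ℝ × ℝ)} {w : ℝ × ℝ → F}
    {τ : ℝ × ℝ → ℝ × ℝ} {x z : ℝ × ℝ} (h : HasNaturalGrowth C τ w x) (hU : IsOpen U)
    (hw : ContDiffOn ℝ ∞ w U) (hτ : DifferentiableAt ℝ τ x) (hx : x ∈ U)
    (hη : 0 ≤ cutoff R z x)
    (hL : cutoff R z x ^ 2
        * ellipticOp (τ x) 0 (fun y => Real.log (energy w y * (bernsteinWeight C + ‖w y‖ ^ 2))) x
      ≤ 4 * cutoff R z x * (2 + enorm2 (τ x) ^ 2) + 8 * R ^ 2 * (1 + enorm2 (τ x) ^ 2))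
    (hΓ : cutoff R z x ^ 2
        * gradSq (τ x) (fun y => Real.log (energy w y * (bernsteinWeight C + ‖w y‖ ^ 2))) x
      ≤ 16 * R ^ 2 * (1 + enorm2 (τ x) ^ 2)) :
    cutoff R z x ^ 2 * energy w x ≤ bernsteinBound C R := by
  have hC := h.nonneg
  have hP0 := energy_nonneg w x
  have hK := one_le_bernsteinWeight C
  have hηR : cutoff R z x ≤ R ^ 2 := cutoff_le
  have hnorm : ‖w x‖ ^ 2 ≤ C ^ 2 := by gcongr; exact h.norm
  have hτx := enorm2_sq_le h.field
  rcases le_total (energy w x) 1 with hP | hP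
  · calc _ ≤ (R ^ 2) ^ 2 * 1 := by gcongr
      _ ≤ bernsteinBound C R := by
        rw [mul_one]; exact le_add_of_nonneg_right (by positivity)
  refine (sq_mul_le_of_bernstein hη hηR (k := bernsteinWeight C + ‖w x‖ ^ 2) (by positivity)
    (by gcongr) hP0 (A := R ^ 2 * (48 + 88 * C ^ 2)) (by positivity) (by positivity)
    (d := 2 * C ^ 2 + 2 * C ^ 4) (by positivity) ?_).trans (le_add_of_nonneg_left (by positivity))
  calc _ ≤ _ := mul_le_mul_of_nonneg_left
        (h.le_ellipticOp_log_bernstein hU hw hτ hx hP le_rfl) (by positivity)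
    _ ≤ 4 * cutoff R z x * (2 + enorm2 (τ x) ^ 2) + 8 * R ^ 2 * (1 + enorm2 (τ x) ^ 2)
        + 2 * (16 * R ^ 2 * (1 + enorm2 (τ x) ^ 2)) := by unfold bernsteinWeight at hL hΓ; linarith
    _ ≤ 4 * R ^ 2 * (2 + 2 * C ^ 2) + 8 * R ^ 2 * (1 + 2 * C ^ 2)
        + 2 * (16 * R ^ 2 * (1 + 2 * C ^ 2)) := by gcongr
    _ = _ := by ring

variable (F) in
/-- Bernstein's interior gradient estimate. -/
theorem exists_norm_fderiv_le_of_hasNaturalGrowth {R : ℝ} (hR : 0 < R) (C : ℝ) :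
    ∃ C' : ℝ, ∀ (U : Set (ℝ × ℝ)) (w : ℝ × ℝ → F) (τ : ℝ × ℝ → ℝ × ℝ) (z : ℝ × ℝ), IsOpen U →
      ContDiffOn ℝ ∞ w U → DifferentiableOn ℝ τ U → {y | 0 ≤ cutoff R z y} ⊆ U →
      (∀ x ∈ U, HasNaturalGrowth C τ w x) → ‖fderiv ℝ w z‖ ≤ C' := by
  have hK := one_le_bernsteinWeight C
  refine ⟨√(2 * (bernsteinBound C R * (bernsteinWeight C + C ^ 2) / R ^ 4)),
    fun U w τ z hU hw hτ hDU hgrowth => ?_⟩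
  refine Real.le_sqrt_of_sq_le ((norm_fderiv_sq_le_energy w z).trans ?_)
  gcongr
  rw [le_div_iff₀ (by positivity)]
  rcases (energy_nonneg w z).eq_or_lt with hz0 | hz0
  · rw [← hz0, zero_mul]; unfold bernsteinBound; positivity
  obtain ⟨x, hxU, hη, -, hzx, hL, hΓ⟩ := exists_cutoff_maximum
    (g := fun y => energy w y * (bernsteinWeight C + ‖w y‖ ^ 2)) hR hU hDU (fun y hy =>
      ((contDiffAt_energy hU hw hy).mul (contDiffAt_const.add
        ((contDiffAt_two hU hw hy).norm_sq ℝ))).contDiffWithinAt) (by positivity)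
  have hbound := (hgrowth x hxU).cutoff_sq_mul_energy_le hU hw
    (hτ.differentiableAt (hU.mem_nhds hxU)) hxU hη.le
    (by simpa [enorm2] using hL (τ x) 0) (hΓ (τ x))
  calc energy w z * R ^ 4 ≤ R ^ 4 * (energy w z * (bernsteinWeight C + ‖w z‖ ^ 2)) := by
        rw [mul_comm]
        gcongr
        exact le_mul_of_one_le_right hz0.le (by linarith [sq_nonneg ‖w z‖])
    _ ≤ cutoff R z x ^ 2 * (energy w x * (bernsteinWeight C + ‖w x‖ ^ 2)) := hzx
    _ ≤ _ := by
        rw [← mul_assoc]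
        gcongr
        · exact (mul_nonneg (sq_nonneg _) (energy_nonneg w x)).trans hbound
        · exact (hgrowth x hxU).norm

end Inner

end Bernstein

section AffineSystems

variable {F : Type*} [NormedAddCommGroup F] [InnerProductSpace ℝ F]

lemma exists_norm_le_of_norm_le {E G : Type*} [NormedAddCommGroup E] [NormedSpace ℝ E]
    [FiniteDimensional ℝ E] [NormedAddCommGroup G] {f : E → G} (hf : Continuous f) (M : ℝ) :
    ∃ N, ∀ p, ‖p‖ ≤ M → ‖f p‖ ≤ N := by
  have := FiniteDimensional.proper_real E
  obtain ⟨N, hN⟩ := (isCompact_closedBall (0 : E) M).exists_bound_of_continuousOn hf.continuousOn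
  exact ⟨N, fun p hp => hN p (mem_closedBall_zero_iff.2 hp)⟩

set_option maxSynthPendingDepth 3 in
lemma norm_fderiv_affine_le {E F : Type*} [NormedAddCommGroup E] [NormedSpace ℝ E]
    [NormedAddCommGroup F] [NormedSpace ℝ F] {B : F → F} {A : F → ((E →L[ℝ] F) →L[ℝ] F)}
    {w : E → F} {x : E} {N : ℝ} (hB : DifferentiableAt ℝ B (w x))
    (hA : DifferentiableAt ℝ A (w x)) (hw : ContDiffAt ℝ 2 w x) (hBN : ‖fderiv ℝ B (w x)‖ ≤ N)
    (hAN : ‖A (w x)‖ ≤ N) (hAN' : ‖fderiv ℝ A (w x)‖ ≤ N) :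
    ‖fderiv ℝ (fun y => B (w y) + A (w y) (fderiv ℝ w y)) x‖
      ≤ N * (‖fderiv ℝ w x‖ + ‖fderiv ℝ w x‖ ^ 2 + ‖fderiv ℝ (fderiv ℝ w) x‖) := by
  have hw1 := (hw.differentiableAt (by norm_num)).hasFDerivAt
  have hw2 := ((hw.fderiv_right (m := 1) (by norm_num)).differentiableAt (by norm_num)).hasFDerivAt
  have hderiv : HasFDerivAt (fun y => B (w y) + A (w y) (fderiv ℝ w y)) _ x :=
    (hB.hasFDerivAt.comp x hw1).add ((hA.hasFDerivAt.comp x hw1).clm_apply hw2)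
  rw [hderiv.fderiv]
  calc _ ≤ ‖fderiv ℝ B (w x)‖ * ‖fderiv ℝ w x‖ + (‖A (w x)‖ * ‖fderiv ℝ (fderiv ℝ w) x‖
        + ‖fderiv ℝ A (w x)‖ * ‖fderiv ℝ w x‖ * ‖fderiv ℝ w x‖) := by
        refine (norm_add_le _ _).trans (add_le_add (ContinuousLinearMap.opNorm_comp_le _ _)
          ((norm_add_le _ _).trans (add_le_add (ContinuousLinearMap.opNorm_comp_le _ _) ?_)))
        refine ((ContinuousLinearMap.le_opNorm _ _).trans ?_)
        rw [ContinuousLinearMap.opNorm_flip]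
        gcongr
        exact ContinuousLinearMap.opNorm_comp_le _ _
    _ ≤ N * ‖fderiv ℝ w x‖ + (N * ‖fderiv ℝ (fderiv ℝ w) x‖
        + N * ‖fderiv ℝ w x‖ * ‖fderiv ℝ w x‖) := by gcongr
    _ = _ := by ring

set_option maxSynthPendingDepth 3 in
lemma hasNaturalGrowth_of_affine {B : F → F} {A : F → ((ℝ × ℝ →L[ℝ] F) →L[ℝ] F)}
    {w : ℝ × ℝ → F} {τ : ℝ × ℝ → ℝ × ℝ} {x : ℝ × ℝ} {M N : ℝ} (hw : ContDiffAt ℝ 2 w x)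
    (hB : DifferentiableAt ℝ B (w x)) (hA : DifferentiableAt ℝ A (w x))
    (heq : (fun y => ellipticOp (τ y) 0 w y) =ᶠ[𝓝 x] fun y => B (w y) + A (w y) (fderiv ℝ w y))
    (hM : ‖τ x‖ ≤ M ∧ ‖fderiv ℝ τ x‖ ≤ M ∧ ‖w x‖ ≤ M)
    (hN : (‖B (w x)‖ ≤ N ∧ ‖fderiv ℝ B (w x)‖ ≤ N) ∧ ‖A (w x)‖ ≤ N ∧ ‖fderiv ℝ A (w x)‖ ≤ N) :
    HasNaturalGrowth (max M (2 * N)) τ w x := by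
  obtain ⟨⟨hBN, hBN'⟩, hAN, hAN'⟩ := hN
  have hN0 : 0 ≤ N := (norm_nonneg _).trans hBN
  refine ⟨hM.1.trans (le_max_left _ _), hM.2.1.trans (le_max_left _ _),
    hM.2.2.trans (le_max_left _ _), ?_, ?_⟩
  · rw [heq.eq_of_nhds]
    calc _ ≤ N + N * ‖fderiv ℝ w x‖ :=
          (norm_add_le _ _).trans (add_le_add hBN ((A (w x)).le_of_opNorm_le hAN _))
      _ ≤ 2 * N * (1 + ‖fderiv ℝ w x‖) := by
          linarith [mul_nonneg hN0 (norm_nonneg (fderiv ℝ w x))]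
      _ ≤ _ := by gcongr; exact le_max_right _ _
  · rw [heq.fderiv_eq]
    refine (norm_fderiv_affine_le hB hA hw hBN' hAN hAN').trans ?_
    calc _ ≤ N * (2 * (1 + ‖fderiv ℝ w x‖ ^ 2 + ‖fderiv ℝ (fderiv ℝ w) x‖)) := by
          gcongr
          linarith [sq_nonneg (‖fderiv ℝ w x‖ - 1), sq_nonneg ‖fderiv ℝ w x‖,
            norm_nonneg (fderiv ℝ (fderiv ℝ w) x)]
      _ = 2 * N * (1 + ‖fderiv ℝ w x‖ ^ 2 + ‖fderiv ℝ (fderiv ℝ w) x‖) := by ring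
      _ ≤ _ := by gcongr; exact le_max_right _ _

set_option maxSynthPendingDepth 3 in
theorem exists_norm_fderiv_le_of_affine [FiniteDimensional ℝ F] {B : F → F}
    {A : F → ((ℝ × ℝ →L[ℝ] F) →L[ℝ] F)} (hB : ContDiff ℝ 1 B) (hA : ContDiff ℝ 1 A) {ρ : ℝ}
    (hρ : 0 < ρ) (M : ℝ) :
    ∃ C, ∀ (U : Set (ℝ × ℝ)) (w : ℝ × ℝ → F) (τ : ℝ × ℝ → ℝ × ℝ) (z : ℝ × ℝ), IsOpen U →
      ContDiffOn ℝ ∞ w U → DifferentiableOn ℝ τ U → Metric.closedBall z ρ ⊆ U →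
      (∀ x ∈ U, ellipticOp (τ x) 0 w x = B (w x) + A (w x) (fderiv ℝ w x)) →
      (∀ x ∈ U, ‖τ x‖ ≤ M ∧ ‖fderiv ℝ τ x‖ ≤ M ∧ ‖w x‖ ≤ M) → ‖fderiv ℝ w z‖ ≤ C := by
  obtain ⟨N, hN⟩ := exists_norm_le_of_norm_le ((hB.continuous.prodMk
    (hB.continuous_fderiv one_ne_zero)).prodMk
      (hA.continuous.prodMk (hA.continuous_fderiv one_ne_zero))) M
  simp only [Prod.norm_mk, max_le_iff] at hN
  obtain ⟨C, hC⟩ := exists_norm_fderiv_le_of_hasNaturalGrowth F hρ (max M (2 * N))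
  refine ⟨C, fun U w τ z hU hw hτ hz heq hbound =>
    hC U w τ z hU hw hτ (fun y hy => hz (dist_le_of_cutoff_nonneg hρ.le hy)) fun x hx => ?_⟩
  exact hasNaturalGrowth_of_affine (contDiffAt_two hU hw hx) (hB.differentiable one_ne_zero _)
    (hA.differentiable one_ne_zero _)
    (by filter_upwards [hU.mem_nhds hx] with y hy using heq y hy) (hbound x hx)
    (hN _ (hbound x hx).2.2)

end AffineSystems

section Prolongation

variable {F G : Type*} [NormedAddCommGroup F] [NormedSpace ℝ F] [NormedAddCommGroup G]
  [NormedSpace ℝ G] {w : ℝ × ℝ → F} {x : ℝ × ℝ}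

lemma ellipticOp_clm_comp (L : F →L[ℝ] G) (hw : ContDiffAt ℝ 2 w x) (a b : ℝ × ℝ) :
    ellipticOp a b (fun y => L (w y)) x = L (ellipticOp a b w x) := by
  have hfirst : ∀ e, dirDeriv e (fun y => L (w y)) =ᶠ[𝓝 x] fun y => L (dirDeriv e w y) :=
    fun e => by
      filter_upwards [hw.eventually (by simp)] with y hy
        using dirDeriv_clm_comp L (hy.differentiableAt (by norm_num)) e
  have hsecond : ∀ e, dirDeriv e (dirDeriv e fun y => L (w y)) x
      = L (dirDeriv e (dirDeriv e w) x) := fun e => by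
    rw [dirDeriv_congr (hfirst e), dirDeriv_clm_comp L
      ((contDiffAt_dirDeriv hw (m := 1) (by norm_num) e).differentiableAt (by norm_num))]
  simp only [ellipticOp, hsecond, (hfirst b).eq_of_nhds, map_add]

/-- The linear map on the plane with partial derivatives `p₁ g` and `p₂ g`, as a function
of `g`. -/
def ofPartials (p₁ p₂ : G →L[ℝ] F) : G →L[ℝ] ℝ × ℝ →L[ℝ] F :=
  (ContinuousLinearMap.smulRightL ℝ (ℝ × ℝ) F (ContinuousLinearMap.fst ℝ ℝ ℝ)).comp p₁
    + (ContinuousLinearMap.smulRightL ℝ (ℝ × ℝ) F (ContinuousLinearMap.snd ℝ ℝ ℝ)).comp p₂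

lemma fderiv_eq_ofPartials {p₁ p₂ : G →L[ℝ] F} {g : G} (h₁ : p₁ g = dirDeriv (1, 0) w x)
    (h₂ : p₂ g = dirDeriv (0, 1) w x) : fderiv ℝ w x = ofPartials p₁ p₂ g := by
  refine ContinuousLinearMap.ext fun v => ?_
  have hv : v = v.1 • (1, 0) + v.2 • (0, 1) := by ext <;> simp
  conv_lhs => rw [hv, map_add, map_smul, map_smul]
  change v.1 • dirDeriv (1, 0) w x + v.2 • dirDeriv (0, 1) w x = v.1 • p₁ g + v.2 • p₂ g
  rw [h₁, h₂]

lemma ellipticOp_dirDeriv_of_eq {U : Set (ℝ × ℝ)} {τ : ℝ × ℝ → ℝ × ℝ} {V : ℝ × ℝ → G} {Φ : G → F}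
    {T : G →L[ℝ] ℝ × ℝ →L[ℝ] F} (hU : IsOpen U) (hw : ContDiffOn ℝ ∞ w U)
    (hT : ∀ y, fderiv ℝ w y = T (V y)) (heq : ∀ y ∈ U, ellipticOp (τ y) 0 w y = Φ (V y))
    (hx : x ∈ U) (hτ : DifferentiableAt ℝ τ x) (hV : DifferentiableAt ℝ V x)
    (hΦ : DifferentiableAt ℝ Φ (V x)) (e : ℝ × ℝ) :
    ellipticOp (τ x) 0 (dirDeriv e w) x = fderiv ℝ Φ (V x) (fderiv ℝ V x e)
      - (2 : ℝ) • T (fderiv ℝ V x (fderiv ℝ τ x e)) (τ x) := by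
  have hrhs : (fun y => ellipticOp (τ y) 0 w y) =ᶠ[𝓝 x] fun y => Φ (V y) := by
    filter_upwards [hU.mem_nhds hx] with y hy using heq y hy
  have hΦV : HasFDerivAt (fun y => Φ (V y)) _ x := hΦ.hasFDerivAt.comp x hV.hasFDerivAt
  have hTV : HasFDerivAt (fun y => T (V y)) _ x := T.hasFDerivAt.comp x hV.hasFDerivAt
  rw [ellipticOp_dirDeriv hU hw hτ hx, dirDeriv_congr hrhs, funext hT, hTV.fderiv, dirDeriv,
    hΦV.fderiv]
  rfl

end Prolongation

section Jet

variable {F : Type*} [NormedAddCommGroup F] [InnerProductSpace ℝ F] {U : Set (ℝ × ℝ)}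
  {w : ℝ × ℝ → F} {x : ℝ × ℝ}

/-- The space of `1`-jets `(w, D₁w, D₂w)` of `F`-valued functions on the plane. -/
abbrev Jet (F : Type*) := PiLp 2 fun _ : Fin 3 => F

/-- The `1`-jet with value `p.1` and derivative `p.2`. -/
def toJet : F × (ℝ × ℝ →L[ℝ] F) →L[ℝ] Jet F :=
  (PiLp.continuousLinearEquiv 2 ℝ fun _ : Fin 3 => F).symm.toContinuousLinearMap.comp
    (ContinuousLinearMap.pi ![ContinuousLinearMap.fst ℝ _ _,
      (ContinuousLinearMap.apply ℝ F (1, 0)).comp (ContinuousLinearMap.snd ℝ _ _),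
      (ContinuousLinearMap.apply ℝ F (0, 1)).comp (ContinuousLinearMap.snd ℝ _ _)])

/-- The `1`-jet of `w` at `x`. -/
def jet (w : ℝ × ℝ → F) (x : ℝ × ℝ) : Jet F := toJet (w x, fderiv ℝ w x)

/-- The derivative recorded by a `1`-jet. -/
def jetDeriv : Jet F →L[ℝ] ℝ × ℝ →L[ℝ] F :=
  ofPartials (PiLp.proj 2 (fun _ => F) 1) (PiLp.proj 2 (fun _ => F) 2)

/-- The inclusion of `F` as the `k`-th component of `Jet F`. -/
def jetSingle (k : Fin 3) : F →L[ℝ] Jet F :=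
  (PiLp.continuousLinearEquiv 2 ℝ fun _ : Fin 3 => F).symm.toContinuousLinearMap.comp
    (ContinuousLinearMap.single ℝ (fun _ => F) k)

lemma fderiv_eq_jetDeriv (w : ℝ × ℝ → F) (x : ℝ × ℝ) : fderiv ℝ w x = jetDeriv (jet w x) :=
  fderiv_eq_ofPartials rfl rfl

lemma contDiffOn_jet (hU : IsOpen U) (hw : ContDiffOn ℝ ∞ w U) : ContDiffOn ℝ ∞ (jet w) U :=
  (toJet (F := F)).contDiff.comp_contDiffOn (hw.prodMk (hw.fderiv_of_isOpen hU le_rfl))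

lemma norm_jet_le {M : ℝ} (hw : ‖w x‖ ≤ M ∧ ‖fderiv ℝ w x‖ ≤ M) :
    ‖jet w x‖ ≤ ‖(toJet : F × (ℝ × ℝ →L[ℝ] F) →L[ℝ] Jet F)‖ * M :=
  (toJet (F := F)).le_opNorm_of_le (max_le hw.1 hw.2)

lemma ellipticOp_jet (hU : IsOpen U) (hw : ContDiffOn ℝ ∞ w U) (hx : x ∈ U) (a b : ℝ × ℝ) :
    ellipticOp a b (jet w) x = jetSingle 0 (ellipticOp a b w x)
      + (jetSingle 1 (ellipticOp a b (dirDeriv (1, 0) w) x)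
        + jetSingle 2 (ellipticOp a b (dirDeriv (0, 1) w) x)) := by
  have hproj : ∀ k, ellipticOp a b (jet w) x k = ellipticOp a b (fun y => jet w y k) x := fun k =>
    (ellipticOp_clm_comp (PiLp.proj 2 (fun _ => F) k)
      (contDiffAt_two hU (contDiffOn_jet hU hw) hx) a b).symm
  ext k
  rw [hproj]
  fin_cases k <;> simp only [Fin.zero_eta, Fin.mk_one, Fin.reduceFinMk, Fin.reduceEq, Fin.isValue,
    jetSingle, ContinuousLinearMap.comp_apply, ContinuousLinearMap.single_apply,
    ContinuousLinearEquiv.coe_coe, PiLp.continuousLinearEquiv_symm_apply, PiLp.toLp_single,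
    PiLp.add_apply, PiLp.single_eq_same, PiLp.single_eq_of_ne, ne_eq, zero_ne_one, one_ne_zero,
    not_false_eq_true, add_zero, zero_add] <;> rfl

variable {τ : F → ℝ × ℝ} {Φ : Jet F → F}

/-- The operator by which `L (D_e w)` depends on the derivative of the jet `W` of `w`,
for `L w = Φ(W)` with direction field `τ(w)`. -/
def jetCommutator (τ : F → ℝ × ℝ) (Φ : Jet F → F) (e : ℝ × ℝ) (W : Jet F) :
    (ℝ × ℝ →L[ℝ] Jet F) →L[ℝ] F :=
  (fderiv ℝ Φ W).comp (ContinuousLinearMap.apply ℝ (Jet F) e)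
    - (2 : ℝ) • (ContinuousLinearMap.apply ℝ F (τ (W 0))).comp (jetDeriv.comp
      (ContinuousLinearMap.apply ℝ (Jet F) (fderiv ℝ τ (W 0) (jetDeriv W e))))

/-- The operator by which `L W` depends on the derivative of the jet `W` of `w`, for `L w = Φ(W)`
with direction field `τ(w)`. -/
def prolongationLin (τ : F → ℝ × ℝ) (Φ : Jet F → F) (W : Jet F) :
    (ℝ × ℝ →L[ℝ] Jet F) →L[ℝ] Jet F :=
  (jetSingle 1).comp (jetCommutator τ Φ (1, 0) W)
    + (jetSingle 2).comp (jetCommutator τ Φ (0, 1) W)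

lemma ellipticOp_dirDeriv_eq_jetCommutator (hU : IsOpen U) (hw : ContDiffOn ℝ ∞ w U)
    (hτ : Differentiable ℝ τ) (hΦ : Differentiable ℝ Φ)
    (heq : ∀ y ∈ U, ellipticOp (τ (w y)) 0 w y = Φ (jet w y)) (hx : x ∈ U) (e : ℝ × ℝ) :
    ellipticOp (τ (w x)) 0 (dirDeriv e w) x
      = jetCommutator τ Φ e (jet w x) (fderiv ℝ (jet w) x) := by
  have hwd := (contDiffAt_two hU hw hx).differentiableAt (by norm_num)
  have hτw : HasFDerivAt (fun y => τ (w y)) ((fderiv ℝ τ (w x)).comp (fderiv ℝ w x)) x :=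
    (hτ _).hasFDerivAt.comp x hwd.hasFDerivAt
  rw [ellipticOp_dirDeriv_of_eq hU hw (fderiv_eq_jetDeriv w) heq hx hτw.differentiableAt
    ((contDiffAt_two hU (contDiffOn_jet hU hw) hx).differentiableAt (by norm_num)) (hΦ _) e,
    hτw.fderiv, ContinuousLinearMap.comp_apply, fderiv_eq_jetDeriv w x]
  rfl

/-- The `1`-jet of a solution of a semilinear system solves a system of the same kind, which is
moreover affine in the derivative of the jet. -/
lemma ellipticOp_jet_eq (hU : IsOpen U) (hw : ContDiffOn ℝ ∞ w U)
    (hτ : Differentiable ℝ τ) (hΦ : Differentiable ℝ Φ)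
    (heq : ∀ y ∈ U, ellipticOp (τ (w y)) 0 w y = Φ (jet w y)) (hx : x ∈ U) :
    ellipticOp (τ (w x)) 0 (jet w) x
      = jetSingle 0 (Φ (jet w x)) + prolongationLin τ Φ (jet w x) (fderiv ℝ (jet w) x) := by
  rw [ellipticOp_jet hU hw hx, heq x hx, ellipticOp_dirDeriv_eq_jetCommutator hU hw hτ hΦ heq hx,
    ellipticOp_dirDeriv_eq_jetCommutator hU hw hτ hΦ heq hx]
  rfl

/-- The right-hand side of the system `L W = Ψ(jet W)` solved by the jet `W` of a solution of
`L w = Φ(jet w)`, where `L` has direction field `τ(w)`. -/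
def prolongation (τ : F → ℝ × ℝ) (Φ : Jet F → F) (J : Jet (Jet F)) : Jet F :=
  jetSingle 0 (Φ (J 0)) + prolongationLin τ Φ (J 0) (jetDeriv J)

lemma contDiff_jet_zero : ContDiff ℝ ∞ fun W : Jet F => W 0 :=
  (PiLp.proj (𝕜 := ℝ) 2 (fun _ : Fin 3 => F) 0).contDiff

set_option maxSynthPendingDepth 3 in
lemma contDiff_prolongationLin (hτ : ContDiff ℝ ∞ τ) (hΦ : ContDiff ℝ ∞ Φ) :
    ContDiff ℝ ∞ (prolongationLin τ Φ) := by
  have hcomm : ∀ e, ContDiff ℝ ∞ (jetCommutator τ Φ e) := fun e => by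
    refine ((hΦ.fderiv_right le_rfl).clm_comp contDiff_const).sub (ContDiff.const_smul _ ?_)
    refine ((ContinuousLinearMap.contDiff _).comp (hτ.comp contDiff_jet_zero)).clm_comp
      (contDiff_const.clm_comp ((ContinuousLinearMap.contDiff _).comp ?_))
    exact ((hτ.fderiv_right le_rfl).comp contDiff_jet_zero).clm_apply
      ((jetDeriv (F := F)).contDiff.clm_apply contDiff_const)
  exact (contDiff_const.clm_comp (hcomm _)).add (contDiff_const.clm_comp (hcomm _))

set_option maxSynthPendingDepth 3 in
lemma contDiff_prolongation (hτ : ContDiff ℝ ∞ τ) (hΦ : ContDiff ℝ ∞ Φ) :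
    ContDiff ℝ ∞ (prolongation τ Φ) :=
  ((jetSingle (F := F) 0).contDiff.comp (hΦ.comp contDiff_jet_zero)).add
    (((contDiff_prolongationLin hτ hΦ).comp contDiff_jet_zero).clm_apply
      (jetDeriv (F := Jet F)).contDiff)

end Jet

section HigherOrder

universe v

lemma norm_iteratedFDeriv_succ_le {E F G : Type*} [NormedAddCommGroup E] [NormedSpace ℝ E]
    [NormedAddCommGroup F] [NormedSpace ℝ F] [NormedAddCommGroup G] [NormedSpace ℝ G] {w : E → F}
    {V : E → G} {U : Set E} (T : G →L[ℝ] E →L[ℝ] F) (hT : ∀ y, fderiv ℝ w y = T (V y))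
    (hU : IsOpen U) (hV : ContDiffOn ℝ ∞ V U) {x : E} (hx : x ∈ U) (m : ℕ) :
    ‖iteratedFDeriv ℝ (m + 1) w x‖ ≤ ‖T‖ * ‖iteratedFDeriv ℝ m V x‖ := by
  rw [← norm_iteratedFDeriv_fderiv, funext hT]
  exact T.norm_iteratedFDeriv_comp_left (hV.contDiffAt (hU.mem_nhds hx))
    (by exact_mod_cast le_top)

variable {F : Type*} [NormedAddCommGroup F] [InnerProductSpace ℝ F] [FiniteDimensional ℝ F]
  {τ : F → ℝ × ℝ} {Φ : Jet F → F} {ρ : ℝ}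

set_option maxSynthPendingDepth 3 in
lemma exists_norm_fderiv_jet_le (hτ : ContDiff ℝ ∞ τ) (hΦ : ContDiff ℝ ∞ Φ) (hρ : 0 < ρ) (M : ℝ) :
    ∃ C, ∀ (U : Set (ℝ × ℝ)) (w : ℝ × ℝ → F) (z : ℝ × ℝ), IsOpen U → ContDiffOn ℝ ∞ w U →
      Metric.closedBall z ρ ⊆ U →
      (∀ x ∈ U, ellipticOp (τ (w x)) 0 w x = Φ (jet w x)) →
      (∀ x ∈ U, ‖w x‖ ≤ M ∧ ‖fderiv ℝ w x‖ ≤ M) → ‖fderiv ℝ (jet w) z‖ ≤ C := by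
  obtain ⟨N, hN⟩ := exists_norm_le_of_norm_le
    (hτ.continuous.prodMk (hτ.continuous_fderiv (by simp))) M
  simp only [Prod.norm_mk, max_le_iff] at hN
  obtain ⟨C, hC⟩ := exists_norm_fderiv_le_of_affine
    (((jetSingle 0).contDiff.comp hΦ).of_le (by simp) : ContDiff ℝ 1 fun W => jetSingle 0 (Φ W))
    ((contDiff_prolongationLin hτ hΦ).of_le (by simp)) hρ
    (max (max N (N * M)) (‖(toJet : F × (ℝ × ℝ →L[ℝ] F) →L[ℝ] Jet F)‖ * M))
  refine ⟨C, fun U w z hU hw hz heq hbound => hC U (jet w) (fun x => τ (w x)) z hU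
    (contDiffOn_jet hU hw) ((hτ.comp_contDiffOn hw).differentiableOn (by simp)) hz
    (fun x hx => ellipticOp_jet_eq hU hw (hτ.differentiable (by simp))
      (hΦ.differentiable (by simp)) heq hx) fun x hx => ?_⟩
  obtain ⟨hτN, hτN'⟩ := hN _ (hbound x hx).1
  refine ⟨hτN.trans ((le_max_left _ _).trans (le_max_left _ _)), ?_,
    (norm_jet_le (hbound x hx)).trans (le_max_right _ _)⟩
  have hτw : HasFDerivAt (fun y => τ (w y)) ((fderiv ℝ τ (w x)).comp (fderiv ℝ w x)) x :=
    (hτ.differentiable (by simp) _).hasFDerivAt.comp x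
      ((contDiffAt_two hU hw hx).differentiableAt (by norm_num)).hasFDerivAt
  rw [hτw.fderiv]
  refine (ContinuousLinearMap.opNorm_comp_le _ _).trans
    (le_trans ?_ ((le_max_right _ _).trans (le_max_left _ _)))
  exact mul_le_mul hτN' (hbound x hx).2 (norm_nonneg _) ((norm_nonneg _).trans hτN')

set_option maxSynthPendingDepth 3 in
/-- The gradient estimate is applied to successive jets. -/
theorem exists_norm_iteratedFDeriv_le (m : ℕ) : ∀ {F : Type v} [NormedAddCommGroup F]
    [InnerProductSpace ℝ F] [FiniteDimensional ℝ F] {τ : F → ℝ × ℝ} {Φ : Jet F → F} {ρ : ℝ},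
    ContDiff ℝ ∞ τ → ContDiff ℝ ∞ Φ → 0 < ρ → ∀ M : ℝ,
    ∃ C, ∀ (U : Set (ℝ × ℝ)) (w : ℝ × ℝ → F) (z : ℝ × ℝ), IsOpen U → ContDiffOn ℝ ∞ w U →
      Metric.closedBall z ρ ⊆ U →
      (∀ x ∈ U, ellipticOp (τ (w x)) 0 w x = Φ (jet w x)) →
      (∀ x ∈ U, ‖w x‖ ≤ M ∧ ‖fderiv ℝ w x‖ ≤ M) → ‖iteratedFDeriv ℝ m w z‖ ≤ C := by
  induction m with
  | zero =>
    refine fun {F} _ _ _ {τ Φ ρ} _ _ hρ M => ⟨M, fun U w z _ _ hz _ hbound => ?_⟩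
    rw [norm_iteratedFDeriv_zero]
    exact (hbound z (hz (Metric.mem_closedBall_self hρ.le))).1
  | succ m ih =>
    refine fun {F} _ _ _ {τ Φ ρ} hτ hΦ hρ M => ?_
    obtain ⟨N, hN⟩ := exists_norm_fderiv_jet_le hτ hΦ (half_pos hρ) M
    obtain ⟨C, hC⟩ := ih (hτ.comp contDiff_jet_zero) (contDiff_prolongation hτ hΦ)
      (half_pos (half_pos hρ))
      (max (‖(toJet : F × (ℝ × ℝ →L[ℝ] F) →L[ℝ] Jet F)‖ * M) N)
    refine ⟨‖(jetDeriv : Jet F →L[ℝ] ℝ × ℝ →L[ℝ] F)‖ * C, fun U w z hU hw hz heq hbound => ?_⟩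
    have hsub : ∀ x ∈ Metric.ball z (ρ / 2), Metric.closedBall x (ρ / 2) ⊆ U := fun x hx =>
      (Metric.closedBall_subset_closedBall' (by linarith [Metric.mem_ball.1 hx])).trans hz
    have hsubU : Metric.ball z (ρ / 2) ⊆ U := fun x hx =>
      hsub x hx (Metric.mem_closedBall_self (half_pos hρ).le)
    refine (norm_iteratedFDeriv_succ_le jetDeriv (fderiv_eq_jetDeriv w) hU (contDiffOn_jet hU hw)
      (hz (Metric.mem_closedBall_self hρ.le)) m).trans ?_
    gcongr
    refine hC (Metric.ball z (ρ / 2)) (jet w) z Metric.isOpen_ball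
      ((contDiffOn_jet hU hw).mono hsubU) (Metric.closedBall_subset_ball (by linarith))
      (fun x hx => ?_) fun x hx => ⟨(norm_jet_le (hbound x (hsubU hx))).trans (le_max_left _ _),
        (hN U w x hU hw (hsub x hx) heq hbound).trans (le_max_right _ _)⟩
    rw [prolongation, ← fderiv_eq_jetDeriv]
    exact ellipticOp_jet_eq hU hw (hτ.differentiable (by simp)) (hΦ.differentiable (by simp)) heq
      (hsubU hx)

end HigherOrder

section InteriorEstimates

variable {H : ℝ} {U : Set (ℝ × ℝ)} {u : ℝ × ℝ → ℝ} {x : ℝ × ℝ}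

/-- The linear form on the plane with a given gradient. -/
def gradDeriv : EuclideanSpace ℝ (Fin 2) →L[ℝ] ℝ × ℝ →L[ℝ] ℝ :=
  ofPartials (EuclideanSpace.proj 0) (EuclideanSpace.proj 1)

/-- The clockwise quarter turn of the plane, which takes the gradient to the level field. -/
def quarterTurn : EuclideanSpace ℝ (Fin 2) →L[ℝ] ℝ × ℝ :=
  (EuclideanSpace.proj 1).prod (-EuclideanSpace.proj 0)

/-- The right-hand side of the constant mean curvature equation, as a function of the gradient. -/
def cmcRHS (H : ℝ) (p : EuclideanSpace ℝ (Fin 2)) : ℝ := 2 * H * √(1 + ‖p‖ ^ 2) ^ 3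

/-- The right-hand side of the system `L V = Φ(jet V)` obtained for the gradient `V` of a solution
by differentiating the constant mean curvature equation. -/
def gradSystem (H : ℝ) (J : Jet (EuclideanSpace ℝ (Fin 2))) : EuclideanSpace ℝ (Fin 2) :=
  WithLp.toLp 2 fun i => fderiv ℝ (cmcRHS H) (J 0) (jetDeriv J (![(1, 0), (0, 1)] i))
    - (2 : ℝ) • gradDeriv (jetDeriv J (quarterTurn (jetDeriv J (![(1, 0), (0, 1)] i))))
      (quarterTurn (J 0))

lemma fderiv_eq_gradDeriv (u : ℝ × ℝ → ℝ) (x : ℝ × ℝ) :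
    fderiv ℝ u x = gradDeriv (planarGrad u x) :=
  fderiv_eq_ofPartials rfl rfl

lemma contDiff_cmcRHS (H : ℝ) : ContDiff ℝ ∞ (cmcRHS H) :=
  contDiff_const.mul (((contDiff_const.add (contDiff_norm_sq ℝ)).sqrt
    fun _ => by positivity).pow 3)

lemma contDiff_gradSystem (H : ℝ) : ContDiff ℝ ∞ (gradSystem H) := by
  refine contDiff_euclidean.2 fun i => ?_
  have hD : ∀ {f : Jet (EuclideanSpace ℝ (Fin 2)) → ℝ × ℝ}, ContDiff ℝ ∞ f →
      ContDiff ℝ ∞ fun J => jetDeriv J (f J) := fun hf =>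
    (jetDeriv (F := EuclideanSpace ℝ (Fin 2))).contDiff.clm_apply hf
  refine ((((contDiff_cmcRHS H).fderiv_right le_rfl).comp contDiff_jet_zero).clm_apply
    (hD contDiff_const)).sub (ContDiff.const_smul _ ?_)
  exact (gradDeriv.contDiff.comp (hD (quarterTurn.contDiff.comp (hD contDiff_const)))).clm_apply
    (quarterTurn.contDiff.comp contDiff_jet_zero)

lemma ellipticOp_planarGrad (hU : IsOpen U) (hu : IsSmoothCMCSolution H U u) (hx : x ∈ U) :
    ellipticOp (quarterTurn (planarGrad u x)) 0 (planarGrad u) x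
      = gradSystem H (jet (planarGrad u) x) := by
  have hgrad := contDiffAt_two hU (contDiffOn_planarGrad hU hu.1) hx
  have hgradd := hgrad.differentiableAt (by norm_num)
  have hturn : HasFDerivAt (fun y => quarterTurn (planarGrad u y))
      (quarterTurn.comp (fderiv ℝ (planarGrad u) x)) x :=
    quarterTurn.hasFDerivAt.comp x hgradd.hasFDerivAt
  have heq : ∀ y ∈ U, ellipticOp (quarterTurn (planarGrad u y)) 0 u y
      = cmcRHS H (planarGrad u y) := fun y hy => by
    rw [cmcRHS, ← Wgraph_sq_eq, Real.sqrt_sq (Wgraph_pos u y).le]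
    exact ellipticOp_levelField_eq hu hU hy
  ext i
  have hcomp := (ellipticOp_clm_comp (EuclideanSpace.proj (𝕜 := ℝ) i) hgrad
    (quarterTurn (planarGrad u x)) 0).symm
  have hpartial := fun e => ellipticOp_dirDeriv_of_eq hU hu.1 (fderiv_eq_gradDeriv u) heq hx
    hturn.differentiableAt hgradd ((contDiff_cmcRHS H).differentiable (by simp) _) e
  simp only [hturn.fderiv, fderiv_eq_jetDeriv (planarGrad u)] at hpartial
  refine hcomp.trans ?_
  fin_cases i
  exacts [hpartial (1, 0), hpartial (0, 1)]

theorem exists_ball_norm_iteratedFDeriv_le (H : ℝ) {ρ : ℝ} (hρ : 0 < ρ) (M : ℝ) (m : ℕ) :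
    ∃ r > 0, ∃ C, ∀ (U : Set (ℝ × ℝ)) (u : ℝ × ℝ → ℝ) (z : ℝ × ℝ), IsOpen U →
      IsSmoothCMCSolution H U u → Metric.closedBall z ρ ⊆ U → Wgraph u z ≤ M →
        ∀ y ∈ Metric.ball z r, ‖iteratedFDeriv ℝ (m + 1) u y‖ ≤ C := by
  obtain ⟨r, hr, C₀, hC₀⟩ := exists_ball_planarGrad_le H hρ M
  obtain ⟨C, hC⟩ := exists_norm_iteratedFDeriv_le m quarterTurn.contDiff (contDiff_gradSystem H)
    (half_pos (half_pos hr)) C₀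
  refine ⟨r / 2, half_pos hr, ‖gradDeriv‖ * C, fun U u z hU hu hz hW y hy => ?_⟩
  obtain ⟨hsub, hbound⟩ := hC₀ U u z hU hu hz hW
  have hball : Metric.closedBall y (r / 2 / 2) ⊆ Metric.ball z r := fun x hx => by
    rw [Metric.mem_ball] at hy ⊢
    linarith [dist_triangle x y z, Metric.mem_closedBall.1 hx]
  have hyU : y ∈ U := hsub (Metric.ball_subset_ball (by linarith) hy)
  have hgrad := contDiffOn_planarGrad hU hu.1
  refine (norm_iteratedFDeriv_succ_le gradDeriv (fderiv_eq_gradDeriv u) hU hgrad hyU m).trans ?_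
  gcongr
  exact hC (Metric.ball z r) (planarGrad u) y Metric.isOpen_ball (hgrad.mono hsub) hball
    (fun x hx => ellipticOp_planarGrad hU hu (hsub hx)) hbound

end InteriorEstimates

section Compactness

lemma exists_strictMono_forall_tendsto {ι : Type*} [Countable ι] {X : ι → Type*}
    [∀ i, PseudoMetricSpace (X i)] [∀ i, ProperSpace (X i)] (a : ℕ → ∀ i, X i)
    (ha : ∀ i, Bornology.IsBounded (range fun n => a n i)) :
    ∃ φ : ℕ → ℕ, StrictMono φ ∧ ∀ i, ∃ l, Tendsto (fun n => a (φ n) i) atTop (𝓝 l) := by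
  have hcompact := isCompact_univ_pi fun i => (ha i).isCompact_closure
  obtain ⟨l, -, φ, hφ, hl⟩ := hcompact.tendsto_subseq
    fun n i _ => subset_closure (mem_range_self (f := fun n => a n i) n)
  exact ⟨φ, hφ, fun i => ⟨l i, tendsto_pi_nhds.1 hl i⟩⟩

lemma exists_tendstoLocallyUniformlyOn_of_equicontinuousAt {X Y : Type*} [TopologicalSpace X]
    [PseudoMetricSpace Y] [CompleteSpace Y] [Nonempty Y] {U s : Set X} {f : ℕ → X → Y}
    (hU : IsOpen U) (hf : ∀ x ∈ U, EquicontinuousAt f x) (hs : Dense s)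
    (hlim : ∀ x ∈ s ∩ U, ∃ l, Tendsto (f · x) atTop (𝓝 l)) :
    ∃ v, TendstoLocallyUniformlyOn f v atTop U := by
  have hcauchy : ∀ x ∈ U, ∀ ε > 0, ∃ V ∈ 𝓝 x, ∃ N, ∀ m ≥ N, ∀ n ≥ N, ∀ y ∈ V,
      dist (f m y) (f n y) ≤ ε := by
    intro x hx ε hε
    have hV := Metric.equicontinuousAt_iff_right.1 (hf x hx) (ε / 5) (by positivity)
    obtain ⟨q, hqs, hqU, hq⟩ := hs.inter_nhds_nonempty ((hU.eventually_mem hx).and hV)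
    obtain ⟨l, hl⟩ := hlim q ⟨hqs, hqU⟩
    obtain ⟨N, hN⟩ := Metric.cauchySeq_iff.1 hl.cauchySeq (ε / 5) (by positivity)
    refine ⟨_, hV, N, fun m hm n hn y hy => ?_⟩
    have hclose : ∀ k, dist (f k y) (f k q) ≤ 2 * (ε / 5) := fun k =>
      (dist_triangle_left _ _ (f k x)).trans (by linarith [hy k, hq k])
    calc dist (f m y) (f n y)
        ≤ dist (f m y) (f m q) + dist (f m q) (f n q) + dist (f n q) (f n y) :=
          dist_triangle4 _ _ _ _
      _ ≤ 2 * (ε / 5) + ε / 5 + 2 * (ε / 5) := by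
          gcongr
          exacts [hclose m, (hN m hm n hn).le, dist_comm (f n y) _ ▸ hclose n]
      _ = ε := by ring
  have hptwise : ∀ x ∈ U, ∃ l, Tendsto (f · x) atTop (𝓝 l) := fun x hx =>
    cauchySeq_tendsto_of_complete <| Metric.cauchySeq_iff.2 fun ε hε => by
      obtain ⟨V, hV, N, hN⟩ := hcauchy x hx (ε / 2) (half_pos hε)
      exact ⟨N, fun m hm n hn =>
        (hN m hm n hn x (mem_of_mem_nhds hV)).trans_lt (half_lt_self hε)⟩
  choose! v hv using hptwise
  refine ⟨v, Metric.tendstoLocallyUniformlyOn_iff.2 fun ε hε x hx => ?_⟩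
  obtain ⟨V, hV, N, hN⟩ := hcauchy x hx (ε / 2) (half_pos hε)
  refine ⟨U ∩ V, inter_mem_nhdsWithin U hV, ?_⟩
  filter_upwards [eventually_ge_atTop N] with n hn y ⟨hyU, hyV⟩
  refine lt_of_le_of_lt (le_of_tendsto ((hv y hyU).dist tendsto_const_nhds) ?_) (half_lt_self hε)
  filter_upwards [eventually_ge_atTop N] with m hm using hN m hm n hn y hyV

variable {ι E F : Type*} [NormedAddCommGroup E] [NormedSpace ℝ E] [NormedAddCommGroup F]
  [NormedSpace ℝ F] {U : Set E} {x : E}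

/-- The family `f` is bounded near each point of `U`, uniformly in the index. -/
def LocallyUniformlyBounded (U : Set E) (f : ι → E → F) : Prop :=
  ∀ x ∈ U, ∃ C, ∀ᶠ y in 𝓝 x, ∀ i, ‖f i y‖ ≤ C

lemma exists_norm_sub_le {f : ι → E → F} (hU : IsOpen U) (hf : ∀ i, DifferentiableOn ℝ (f i) U)
    (hbound : LocallyUniformlyBounded U fun i => fderiv ℝ (f i)) (hx : x ∈ U) :
    ∃ C, ∀ᶠ y in 𝓝 x, ∀ i, ‖f i y - f i x‖ ≤ C * ‖y - x‖ := by
  obtain ⟨C, hC⟩ := hbound x hx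
  obtain ⟨r, hr, hball⟩ := Metric.eventually_nhds_iff_ball.1 ((hU.eventually_mem hx).and hC)
  refine ⟨C, Metric.eventually_nhds_iff_ball.2 ⟨r, hr, fun y hy i => ?_⟩⟩
  exact (convex_ball x r).norm_image_sub_le_of_norm_fderiv_le
    (fun z hz => (hf i).differentiableAt (hU.mem_nhds (hball z hz).1))
    (fun z hz => (hball z hz).2 i) (Metric.mem_ball_self hr) hy

lemma equicontinuousAt_of_locallyUniformlyBounded {f : ι → E → F} (hU : IsOpen U)
    (hf : ∀ i, DifferentiableOn ℝ (f i) U)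
    (hbound : LocallyUniformlyBounded U fun i => fderiv ℝ (f i)) (hx : x ∈ U) :
    EquicontinuousAt f x := by
  obtain ⟨C, hC⟩ := exists_norm_sub_le hU hf hbound hx
  refine Metric.equicontinuousAt_of_continuity_modulus (fun y => C * ‖y - x‖) ?_ f ?_
  · have : ContinuousAt (fun y => C * ‖y - x‖) x := by fun_prop
    simpa [ContinuousAt] using this
  · filter_upwards [hC] with y hy i
    rw [dist_comm, dist_eq_norm]
    exact hy i

lemma locallyUniformlyBounded_sub_const {f : ι → E → F} {p : E} (hU : IsOpen U)
    (hconn : IsPreconnected U) (hp : p ∈ U) (hf : ∀ i, DifferentiableOn ℝ (f i) U)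
    (hbound : LocallyUniformlyBounded U fun i => fderiv ℝ (f i)) :
    LocallyUniformlyBounded U fun i x => f i x - f i p := by
  have hnear : ∀ x ∈ U, ∃ C, ∀ᶠ y in 𝓝 x, ∀ i, ‖f i y - f i x‖ ≤ C := fun x hx => by
    obtain ⟨C, hC⟩ := exists_norm_sub_le hU hf hbound hx
    refine ⟨|C|, ?_⟩
    filter_upwards [hC, Metric.ball_mem_nhds x one_pos] with y hy hyx i
    rw [mem_ball_iff_norm] at hyx
    refine (hy i).trans ((mul_le_mul_of_nonneg_right (le_abs_self C) (norm_nonneg _)).trans ?_)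
    exact mul_le_of_le_one_right (abs_nonneg C) hyx.le
  have hfar : ∀ x ∈ U, ∃ C, ∀ i, ‖f i x - f i p‖ ≤ C := fun x hx => by
    refine hconn.induction₂ (fun x y => ∃ C, ∀ i, ‖f i x - f i y‖ ≤ C) (fun x hx => ?_) ?_ ?_ hx hp
    · obtain ⟨C, hC⟩ := hnear x hx
      filter_upwards [mem_nhdsWithin_of_mem_nhds hC] with y hy
      exact ⟨C, fun i => by rw [norm_sub_rev]; exact hy i⟩
    · rintro x y z - - - ⟨A, hA⟩ ⟨B, hB⟩
      exact ⟨A + B, fun i => (norm_sub_le_norm_sub_add_norm_sub _ _ _).trans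
        (add_le_add (hA i) (hB i))⟩
    · rintro x y - - ⟨A, hA⟩
      exact ⟨A, fun i => by rw [norm_sub_rev]; exact hA i⟩
  intro x hx
  obtain ⟨A, hA⟩ := hnear x hx
  obtain ⟨B, hB⟩ := hfar x hx
  refine ⟨A + B, hA.mono fun y hy i => ?_⟩
  exact (norm_sub_le_norm_sub_add_norm_sub _ (f i x) _).trans (add_le_add (hy i) (hB i))

lemma tendstoLocallyUniformlyOn_fderiv_iteratedFDeriv {α : Type*} {l : Filter α} {g : α → E → F}
    {m : ℕ} {p : E → E [×(m + 1)]→L[ℝ] F}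
    (h : TendstoLocallyUniformlyOn (fun n => iteratedFDeriv ℝ (m + 1) (g n)) p l U) :
    TendstoLocallyUniformlyOn (fun n => fderiv ℝ (iteratedFDeriv ℝ m (g n)))
      (fun x => (p x).curryLeft) l U := by
  simp only [fderiv_iteratedFDeriv]
  exact (continuousMultilinearCurryLeftEquiv ℝ (fun _ => E) F).isometry.uniformContinuous
    |>.comp_tendstoLocallyUniformlyOn h

lemma differentiableOn_iteratedFDeriv {f : E → F} (hU : IsOpen U) (hf : ContDiffOn ℝ ∞ f U)
    (m : ℕ) : DifferentiableOn ℝ (iteratedFDeriv ℝ m f) U :=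
  (hf.differentiableOn_iteratedFDerivWithin (by exact_mod_cast ENat.natCast_lt_top m)
    hU.uniqueDiffOn).congr fun _ hx => (iteratedFDerivWithin_of_isOpen m hU hx).symm

lemma exists_contDiffOn_of_tendstoLocallyUniformlyOn {α : Type*} {l : Filter α} [l.NeBot]
    {g : α → E → F} (hU : IsOpen U) (hg : ∀ n, ContDiffOn ℝ ∞ (g n) U)
    (hlim : ∀ m, ∃ p, TendstoLocallyUniformlyOn (fun n => iteratedFDeriv ℝ m (g n)) p l U) :
    ∃ v, ContDiffOn ℝ ∞ v U ∧ ∀ m, TendstoLocallyUniformlyOn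
      (fun n => iteratedFDeriv ℝ m (g n)) (iteratedFDeriv ℝ m v) l U := by
  choose p hp using hlim
  have hderiv : ∀ m, ∀ x ∈ U, HasFDerivAt (p m) (p (m + 1) x).curryLeft x := fun m x hx =>
    hasFDerivAt_of_tendstoLocallyUniformlyOn hU
      (tendstoLocallyUniformlyOn_fderiv_iteratedFDeriv (hp (m + 1)))
      (fun n y hy => ((differentiableOn_iteratedFDeriv hU (hg n) m).differentiableAt
        (hU.mem_nhds hy)).hasFDerivAt)
      (fun y hy => (hp m).tendsto_at hy) hx
  have hseries : HasFTaylorSeriesUpToOn ∞ (fun x => (p 0 x).curry0) (fun x m => p m x) U :=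
    ⟨fun _ _ => rfl, fun m _ x hx => (hderiv m x hx).hasFDerivWithinAt,
      fun m _ x hx => (hderiv m x hx).continuousAt.continuousWithinAt⟩
  refine ⟨_, hseries.contDiffOn, fun m => (hp m).congr_right fun x hx => ?_⟩
  rw [← iteratedFDerivWithin_of_isOpen m hU hx]
  exact hseries.eq_iteratedFDerivWithin_of_uniqueDiffOn (by exact_mod_cast le_top)
    hU.uniqueDiffOn hx

instance [FiniteDimensional ℝ E] [FiniteDimensional ℝ F] (m : ℕ) :
    FiniteDimensional ℝ (E [×m]→L[ℝ] F) :=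
  .of_injective ContinuousMultilinearMap.toMultilinearMapLinear
    ContinuousMultilinearMap.toMultilinearMap_injective

theorem exists_subseq_tendstoLocallyUniformlyOn_iteratedFDeriv [FiniteDimensional ℝ E]
    [FiniteDimensional ℝ F] {g : ℕ → E → F} (hU : IsOpen U) (hg : ∀ n, ContDiffOn ℝ ∞ (g n) U)
    (hbound : ∀ m, LocallyUniformlyBounded U fun n => iteratedFDeriv ℝ m (g n)) :
    ∃ φ : ℕ → ℕ, StrictMono φ ∧ ∃ v, ContDiffOn ℝ ∞ v U ∧ ∀ m, TendstoLocallyUniformlyOn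
      (fun n => iteratedFDeriv ℝ m (g (φ n))) (iteratedFDeriv ℝ m v) atTop U := by
  have : ProperSpace E := FiniteDimensional.proper_real E
  have : ∀ m, ProperSpace (E [×m]→L[ℝ] F) := fun m => FiniteDimensional.proper_real _
  obtain ⟨s, hsc, hs⟩ := TopologicalSpace.exists_countable_dense E
  have : Countable ↥(s ∩ U) := (hsc.mono inter_subset_left).to_subtype
  obtain ⟨φ, hφ, hlim⟩ := exists_strictMono_forall_tendsto
    (fun n (i : ℕ × ↥(s ∩ U)) => iteratedFDeriv ℝ i.1 (g n) i.2) fun i => by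
      obtain ⟨C, hC⟩ := hbound i.1 i.2 i.2.2.2
      exact isBounded_iff_forall_norm_le.2 ⟨C, forall_mem_range.2 hC.self_of_nhds⟩
  have hequi : ∀ m, ∀ x ∈ U, EquicontinuousAt (fun n => iteratedFDeriv ℝ m (g (φ n))) x := by
    intro m x hx
    refine equicontinuousAt_of_locallyUniformlyBounded hU
      (fun n => differentiableOn_iteratedFDeriv hU (hg _) m) (fun y hy => ?_) hx
    obtain ⟨C, hC⟩ := hbound (m + 1) y hy
    refine ⟨C, hC.mono fun z hz n => ?_⟩
    rw [norm_fderiv_iteratedFDeriv]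
    exact hz _
  exact ⟨φ, hφ, exists_contDiffOn_of_tendstoLocallyUniformlyOn hU (fun n => hg (φ n)) fun m =>
    exists_tendstoLocallyUniformlyOn_of_equicontinuousAt hU (hequi m) hs fun x hx =>
      hlim (m, ⟨x, hx⟩)⟩

lemma iteratedFDeriv_succ_sub_const (f : E → F) (c : F) (m : ℕ) :
    iteratedFDeriv ℝ (m + 1) (fun x => f x - c) = iteratedFDeriv ℝ (m + 1) f := by
  funext x
  simp only [iteratedFDeriv_succ_eq_comp_right, fderiv_sub_const]

lemma locallyUniformlyBounded_iteratedFDeriv_sub_const {f : ι → E → F} {p : E} (hU : IsOpen U)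
    (hconn : IsPreconnected U) (hp : p ∈ U) (hf : ∀ i, DifferentiableOn ℝ (f i) U)
    (hbound : ∀ m, LocallyUniformlyBounded U fun i => iteratedFDeriv ℝ (m + 1) (f i)) (m : ℕ) :
    LocallyUniformlyBounded U fun i => iteratedFDeriv ℝ m fun x => f i x - f i p := by
  cases m with
  | zero =>
    have hfderiv : LocallyUniformlyBounded U fun i => fderiv ℝ (f i) := by
      simpa only [LocallyUniformlyBounded, norm_iteratedFDeriv_one (𝕜 := ℝ)] using hbound 0
    simpa only [LocallyUniformlyBounded, norm_iteratedFDeriv_zero] using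
      locallyUniformlyBounded_sub_const hU hconn hp hf hfderiv
  | succ m => simpa only [iteratedFDeriv_succ_sub_const] using hbound m

end Compactness

section ConvergenceDomain

variable {H : ℝ} {U : Set (ℝ × ℝ)} {u : ℕ → ℝ × ℝ → ℝ}

/-- The convergence domain `B(uₙ)` of a sequence of functions on `U`: the points at which the
area elements are bounded. -/
def convergenceDomain (U : Set (ℝ × ℝ)) (u : ℕ → ℝ × ℝ → ℝ) : Set (ℝ × ℝ) :=
  {Q ∈ U | ∃ M : ℝ, ∀ n, Wgraph (u n) Q ≤ M}

lemma isOpen_convergenceDomain (hU : IsOpen U) (hu : ∀ n, IsSmoothCMCSolution H U (u n)) :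
    IsOpen (convergenceDomain U u) := by
  refine isOpen_iff_mem_nhds.2 fun z ⟨hz, M, hM⟩ => ?_
  obtain ⟨ρ, hρ, hsub⟩ := Metric.nhds_basis_closedBall.mem_iff.1 (hU.mem_nhds hz)
  obtain ⟨r, hr, C, hC⟩ := exists_ball_planarGrad_le H hρ M
  filter_upwards [Metric.ball_mem_nhds z hr, hU.mem_nhds hz] with y hy hyU
  refine ⟨hyU, √(1 + C ^ 2), fun n => Real.le_sqrt_of_sq_le ?_⟩
  rw [Wgraph_sq_eq]
  gcongr
  exact ((hC U (u n) z hU (hu n) hsub (hM n)).2 y hy).1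

lemma locallyUniformlyBounded_iteratedFDeriv_succ (hU : IsOpen U)
    (hu : ∀ n, IsSmoothCMCSolution H U (u n)) (m : ℕ) :
    LocallyUniformlyBounded (convergenceDomain U u)
      fun n => iteratedFDeriv ℝ (m + 1) (u n) := by
  rintro z ⟨hz, M, hM⟩
  obtain ⟨ρ, hρ, hsub⟩ := Metric.nhds_basis_closedBall.mem_iff.1 (hU.mem_nhds hz)
  obtain ⟨r, hr, C, hC⟩ := exists_ball_norm_iteratedFDeriv_le H hρ M m
  refine ⟨C, ?_⟩
  filter_upwards [Metric.ball_mem_nhds z hr] with y hy n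
  exact hC U (u n) z hU (hu n) hsub (hM n) y hy

lemma isSmoothCMCSolution_mono {V : Set (ℝ × ℝ)} {f : ℝ × ℝ → ℝ}
    (hf : IsSmoothCMCSolution H U f) (hVU : V ⊆ U) : IsSmoothCMCSolution H V f :=
  ⟨hf.1.mono hVU, fun p hp => hf.2 p (hVU hp)⟩

lemma isSmoothCMCSolution_sub_const {f : ℝ × ℝ → ℝ} (hf : IsSmoothCMCSolution H U f) (c : ℝ) :
    IsSmoothCMCSolution H U fun x => f x - c := by
  refine ⟨hf.1.sub contDiffOn_const, ?_⟩
  have hpdx : pdx (fun x => f x - c) = pdx f := by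
    funext x; simp only [pdx, fderiv_sub_const]
  have hpdy : pdy (fun x => f x - c) = pdy f := by
    funext x; simp only [pdy, fderiv_sub_const]
  rw [hpdx, hpdy]
  exact hf.2

lemma tendsto_dirDeriv {α E F : Type*} [NormedAddCommGroup E] [NormedSpace ℝ E]
    [NormedAddCommGroup F] [NormedSpace ℝ F] {l : Filter α} {f : α → E → F} {v : E → F} {x : E}
    (h : Tendsto (fun n => iteratedFDeriv ℝ 1 (f n) x) l (𝓝 (iteratedFDeriv ℝ 1 v x))) (e : E) :
    Tendsto (fun n => dirDeriv e (f n) x) l (𝓝 (dirDeriv e v x)) := by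
  simpa [dirDeriv, Function.comp_def, iteratedFDeriv_one_apply] using
    ((ContinuousMultilinearMap.apply ℝ (fun _ => E) F fun _ => e).continuous.tendsto _).comp h

lemma tendsto_dirDeriv_dirDeriv {α E F : Type*} [NormedAddCommGroup E] [NormedSpace ℝ E]
    [NormedAddCommGroup F] [NormedSpace ℝ F] {l : Filter α} {f : α → E → F} {v : E → F} {x : E}
    (hf : ∀ n, ContDiffAt ℝ 2 (f n) x) (hv : ContDiffAt ℝ 2 v x)
    (h : Tendsto (fun n => iteratedFDeriv ℝ 2 (f n) x) l (𝓝 (iteratedFDeriv ℝ 2 v x)))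
    (e e' : E) :
    Tendsto (fun n => dirDeriv e (dirDeriv e' (f n)) x) l (𝓝 (dirDeriv e (dirDeriv e' v) x)) := by
  simpa [Function.comp_def, iteratedFDeriv_two_apply, dirDeriv_dirDeriv, hf, hv] using
    ((ContinuousMultilinearMap.apply ℝ (fun _ => E) F ![e, e']).continuous.tendsto _).comp h

lemma isSmoothCMCSolution_of_tendsto {v : ℝ × ℝ → ℝ} (hU : IsOpen U)
    (hu : ∀ n, IsSmoothCMCSolution H U (u n)) (hv : ContDiffOn ℝ ∞ v U)
    (hlim : ∀ m, ∀ x ∈ U, Tendsto (fun n => iteratedFDeriv ℝ m (u n) x) atTop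
      (𝓝 (iteratedFDeriv ℝ m v x))) : IsSmoothCMCSolution H U v := by
  refine ⟨hv, fun x hx => ?_⟩
  have hx₁ := tendsto_dirDeriv (hlim 1 x hx) (1, 0)
  have hy₁ := tendsto_dirDeriv (hlim 1 x hx) (0, 1)
  have hsecond := tendsto_dirDeriv_dirDeriv (fun n => contDiffAt_two hU (hu n).1 hx)
    (contDiffAt_two hU hv hx) (hlim 2 x hx)
  refine tendsto_nhds_unique (((((hy₁.pow 2).const_add 1).mul (hsecond (1, 0) (1, 0))).sub
    (((hx₁.const_mul 2).mul hy₁).mul (hsecond (0, 1) (1, 0)))).add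
    (((hx₁.pow 2).const_add 1).mul (hsecond (0, 1) (0, 1)))) ?_
  refine ((((hx₁.pow 2).const_add 1).add (hy₁.pow 2)).rpow_const (.inr (by norm_num))
    |>.const_mul (2 * H)).congr fun n => ?_
  exact ((hu n).2 x hx).symm

end ConvergenceDomain

end CMC

theorem stmt_4_general (H : ℝ) {Ω : Set (ℝ × ℝ)} (hΩ : IsOpen Ω) {u : ℕ → ℝ × ℝ → ℝ}
    (hu : ∀ n, IsSmoothCMCSolution H Ω (u n)) {P : ℝ × ℝ}
    (hP : P ∈ CMC.convergenceDomain Ω u) :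
    ∃ φ : ℕ → ℕ, StrictMono φ ∧ ∃ v : ℝ × ℝ → ℝ,
      IsSmoothCMCSolution H (connectedComponentIn (CMC.convergenceDomain Ω u) P) v ∧
      ∀ k : ℕ, ∀ K : Set (ℝ × ℝ), IsCompact K →
        K ⊆ connectedComponentIn (CMC.convergenceDomain Ω u) P →
        TendstoUniformlyOn
          (fun n q => iteratedFDeriv ℝ k (fun x => u (φ n) x - u (φ n) P) q)
          (iteratedFDeriv ℝ k v) atTop K := by
  set B := CMC.convergenceDomain Ω u
  set C := connectedComponentIn B P
  have hCB : C ⊆ B := connectedComponentIn_subset B P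
  have hCopen : IsOpen C := (CMC.isOpen_convergenceDomain hΩ hu).connectedComponentIn
  have hsol (n : ℕ) : IsSmoothCMCSolution H C (u n) :=
    CMC.isSmoothCMCSolution_mono (hu n) (hCB.trans (sep_subset _ _))
  have hnormalized (n : ℕ) : IsSmoothCMCSolution H C fun x => u n x - u n P :=
    CMC.isSmoothCMCSolution_sub_const (hsol n) _
  have hbound := CMC.locallyUniformlyBounded_iteratedFDeriv_sub_const hCopen
    isPreconnected_connectedComponentIn (mem_connectedComponentIn hP)
    (fun n => (hsol n).1.differentiableOn (by simp))
    fun m x hx => CMC.locallyUniformlyBounded_iteratedFDeriv_succ hΩ hu m x (hCB hx)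
  obtain ⟨φ, hφ, v, hv, hlim⟩ := CMC.exists_subseq_tendstoLocallyUniformlyOn_iteratedFDeriv hCopen
    (fun n => (hnormalized n).1) hbound
  refine ⟨φ, hφ, v, CMC.isSmoothCMCSolution_of_tendsto hCopen (fun n => hnormalized (φ n)) hv
    fun m x hx => (hlim m).tendsto_at hx, fun k K hK hKC => ?_⟩
  exact (tendstoLocallyUniformlyOn_iff_forall_isCompact hCopen).1 (hlim k) K hKC hK

/-- on the connected component `C` of the convergence domain containing `P`,
a subsequence of `(u_n - u_n(P))` converges, with all derivatives, to a solution. -/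
theorem stmt_4 (H : ℝ) (hH : 0 < H) (Ω : Set (ℝ × ℝ)) (hΩ : IsOpen Ω)
    (hΩconn : IsConnected Ω) (u : ℕ → ℝ × ℝ → ℝ)
    (hu : ∀ n, IsSmoothCMCSolution H Ω (u n))
    (P : ℝ × ℝ) (hP : P ∈ {Q ∈ Ω | ∃ M : ℝ, ∀ n, Wgraph (u n) Q ≤ M}) :
    ∃ φ : ℕ → ℕ, StrictMono φ ∧ ∃ v : ℝ × ℝ → ℝ,
      IsSmoothCMCSolution H
        (connectedComponentIn {Q ∈ Ω | ∃ M : ℝ, ∀ n, Wgraph (u n) Q ≤ M} P) v ∧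
      ∀ k : ℕ, ∀ K : Set (ℝ × ℝ), IsCompact K →
        K ⊆ connectedComponentIn {Q ∈ Ω | ∃ M : ℝ, ∀ n, Wgraph (u n) Q ≤ M} P →
        TendstoUniformlyOn
          (fun n q => iteratedFDeriv ℝ k (fun x => u (φ n) x - u (φ n) P) q)
          (iteratedFDeriv ℝ k v) atTop K :=
  stmt_4_general H hΩ hu hP
end
end

section
/- Let H > 0, let Ω ⊆ ℝ² be an open connected set, let (u_n) be a sequence of solutions of (CMC) on Ω, and let C be a divergence line of (u_n), with center z₀ and with strictly increasing φ : ℕ → ℕ such that N_{u_{φ(n)}}(Q) → (ν(Q), 0) for all Q ∈ C, where ν(Q) = 2H(z₀ − Q). Let γ : [0, L] → C be an arclength parametrization of a compact subarc T of C oriented so that det(ν(γ(s)), γ'(s)) > 0 (the pair (ν(γ(s)), γ'(s)) is a direct orthonormal basis). Then lim_{n→∞} ∫_T ω_{u_{φ(n)}} = −L, i.e. lim_{n→∞} ∫_0^L (∂_x u_{φ(n)}(γ(s)) γ₂'(s) − ∂_y u_{φ(n)}(γ(s)) γ₁'(s))/W_{u_{φ(n)}}(γ(s)) ds = −L. -/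
/-!
The horizontal part `N` of the unit normal of a graph has length at most `1`, and
`ω_u(v) = -det(N, v)`. Hence along a unit speed curve the integrands are bounded by `1`, and where
the normals converge to a horizontal vector `ν` they converge to `-det(ν, γ')`; dominated
convergence passes to the limit in the integral. On a circle of radius `1 / (2H)` the vector
`ν = 2H (z₀ - γ)` has length `1` and is orthogonal to `γ'`, so that `det(ν, γ') = ±1`, and the
orientation fixes the sign: the limit is `-∫ 1`.
-/

open Real MeasureTheory Filter Set

noncomputable section

/-- Euclidean scalar product on `ℝ × ℝ`, the one whose norm is `enorm2`. -/
def dot2 (v w : ℝ × ℝ) : ℝ := v.1 * w.1 + v.2 * w.2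

/-- Determinant of a pair of plane vectors, positive on direct bases. -/
def det2 (v w : ℝ × ℝ) : ℝ := v.1 * w.2 - v.2 * w.1

/-- Horizontal part of the upward unit normal `N_u` of the graph of `u`. -/
def horizontalNormal (u : ℝ × ℝ → ℝ) (p : ℝ × ℝ) : ℝ × ℝ :=
  ((normalVec u p).1, (normalVec u p).2.1)

/-- The 1-form `ω_u = (∂ₓu dy - ∂ᵧu dx) / W_u` at `p`, evaluated on the vector `v`. -/
def omegaForm (u : ℝ × ℝ → ℝ) (p v : ℝ × ℝ) : ℝ :=
  (pdx u p * v.2 - pdy u p * v.1) / Wgraph u p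

/-- The vector `ν(Q) = 2H (z₀ - Q)`, which is the inward unit normal at `Q` of the circle of radius
`1 / (2H)` centred at `z₀`. -/
def inwardNormal (H : ℝ) (z₀ Q : ℝ × ℝ) : ℝ × ℝ :=
  (2 * H * (z₀.1 - Q.1), 2 * H * (z₀.2 - Q.2))

section

open Topology

lemma enorm2_nonneg (v : ℝ × ℝ) : 0 ≤ enorm2 v := Real.sqrt_nonneg _

lemma enorm2_sq (v : ℝ × ℝ) : enorm2 v ^ 2 = v.1 ^ 2 + v.2 ^ 2 :=
  Real.sq_sqrt (by positivity)

lemma det2_sq_add_dot2_sq (v w : ℝ × ℝ) :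
    det2 v w ^ 2 + dot2 v w ^ 2 = (enorm2 v * enorm2 w) ^ 2 := by
  rw [mul_pow, enorm2_sq, enorm2_sq, det2, dot2]
  ring

lemma abs_det2_le (v w : ℝ × ℝ) : |det2 v w| ≤ enorm2 v * enorm2 w := by
  refine abs_le_of_sq_le_sq ?_ (mul_nonneg (enorm2_nonneg v) (enorm2_nonneg w))
  rw [← det2_sq_add_dot2_sq]
  exact le_add_of_nonneg_right (sq_nonneg _)

lemma det2_eq_mul_enorm2_of_dot2_eq_zero {v w : ℝ × ℝ} (horth : dot2 v w = 0)
    (hdet : 0 ≤ det2 v w) : det2 v w = enorm2 v * enorm2 w := by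
  have hsq : det2 v w ^ 2 = (enorm2 v * enorm2 w) ^ 2 := by
    rw [← det2_sq_add_dot2_sq, horth, zero_pow two_ne_zero, add_zero]
  exact (pow_left_inj₀ hdet (mul_nonneg (enorm2_nonneg v) (enorm2_nonneg w)) two_ne_zero).1 hsq

lemma hasDerivAt_enorm2_sq {γ : ℝ → ℝ × ℝ} {v : ℝ × ℝ} {s : ℝ} (hγ : HasDerivAt γ v s) :
    HasDerivAt (fun t => enorm2 (γ t) ^ 2) (2 * dot2 (γ s) v) s := by
  have hγ₁ : HasDerivAt (fun t => (γ t).1) v.1 s :=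
    (hasFDerivAt_fst (p := γ s)).comp_hasDerivAt s hγ
  have hγ₂ : HasDerivAt (fun t => (γ t).2) v.2 s :=
    (hasFDerivAt_snd (p := γ s)).comp_hasDerivAt s hγ
  simp only [enorm2_sq]
  refine ((hγ₁.fun_pow 2).fun_add (hγ₂.fun_pow 2)).congr_deriv ?_
  rw [dot2]
  ring

lemma dot2_eq_zero_of_eventually_enorm2_eq {γ : ℝ → ℝ × ℝ} {v : ℝ × ℝ} {s r : ℝ}
    (hγ : HasDerivAt γ v s) (hr : ∀ᶠ t in 𝓝 s, enorm2 (γ t) = r) : dot2 (γ s) v = 0 := by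
  have hconst : HasDerivAt (fun t => enorm2 (γ t) ^ 2) 0 s :=
    (hasDerivAt_const s (r ^ 2)).congr_of_eventuallyEq (hr.mono fun t ht => by simp only [ht])
  simpa using (hasDerivAt_enorm2_sq hγ).unique hconst

lemma enorm2_inwardNormal {H : ℝ} (hH : 0 ≤ H) (z₀ Q : ℝ × ℝ) :
    enorm2 (inwardNormal H z₀ Q) = 2 * H * enorm2 (Q - z₀) := by
  refine (pow_left_inj₀ (enorm2_nonneg _) (mul_nonneg (by positivity) (enorm2_nonneg _))
    two_ne_zero).1 ?_
  rw [mul_pow, enorm2_sq, enorm2_sq]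
  simp only [inwardNormal, Prod.fst_sub, Prod.snd_sub]
  ring

lemma dot2_inwardNormal (H : ℝ) (z₀ Q v : ℝ × ℝ) :
    dot2 (inwardNormal H z₀ Q) v = -(2 * H) * dot2 (Q - z₀) v := by
  simp only [dot2, inwardNormal, Prod.fst_sub, Prod.snd_sub]
  ring

lemma det2_inwardNormal_eq_one_of_hasDerivAt {H : ℝ} (hH : 0 < H) {z₀ v : ℝ × ℝ}
    {γ : ℝ → ℝ × ℝ} {s : ℝ} (hγ : HasDerivAt γ v s) (hv : enorm2 v = 1)
    (hcirc : ∀ᶠ t in 𝓝 s, enorm2 (γ t - z₀) = 1 / (2 * H))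
    (horient : 0 < det2 (inwardNormal H z₀ (γ s)) v) :
    det2 (inwardNormal H z₀ (γ s)) v = 1 := by
  have horth : dot2 (inwardNormal H z₀ (γ s)) v = 0 := by
    rw [dot2_inwardNormal, dot2_eq_zero_of_eventually_enorm2_eq (hγ.sub_const z₀) hcirc, mul_zero]
  have hunit : enorm2 (inwardNormal H z₀ (γ s)) = 1 := by
    rw [enorm2_inwardNormal hH.le, hcirc.self_of_nhds, mul_one_div_cancel (by positivity)]
  rw [det2_eq_mul_enorm2_of_dot2_eq_zero horth horient.le, hunit, hv, mul_one]

lemma Wgraph_pos (u : ℝ × ℝ → ℝ) (p : ℝ × ℝ) : 0 < Wgraph u p :=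
  Real.sqrt_pos.2 (by positivity)

lemma enorm2_horizontalNormal_le_one (u : ℝ × ℝ → ℝ) (p : ℝ × ℝ) :
    enorm2 (horizontalNormal u p) ≤ 1 := by
  have hW : Wgraph u p ^ 2 = 1 + pdx u p ^ 2 + pdy u p ^ 2 := Real.sq_sqrt (by positivity)
  refine Real.sqrt_le_one.2 ?_
  simp only [horizontalNormal, normalVec, div_pow, neg_sq]
  rw [← add_div, div_le_one (pow_pos (Wgraph_pos u p) 2), hW]
  linarith

lemma omegaForm_eq_neg_det2 (u : ℝ × ℝ → ℝ) (p v : ℝ × ℝ) :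
    omegaForm u p v = -det2 (horizontalNormal u p) v := by
  simp only [omegaForm, det2, horizontalNormal, normalVec]
  ring

lemma measurable_horizontalNormal (u : ℝ × ℝ → ℝ) : Measurable (horizontalNormal u) := by
  have hx : Measurable (pdx u) := measurable_fderiv_apply_const ℝ u (1, 0)
  have hy : Measurable (pdy u) := measurable_fderiv_apply_const ℝ u (0, 1)
  have hW : Measurable (Wgraph u) := ((measurable_const.add (hx.pow_const 2)).add
    (hy.pow_const 2)).sqrt
  exact (hx.neg.div hW).prodMk (hy.neg.div hW)

lemma tendsto_integral_det2 {α ι : Type*} [MeasurableSpace α] {μ : Measure α} {l : Filter ι}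
    [l.IsCountablyGenerated] {V : ι → α → ℝ × ℝ} {ν w : α → ℝ × ℝ} {M : ℝ}
    (hV : ∀ i, AEMeasurable (V i) μ) (hw : AEMeasurable w μ)
    (hV_le : ∀ i, ∀ᵐ x ∂μ, enorm2 (V i x) ≤ M) (hw_int : Integrable (fun x => enorm2 (w x)) μ)
    (hlim : ∀ᵐ x ∂μ, Tendsto (fun i => V i x) l (𝓝 (ν x))) :
    Tendsto (fun i => ∫ x, det2 (V i x) (w x) ∂μ) l (𝓝 (∫ x, det2 (ν x) (w x) ∂μ)) := by
  refine tendsto_integral_filter_of_dominated_convergence (fun x => M * enorm2 (w x))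
    (.of_forall fun i => ?_) (.of_forall fun i => ?_) (hw_int.const_mul M) ?_
  · exact (((hV i).fst.mul hw.snd).sub ((hV i).snd.mul hw.fst)).aestronglyMeasurable
  · filter_upwards [hV_le i] with x hx
    exact (abs_det2_le _ _).trans (mul_le_mul_of_nonneg_right hx (enorm2_nonneg _))
  · filter_upwards [hlim] with x hx
    exact (hx.fst_nhds.mul_const _).sub (hx.snd_nhds.mul_const _)

lemma aemeasurable_of_hasDerivAt {F : Type*} [NormedAddCommGroup F] [NormedSpace ℝ F]
    [CompleteSpace F] [MeasurableSpace F] [BorelSpace F] {f f' : ℝ → F} {s : Set ℝ}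
    {μ : Measure ℝ} (hs : MeasurableSet s) (hf : ∀ t ∈ s, HasDerivAt f (f' t) t) :
    AEMeasurable f' (μ.restrict s) :=
  (measurable_deriv f).aemeasurable.congr <|
    (ae_restrict_mem hs).mono fun t ht => (hf t ht).deriv

variable {ι : Type*} {l : Filter ι} [l.IsCountablyGenerated] {u : ι → ℝ × ℝ → ℝ} {a b : ℝ}
  {γ γ' : ℝ → ℝ × ℝ}

lemma tendsto_integral_omegaForm (hab : a ≤ b) {ν : ℝ → ℝ × ℝ}
    (hderiv : ∀ s ∈ Ioo a b, HasDerivAt γ (γ' s) s) (hunit : ∀ s ∈ Ioo a b, enorm2 (γ' s) = 1)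
    (hlim : ∀ s ∈ Ioo a b, Tendsto (fun i => horizontalNormal (u i) (γ s)) l (𝓝 (ν s))) :
    Tendsto (fun i => ∫ s in a..b, omegaForm (u i) (γ s) (γ' s)) l
      (𝓝 (-∫ s in a..b, det2 (ν s) (γ' s))) := by
  have hmem : ∀ᵐ s ∂volume.restrict (Ioo a b), s ∈ Ioo a b := ae_restrict_mem measurableSet_Ioo
  have hγ : AEMeasurable γ (volume.restrict (Ioo a b)) :=
    ContinuousOn.aemeasurable (fun s hs => (hderiv s hs).continuousAt.continuousWithinAt)
      measurableSet_Ioo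
  have hspeed : Integrable (fun s => enorm2 (γ' s)) (volume.restrict (Ioo a b)) :=
    (integrable_const 1).congr (hmem.mono fun s hs => (hunit s hs).symm)
  simp only [omegaForm_eq_neg_det2, intervalIntegral.integral_of_le hab,
    integral_Ioc_eq_integral_Ioo, integral_neg]
  exact (tendsto_integral_det2
    (fun i => (measurable_horizontalNormal (u i)).comp_aemeasurable hγ)
    (aemeasurable_of_hasDerivAt measurableSet_Ioo hderiv)
    (fun i => .of_forall fun s => enorm2_horizontalNormal_le_one (u i) (γ s))
    hspeed (hmem.mono hlim)).neg

/-- Where `u i` is not differentiable, `fderiv` takes the value `0` and so does `omegaForm`; since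
the limit of the normals is horizontal, each point of the arc is eventually outside this set. -/
theorem stmt_8_general {H : ℝ} (hH : 0 < H) (hab : a ≤ b) {z₀ : ℝ × ℝ}
    (hcirc : ∀ s ∈ Ioo a b, enorm2 (γ s - z₀) = 1 / (2 * H))
    (hderiv : ∀ s ∈ Ioo a b, HasDerivAt γ (γ' s) s) (hunit : ∀ s ∈ Ioo a b, enorm2 (γ' s) = 1)
    (horient : ∀ s ∈ Ioo a b, 0 < det2 (inwardNormal H z₀ (γ s)) (γ' s))
    (hconv : ∀ s ∈ Ioo a b, Tendsto (fun i => normalVec (u i) (γ s)) l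
      (𝓝 ((inwardNormal H z₀ (γ s)).1, (inwardNormal H z₀ (γ s)).2, 0))) :
    Tendsto (fun i => ∫ s in a..b, omegaForm (u i) (γ s) (γ' s)) l (𝓝 (a - b)) := by
  have hlim : ∀ s ∈ Ioo a b,
      Tendsto (fun i => horizontalNormal (u i) (γ s)) l (𝓝 (inwardNormal H z₀ (γ s))) :=
    fun s hs => (hconv s hs).fst_nhds.prodMk_nhds (hconv s hs).snd_nhds.fst_nhds
  have hdet : ∀ s ∈ Ioo a b, det2 (inwardNormal H z₀ (γ s)) (γ' s) = 1 := fun s hs =>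
    det2_inwardNormal_eq_one_of_hasDerivAt hH (hderiv s hs) (hunit s hs)
      (eventually_of_mem (isOpen_Ioo.mem_nhds hs) hcirc) (horient s hs)
  have hlength : ∫ s in a..b, det2 (inwardNormal H z₀ (γ s)) (γ' s) = b - a := by
    rw [intervalIntegral.integral_of_le hab, integral_Ioc_eq_integral_Ioo,
      setIntegral_congr_fun measurableSet_Ioo hdet]
    simp [hab]
  simpa only [hlength, neg_sub] using tendsto_integral_omegaForm hab hderiv hunit hlim

end

/-- along a divergence line, for a positively oriented arclength parametrized
compact subarc `T = γ([0,L])`, the integrals of the 1-forms `ω_{u_{φ(n)}}` converge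
to `-L = -ℓ(T)`. -/
theorem stmt_8 (H : ℝ) (hH : 0 < H) (Ω : Set (ℝ × ℝ)) (hΩ : IsOpen Ω)
    (hΩconn : IsConnected Ω) (u : ℕ → ℝ × ℝ → ℝ)
    (hu : ∀ n, IsCMCSolution H Ω (u n))
    (C : Set (ℝ × ℝ)) (z₀ : ℝ × ℝ) (φ : ℕ → ℕ) (hφ : StrictMono φ)
    (hCΩ : C ⊆ Ω) (hCcirc : ∀ q ∈ C, enorm2 (q - z₀) = 1 / (2 * H))
    (hCconn : IsConnected C) (hCnt : C.Nontrivial)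
    (hconv : ∀ Q ∈ C, Tendsto (fun n => normalVec (u (φ n)) Q) atTop
      (nhds (2 * H * (z₀.1 - Q.1), 2 * H * (z₀.2 - Q.2), (0 : ℝ))))
    (L : ℝ) (hL : 0 < L) (γ γ' : ℝ → ℝ × ℝ)
    (hγC : ∀ s ∈ Set.Icc (0 : ℝ) L, γ s ∈ C)
    (hderiv : ∀ s ∈ Set.Icc (0 : ℝ) L, HasDerivAt γ (γ' s) s)
    (hunit : ∀ s ∈ Set.Icc (0 : ℝ) L, enorm2 (γ' s) = 1)
    (horient : ∀ s ∈ Set.Icc (0 : ℝ) L,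
      0 < (2 * H * (z₀.1 - (γ s).1)) * (γ' s).2
          - (2 * H * (z₀.2 - (γ s).2)) * (γ' s).1) :
    Tendsto (fun n => ∫ s in (0 : ℝ)..L,
        (pdx (u (φ n)) (γ s) * (γ' s).2 - pdy (u (φ n)) (γ s) * (γ' s).1)
          / Wgraph (u (φ n)) (γ s))
      atTop (nhds (-L)) := by
  rw [← zero_sub]
  exact stmt_8_general hH hL.le
    (fun s hs => hCcirc _ (hγC s (Ioo_subset_Icc_self hs)))
    (fun s hs => hderiv s (Ioo_subset_Icc_self hs))
    (fun s hs => hunit s (Ioo_subset_Icc_self hs))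
    (fun s hs => horient s (Ioo_subset_Icc_self hs))
    (fun s hs => hconv _ (hγC s (Ioo_subset_Icc_self hs)))
end
end
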